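/- Let d ≥ 1 and α > 0. Let θ = e^{-V} dx be a probability measure on ℝ^d where V is a smooth function with Hess V ≥ α Id everywhere (θ is uniformly log-concave), and assume θ is symmetric, i.e. invariant under the map x ↦ −x. Then for every symmetric probability measure μ on ℝ^d and every probability measure ν on ℝ^d (with finite second moments), W₂(μ, ν)² ≤ (2/α)(Ent_θ(μ) + Ent_θ(ν)). -/

import Mathlib

open MeasureTheory ENNReal
open scoped RealInnerProductSpace

/-- The standard Gaussian measure on `ℝ^d`, with density
`(2π)^{-d/2} exp(-|x|²/2)` with respect to Lebesgue measure. -/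
noncomputable def stdGaussian (d : ℕ) : Measure (EuclideanSpace ℝ (Fin d)) :=
  volume.withDensity fun x =>
    ENNReal.ofReal ((2 * Real.pi) ^ (-(d : ℝ) / 2) * Real.exp (-‖x‖ ^ 2 / 2))

/-- `π` is a coupling of `μ` and `ν`: a measure on the product with the given marginals. -/
def IsCoupling {E : Type*} [MeasurableSpace E] (π : Measure (E × E)) (μ ν : Measure E) : Prop :=
  π.map Prod.fst = μ ∧ π.map Prod.snd = ν

/-- The squared `L²` Kantorovich-Wasserstein distance `W₂(μ,ν)²`: the infimum of
`∫ |x-y|² dπ` over all couplings `π` of `μ` and `ν`. -/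
noncomputable def W2sq {E : Type*} [MeasurableSpace E] [NormedAddCommGroup E]
    (μ ν : Measure E) : ℝ≥0∞ :=
  ⨅ (π : Measure (E × E)) (_ : IsCoupling π μ ν), ∫⁻ p, (‖p.1 - p.2‖₊ : ℝ≥0∞) ^ 2 ∂π

open Classical in
/-- The relative entropy (KL divergence) `Ent_γ(μ) = ∫ log(dμ/dγ) dμ` if `μ ≪ γ` (and the
integral makes sense), and `+∞` otherwise. -/
noncomputable def relEnt {E : Type*} [MeasurableSpace E] (μ γ : Measure E) : ℝ≥0∞ :=
  if μ ≪ γ ∧ Integrable (fun x => Real.log (μ.rnDeriv γ x).toReal) μ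
  then ENNReal.ofReal (∫ x, Real.log (μ.rnDeriv γ x).toReal ∂μ)
  else ∞

/-!
**Gaussian case.** If `f` and `g` are probability densities on `ℝⁿ` and `f` is centred, there is a
coupling `(X, Y)` of them with `E ⟪X, Y⟫ ≥ h(f) + h(g) - n log (2π)`, where `h` is the differential
entropy; expanding `|X - Y|²` turns this into the symmetrized Talagrand inequality for the standard
Gaussian. The coupling is built by induction on `n`. Split space along the sign of the first
coordinate: a shear centres the two halves of `f` in the remaining coordinates, the dual shear of
`g` keeps correlations unchanged, and a translation gives the halves of `g` the masses of those of
`f`. Then couple the halves fibrewise, over a coupling of their marginals, by the monotone transport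
`T` between half-lines, and compare `z = √(t T(t))` with a half-Gaussian variable: the entropy
estimate is this change of variables together with `2 z z' = T + t T' ≥ 2 z √T'`.

**General case.** For the cost `-s ⟪x, y⟫`, consider an entropic optimal plan between the Gaussian
and `θ`, approximated by Sinkhorn's iteration. By the Prékopa-Leindler inequality the iteration
preserves strong convexity of the potentials (the entropic version of Caffarelli's contraction
theorem), so the argmin map `T` from the `x`-side to the `y`-side is `1 / √α`-Lipschitz. Through the
conditional laws of `x` given `y`, the measures `μ` and `ν` lift to measures on pairs whose first
marginals have relative entropies with respect to the Gaussian at most those of `μ` and `ν` up to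
the Sinkhorn error, while the second coordinate is close to `T` of the first one as `s → ∞`. The
Gaussian inequality for the first marginals then transfers to `μ` and `ν`, with the constant
multiplied by `1 / α`. Measures with unbounded support are reached by conditioning on large balls.
-/

section MeasurePreserving

variable {X Y : Type*} [MeasurableSpace X] [MeasurableSpace Y] {μ : Measure X} {ν : Measure Y}
  {A : X → Y}

lemma measure_univ_eq_of_measurePreserving (h : MeasurePreserving A μ ν) :
    μ Set.univ = ν Set.univ := by
  rw [← h.measure_preimage MeasurableSet.univ.nullMeasurableSet, Set.preimage_univ]

lemma integral_comp_of_measurePreserving {G : Type*} [NormedAddCommGroup G] [NormedSpace ℝ G]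
    (h : MeasurePreserving A μ ν) {u : Y → G} (hu : AEStronglyMeasurable u ν) :
    ∫ x, u (A x) ∂μ = ∫ y, u y ∂ν := by
  rw [← h.map_eq, integral_map h.aemeasurable (h.map_eq.symm ▸ hu)]

end MeasurePreserving

namespace IsCoupling

section Measurable

variable {E : Type*} [MeasurableSpace E] {π : Measure (E × E)} {μ ν : Measure E}

lemma measurePreserving_fst (h : IsCoupling π μ ν) : MeasurePreserving Prod.fst π μ :=
  ⟨measurable_fst, h.1⟩

lemma measurePreserving_snd (h : IsCoupling π μ ν) : MeasurePreserving Prod.snd π ν :=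
  ⟨measurable_snd, h.2⟩

lemma measure_univ (h : IsCoupling π μ ν) : π Set.univ = μ Set.univ :=
  measure_univ_eq_of_measurePreserving h.measurePreserving_fst

lemma integrable_fst (h : IsCoupling π μ ν) {u : E → ℝ} (hu : Integrable u μ) :
    Integrable (fun p => u p.1) π :=
  h.measurePreserving_fst.integrable_comp_of_integrable hu

lemma integrable_snd (h : IsCoupling π μ ν) {u : E → ℝ} (hu : Integrable u ν) :
    Integrable (fun p => u p.2) π :=
  h.measurePreserving_snd.integrable_comp_of_integrable hu

lemma integral_fst (h : IsCoupling π μ ν) {u : E → ℝ} (hu : Measurable u) :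
    ∫ p, u p.1 ∂π = ∫ x, u x ∂μ :=
  integral_comp_of_measurePreserving h.measurePreserving_fst hu.aestronglyMeasurable

lemma integral_snd (h : IsCoupling π μ ν) {u : E → ℝ} (hu : Measurable u) :
    ∫ p, u p.2 ∂π = ∫ x, u x ∂ν :=
  integral_comp_of_measurePreserving h.measurePreserving_snd hu.aestronglyMeasurable

lemma add {π' : Measure (E × E)} {μ' ν' : Measure E} (h : IsCoupling π μ ν)
    (h' : IsCoupling π' μ' ν') : IsCoupling (π + π') (μ + μ') (ν + ν') :=
  ⟨by rw [Measure.map_add _ _ measurable_fst, h.1, h'.1],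
    by rw [Measure.map_add _ _ measurable_snd, h.2, h'.2]⟩

lemma smul (h : IsCoupling π μ ν) (c : ℝ≥0∞) : IsCoupling (c • π) (c • μ) (c • ν) :=
  ⟨by rw [Measure.map_smul, h.1], by rw [Measure.map_smul, h.2]⟩

lemma map {F : Type*} [MeasurableSpace F] {A B : E → F} {μ' ν' : Measure F}
    (h : IsCoupling π μ ν) (hA : MeasurePreserving A μ μ') (hB : MeasurePreserving B ν ν') :
    IsCoupling (π.map (Prod.map A B)) μ' ν' := by
  have hAB := hA.measurable.prodMap hB.measurable
  constructor
  · rw [← (hA.comp h.measurePreserving_fst).map_eq, Measure.map_map measurable_fst hAB]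
    rfl
  · rw [← (hB.comp h.measurePreserving_snd).map_eq, Measure.map_map measurable_snd hAB]
    rfl

end Measurable

section Normed

variable {E : Type*} [NormedAddCommGroup E] [MeasurableSpace E] {π : Measure (E × E)}
  {μ ν : Measure E}

lemma integrable_of_abs_le_sq (h : IsCoupling π μ ν) (hμ : Integrable (fun x => ‖x‖ ^ 2) μ)
    (hν : Integrable (fun x => ‖x‖ ^ 2) ν) {u : E × E → ℝ} (hu : AEStronglyMeasurable u π)
    (hle : ∀ p, |u p| ≤ ‖p.1‖ ^ 2 + ‖p.2‖ ^ 2) : Integrable u π :=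
  ((h.integrable_fst hμ).add (h.integrable_snd hν)).mono' hu (ae_of_all _ hle)

lemma integrable_of_abs_le_mul (h : IsCoupling π μ ν) (hμ : Integrable (fun x => ‖x‖ ^ 2) μ)
    (hν : Integrable (fun x => ‖x‖ ^ 2) ν) {u : E × E → ℝ} (hu : AEStronglyMeasurable u π)
    (hle : ∀ p, |u p| ≤ ‖p.1‖ * ‖p.2‖) : Integrable u π :=
  h.integrable_of_abs_le_sq hμ hν hu fun p => (hle p).trans (by
    nlinarith [two_mul_le_add_sq ‖p.1‖ ‖p.2‖, sq_nonneg ‖p.1‖, sq_nonneg ‖p.2‖])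

end Normed

section InnerProductSpace

variable {E : Type*} [NormedAddCommGroup E] [InnerProductSpace ℝ E] [MeasurableSpace E]
  [BorelSpace E] [SecondCountableTopology E] {ρ : Measure (E × E)} {μ ν : Measure E}

lemma integrable_inner (h : IsCoupling ρ μ ν) (hμ : Integrable (fun x => ‖x‖ ^ 2) μ)
    (hν : Integrable (fun x => ‖x‖ ^ 2) ν) : Integrable (fun w => ⟪w.1, w.2⟫) ρ :=
  h.integrable_of_abs_le_mul hμ hν (by fun_prop) fun w => abs_real_inner_le_norm w.1 w.2

lemma integral_norm_sub_sq (h : IsCoupling ρ μ ν) (hμ : Integrable (fun x => ‖x‖ ^ 2) μ)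
    (hν : Integrable (fun x => ‖x‖ ^ 2) ν) :
    ∫ w, ‖w.1 - w.2‖ ^ 2 ∂ρ =
      ∫ x, ‖x‖ ^ 2 ∂μ + ∫ x, ‖x‖ ^ 2 ∂ν - 2 * ∫ w, ⟪w.1, w.2⟫ ∂ρ := by
  have hi := h.integrable_inner hμ hν
  have hfst : Integrable (fun w : E × E => ‖w.1‖ ^ 2) ρ := h.integrable_fst hμ
  have hsnd : Integrable (fun w : E × E => ‖w.2‖ ^ 2) ρ := h.integrable_snd hν
  rw [← h.integral_fst (u := fun x => ‖x‖ ^ 2) (by fun_prop),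
    ← h.integral_snd (u := fun x => ‖x‖ ^ 2) (by fun_prop), ← integral_const_mul,
    ← integral_add hfst hsnd,
    ← integral_sub (f := fun w : E × E => ‖w.1‖ ^ 2 + ‖w.2‖ ^ 2) (hfst.add hsnd) (hi.const_mul 2)]
  congr with w
  rw [norm_sub_sq_real]
  ring

end InnerProductSpace

end IsCoupling

lemma exists_isCoupling {E : Type*} [MeasurableSpace E] {μ ν : Measure E} [IsFiniteMeasure μ]
    [IsFiniteMeasure ν] (h : μ Set.univ = ν Set.univ) : ∃ π, IsCoupling π μ ν := by
  by_cases h0 : μ Set.univ = 0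
  · exact ⟨0, by simp [Measure.measure_univ_eq_zero.1 h0],
      by simp [Measure.measure_univ_eq_zero.1 (h ▸ h0)]⟩
  · have hone := ENNReal.inv_mul_cancel h0 (measure_ne_top μ Set.univ)
    refine ⟨(μ Set.univ)⁻¹ • μ.prod ν, ?_, ?_⟩
    · rw [Measure.map_smul, Measure.map_fst_prod, ← h, smul_smul, hone, one_smul]
    · rw [Measure.map_smul, Measure.map_snd_prod, smul_smul, hone, one_smul]

namespace SymTalagrand

open Set Filter Topology

/-- Continuous, strictly positive functions with exponential decay at infinity. This is the class of
densities in which the coupling construction takes place: it is stable under marginals and shears,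
and every such function has all moments and finite entropy. -/
structure PosExpDecay {E : Type*} [NormedAddCommGroup E] (f : E → ℝ) : Prop where
  cont : Continuous f
  pos : ∀ x, 0 < f x
  decay : ∃ C c : ℝ, 0 < c ∧ ∀ x, f x ≤ C * Real.exp (-c * ‖x‖)

lemma setIntegral_pos_of_forall_pos {X : Type*} [MeasurableSpace X] {μ : Measure X} {S : Set X}
    {f : X → ℝ} (hf : ∀ x, 0 < f x) (hfi : IntegrableOn f S μ) (hS : μ S ≠ 0) :
    0 < ∫ x in S, f x ∂μ := by
  have hsupp : Function.support f = univ := Function.support_eq_univ fun x => (hf x).ne'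
  rw [setIntegral_pos_iff_support_of_nonneg_ae (ae_of_all _ fun x => (hf x).le) hfi, hsupp,
    univ_inter]
  exact pos_iff_ne_zero.2 hS

lemma abs_mul_log_le {t : ℝ} (ht : 0 < t) : |t * Real.log t| ≤ 2 * √t + t ^ 2 := by
  have hsqrt : 0 < √t := Real.sqrt_pos.2 ht
  have hupper : t * Real.log t ≤ t * (t - 1) := by
    gcongr; exact Real.log_le_sub_one_of_pos ht
  have hlower : t * -Real.log t ≤ t * (2 * ((√t)⁻¹ - 1)) := by
    have := Real.log_le_sub_one_of_pos (inv_pos.2 hsqrt)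
    rw [Real.log_inv, Real.log_sqrt ht.le] at this
    gcongr
    linarith
  have hdiv : t * (√t)⁻¹ = √t := by rw [← div_eq_mul_inv, Real.div_sqrt]
  rw [abs_le]
  constructor <;> nlinarith

section ExpDecay

variable {E : Type*} [NormedAddCommGroup E]

lemma exists_pow_mul_exp_neg_le_rpow {c : ℝ} (hc : 0 < c) (k N : ℕ) :
    ∃ C : ℝ, ∀ r : ℝ, 0 ≤ r → r ^ k * Real.exp (-c * r) ≤ C * (1 + r) ^ (-(N : ℝ)) := by
  refine ⟨(k + N).factorial / c ^ (k + N) * Real.exp c, fun r hr => ?_⟩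
  have hpow : (c * (1 + r)) ^ (k + N) / (k + N).factorial ≤ Real.exp (c * (1 + r)) :=
    Real.pow_div_factorial_le_exp _ (by positivity) _
  have hexp : Real.exp (-c * r) = Real.exp c * (Real.exp (c * (1 + r)))⁻¹ := by
    rw [← Real.exp_neg, ← Real.exp_add]; ring_nf
  have hinv : (Real.exp (c * (1 + r)))⁻¹ ≤ (k + N).factorial / (c * (1 + r)) ^ (k + N) := by
    rw [← inv_div]
    gcongr
  rw [Real.rpow_neg (by positivity), Real.rpow_natCast, hexp]
  calc r ^ k * (Real.exp c * (Real.exp (c * (1 + r)))⁻¹)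
      ≤ (1 + r) ^ k * (Real.exp c * ((k + N).factorial / (c * (1 + r)) ^ (k + N))) := by
        gcongr; linarith
    _ = (k + N).factorial / c ^ (k + N) * Real.exp c * ((1 + r) ^ N)⁻¹ := by
      have : 1 + r ≠ 0 := by positivity
      field_simp
      rw [mul_pow, pow_add (1 + r)]
      ring

variable [NormedSpace ℝ E] [FiniteDimensional ℝ E] [MeasurableSpace E] [BorelSpace E]

lemma integrable_pow_mul_exp_neg (μ : Measure E) [μ.IsAddHaarMeasure] {c : ℝ} (hc : 0 < c)
    (k : ℕ) : Integrable (fun x : E => ‖x‖ ^ k * Real.exp (-c * ‖x‖)) μ := by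
  obtain ⟨C, hC⟩ := exists_pow_mul_exp_neg_le_rpow hc k (Module.finrank ℝ E + 1)
  refine Integrable.mono' ((integrable_one_add_norm (μ := μ)
    (r := ((Module.finrank ℝ E + 1 : ℕ) : ℝ)) (by push_cast; linarith)).const_mul C)
    (by fun_prop) (ae_of_all _ fun x => ?_)
  rw [Real.norm_of_nonneg (by positivity)]
  exact hC _ (norm_nonneg x)

lemma integrable_exp_neg_norm (μ : Measure E) [μ.IsAddHaarMeasure] {c : ℝ} (hc : 0 < c) :
    Integrable (fun x : E => Real.exp (-c * ‖x‖)) μ := by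
  simpa using integrable_pow_mul_exp_neg μ hc 0

end ExpDecay

namespace PosExpDecay

section Normed

variable {E F : Type*} [NormedAddCommGroup E] [NormedAddCommGroup F] {f g : E → ℝ}

lemma exists_le_mul_exp (hf : PosExpDecay f) :
    ∃ C c : ℝ, 0 < C ∧ 0 < c ∧ ∀ x, f x ≤ C * Real.exp (-c * ‖x‖) := by
  obtain ⟨C, c, hc, h⟩ := hf.decay
  exact ⟨C, c, pos_of_mul_pos_left ((hf.pos 0).trans_le (h 0)) (Real.exp_nonneg _), hc, h⟩

lemma exists_le (hf : PosExpDecay f) : ∃ C, ∀ x, f x ≤ C := by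
  obtain ⟨C, c, hC, hc, h⟩ := hf.exists_le_mul_exp
  refine ⟨C, fun x => (h x).trans (mul_le_of_le_one_right hC.le (Real.exp_le_one_iff.2 ?_))⟩
  nlinarith [norm_nonneg x]

lemma sqrt (hf : PosExpDecay f) : PosExpDecay fun x => √(f x) := by
  obtain ⟨C, c, hC, hc, h⟩ := hf.exists_le_mul_exp
  refine ⟨hf.cont.sqrt, fun x => Real.sqrt_pos.2 (hf.pos x), √C, c / 2, by positivity, fun x => ?_⟩
  rw [Real.sqrt_le_left (by positivity), mul_pow, Real.sq_sqrt hC.le, ← Real.exp_nat_mul]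
  convert h x using 3
  push_cast
  ring

lemma comp (hf : PosExpDecay f) {φ : F → E} (hφ : Continuous φ) {K K' : ℝ} (hK : 0 < K)
    (h : ∀ z, ‖z‖ ≤ K * ‖φ z‖ + K') : PosExpDecay fun z => f (φ z) := by
  obtain ⟨C, c, hC, hc, hb⟩ := hf.exists_le_mul_exp
  refine ⟨hf.cont.comp hφ, fun z => hf.pos _, C * Real.exp (c * K' / K), c / K, by positivity,
    fun z => (hb _).trans ?_⟩
  rw [mul_assoc, ← Real.exp_add]
  gcongr
  calc -c * ‖φ z‖ = c / K * (-(K * ‖φ z‖)) := by field_simp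
    _ ≤ c / K * (K' - ‖z‖) := by gcongr; linarith [h z]
    _ = c * K' / K + -(c / K) * ‖z‖ := by ring

lemma fiber {f : E × F → ℝ} (hf : PosExpDecay f) (x : F) : PosExpDecay fun t => f (t, x) :=
  hf.comp (φ := fun t => (t, x)) (by fun_prop) one_pos (K' := 0) fun z => by simp [Prod.norm_def]

lemma exists_le_mul_exp_mul_exp {f : E × F → ℝ} (hf : PosExpDecay f) :
    ∃ C c : ℝ, 0 < C ∧ 0 < c ∧
      ∀ t x, f (t, x) ≤ C * (Real.exp (-c * ‖t‖) * Real.exp (-c * ‖x‖)) := by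
  obtain ⟨C, c, hC, hc, hb⟩ := hf.exists_le_mul_exp
  refine ⟨C, c / 2, hC, by positivity, fun t x => (hb _).trans ?_⟩
  rw [← Real.exp_add]
  gcongr
  nlinarith [norm_fst_le (t, x), norm_snd_le (t, x)]

end Normed

section Integral

variable {E : Type*} [NormedAddCommGroup E] [NormedSpace ℝ E] [FiniteDimensional ℝ E]
  [MeasurableSpace E] [BorelSpace E] {f : E → ℝ} (μ : Measure E) [μ.IsAddHaarMeasure]

lemma integrable_pow_mul (hf : PosExpDecay f) (k : ℕ) : Integrable (fun x => ‖x‖ ^ k * f x) μ := by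
  obtain ⟨C, c, -, hc, hb⟩ := hf.exists_le_mul_exp
  have hm := hf.cont.measurable
  refine Integrable.mono' ((integrable_pow_mul_exp_neg μ hc k).const_mul C)
    (by fun_prop) (ae_of_all _ fun x => ?_)
  rw [Real.norm_of_nonneg (mul_nonneg (by positivity) (hf.pos x).le)]
  calc ‖x‖ ^ k * f x ≤ ‖x‖ ^ k * (C * Real.exp (-c * ‖x‖)) := by gcongr; exact hb x
    _ = C * (‖x‖ ^ k * Real.exp (-c * ‖x‖)) := by ring

lemma integrable (hf : PosExpDecay f) : Integrable f μ := by
  simpa using hf.integrable_pow_mul μ 0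

lemma integrable_mul_of_le (hf : PosExpDecay f) {u : E → ℝ} (hu : Measurable u) {C : ℝ}
    (h : ∀ x, |u x| ≤ C * (1 + ‖x‖ ^ 2)) : Integrable (fun x => u x * f x) μ := by
  have hm := hf.cont.measurable
  refine Integrable.mono' (((hf.integrable μ).add (hf.integrable_pow_mul μ 2)).const_mul C)
    (by fun_prop) (ae_of_all _ fun x => ?_)
  rw [norm_mul, Real.norm_eq_abs, Real.norm_of_nonneg (hf.pos x).le]
  have := mul_le_mul_of_nonneg_right (h x) (hf.pos x).le
  simp only [Pi.add_apply]
  linarith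

lemma integrable_mul_log (hf : PosExpDecay f) : Integrable (fun x => f x * Real.log (f x)) μ := by
  obtain ⟨C, hC⟩ := hf.exists_le
  have hm := hf.cont.measurable
  refine Integrable.mono' (((hf.sqrt.integrable μ).const_mul 2).add ((hf.integrable μ).const_mul C))
    (by fun_prop) (ae_of_all _ fun x => (abs_mul_log_le (hf.pos x)).trans ?_)
  simp only [Pi.add_apply]
  nlinarith [hC x, hf.pos x]

lemma setIntegral_pos (hf : PosExpDecay f) {S : Set E} (hS : μ S ≠ 0) : 0 < ∫ x in S, f x ∂μ :=
  setIntegral_pos_of_forall_pos hf.pos (hf.integrable μ).integrableOn hS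

lemma marginal {F : Type*} [NormedAddCommGroup F] {f : E × F → ℝ} (hf : PosExpDecay f) {S : Set E}
    (hS : μ S ≠ 0) : PosExpDecay fun x => ∫ t in S, f (t, x) ∂μ := by
  obtain ⟨C, c, hC, hc, hb⟩ := hf.exists_le_mul_exp_mul_exp
  have hint := (integrable_exp_neg_norm μ hc).integrableOn (s := S)
  refine ⟨?_, fun x => (hf.fiber x).setIntegral_pos μ hS,
    C * ∫ t in S, Real.exp (-c * ‖t‖) ∂μ, c, hc, fun x => ?_⟩
  · refine continuous_of_dominated (bound := fun t => C * Real.exp (-c * ‖t‖))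
      (fun x => (hf.fiber x).cont.aestronglyMeasurable) (fun x => ae_of_all _ fun t => ?_)
      (hint.const_mul C) (ae_of_all _ fun t => hf.cont.comp (by fun_prop))
    rw [Real.norm_of_nonneg (hf.pos _).le]
    refine (hb t x).trans ?_
    gcongr
    exact mul_le_of_le_one_right (Real.exp_nonneg _)
      (Real.exp_le_one_iff.2 (by nlinarith [norm_nonneg x]))
  · calc ∫ t in S, f (t, x) ∂μ
        ≤ ∫ t in S, C * (Real.exp (-c * ‖t‖) * Real.exp (-c * ‖x‖)) ∂μ :=
          setIntegral_mono ((hf.fiber x).integrable μ).integrableOn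
            ((hint.mul_const _).const_mul C) fun t => hb t x
      _ = (C * ∫ t in S, Real.exp (-c * ‖t‖) ∂μ) * Real.exp (-c * ‖x‖) := by
          rw [integral_const_mul, integral_mul_const, mul_assoc]

end Integral

end PosExpDecay

section Transport

variable {I : Set ℝ} {φ χ T : ℝ → ℝ}

/-- The (unnormalized) cumulative distribution function of the density `φ` on the set `I`. -/
noncomputable def cdfOn (I : Set ℝ) (φ : ℝ → ℝ) (t : ℝ) : ℝ := ∫ s in I ∩ Iic t, φ s

/-- The quantile function of the density `φ` on `I`: an inverse on `I` of `cdfOn I φ`, with junk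
values off the range of `cdfOn I φ`. -/
noncomputable def quantileOn (I : Set ℝ) (φ : ℝ → ℝ) : ℝ → ℝ := Function.invFunOn (cdfOn I φ) I

/-- The increasing rearrangement of the density `φ` onto the density `χ` on `I`. -/
noncomputable def rearrangement (I : Set ℝ) (φ χ : ℝ → ℝ) : ℝ → ℝ :=
  quantileOn I χ ∘ cdfOn I φ

/-- `T` is an increasing bijection of `I` pushing the density `φ` forward to the density `χ`; the
latter is encoded by the Monge-Ampère equation `T' = φ / χ ∘ T`. -/
structure IsMonotoneTransport (I : Set ℝ) (φ χ T : ℝ → ℝ) : Prop where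
  bijOn : BijOn T I I
  strictMonoOn : StrictMonoOn T I
  hasDerivWithinAt : ∀ t ∈ I, HasDerivWithinAt T (φ t / χ (T t)) I t

lemma cdfOn_eq_integral_Iic_indicator (hI : MeasurableSet I) (t : ℝ) :
    cdfOn I φ t = ∫ s in Iic t, I.indicator φ s := by
  rw [cdfOn, setIntegral_indicator hI, inter_comm]

lemma cdfOn_eq_add_intervalIntegral (hI : MeasurableSet I) (hφi : Integrable φ) (t : ℝ) :
    cdfOn I φ t = (∫ s in Iic 0, I.indicator φ s) + ∫ s in (0 : ℝ)..t, I.indicator φ s := by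
  have hint := hφi.indicator hI
  rw [← intervalIntegral.integral_Iic_sub_Iic hint.integrableOn hint.integrableOn,
    add_sub_cancel, cdfOn_eq_integral_Iic_indicator hI]

lemma continuous_cdfOn (hI : MeasurableSet I) (hφi : Integrable φ) : Continuous (cdfOn I φ) := by
  rw [funext (cdfOn_eq_add_intervalIntegral hI hφi)]
  exact continuous_const.add ((hφi.indicator hI).continuous_primitive 0)

lemma hasDerivAt_cdfOn (hI : IsOpen I) (hφ : Continuous φ) (hφi : Integrable φ) {t : ℝ}
    (ht : t ∈ I) : HasDerivAt (cdfOn I φ) (φ t) t := by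
  rw [funext (cdfOn_eq_add_intervalIntegral hI.measurableSet hφi)]
  have hint := hφi.indicator hI.measurableSet
  have hev : I.indicator φ =ᶠ[𝓝 t] φ := by
    filter_upwards [hI.mem_nhds ht] with s hs using indicator_of_mem hs φ
  have := (intervalIntegral.integral_hasDerivAt_right (a := 0) (b := t)
    hint.intervalIntegrable hint.aestronglyMeasurable.stronglyMeasurableAtFilter
    (hφ.continuousAt.congr hev.symm)).const_add (∫ s in Iic 0, I.indicator φ s)
  rwa [indicator_of_mem ht] at this

lemma strictMonoOn_cdfOn (hI : IsOpen I) (hφ0 : ∀ s, 0 < φ s) (hφi : Integrable φ) :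
    StrictMonoOn (cdfOn I φ) I := by
  intro a _ b hb hab
  have hsub : I ∩ Iic a ⊆ I ∩ Iic b := inter_subset_inter_right _ (Iic_subset_Iic.2 hab.le)
  have hne : (I ∩ Ioo a b).Nonempty := Filter.nonempty_of_mem
    (inter_mem (mem_nhdsWithin_of_mem_nhds (hI.mem_nhds hb)) (Ioo_mem_nhdsLT hab))
  have hdiff : 0 < ∫ s in (I ∩ Iic b) \ (I ∩ Iic a), φ s := by
    refine setIntegral_pos_of_forall_pos hφ0 hφi.integrableOn (ne_of_gt ?_)
    refine ((hI.inter isOpen_Ioo).measure_pos volume hne).trans_le (measure_mono ?_)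
    rintro x ⟨hx, hxa, hxb⟩
    exact ⟨⟨hx, hxb.le⟩, fun h => absurd h.2 (not_le.2 hxa)⟩
  rw [setIntegral_sdiff (hI.measurableSet.inter measurableSet_Iic) hφi.integrableOn hsub] at hdiff
  exact sub_pos.1 hdiff

lemma mapsTo_cdfOn (hI : IsOpen I) (hφ0 : ∀ s, 0 < φ s) (hφi : Integrable φ) :
    MapsTo (cdfOn I φ) I (Ioo 0 (∫ s in I, φ s)) := by
  intro t ht
  obtain ⟨ε, hε, hball⟩ := Metric.isOpen_iff.1 hI t ht
  have hmono := strictMonoOn_cdfOn hI hφ0 hφi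
  have hleft : t - ε / 2 ∈ I := hball (by simp [abs_of_pos hε, hε])
  have hright : t + ε / 2 ∈ I := hball (by simp [abs_of_pos hε, hε])
  constructor
  · exact (integral_nonneg fun s => (hφ0 s).le).trans_lt (hmono hleft ht (by linarith))
  · exact (hmono ht hright (by linarith)).trans_le (setIntegral_mono_set hφi.integrableOn
      (ae_of_all _ fun s => (hφ0 s).le) (ae_of_all _ fun s hs => hs.1))

lemma surjOn_cdfOn (hI : MeasurableSet I) (hIc : I.OrdConnected) (hφi : Integrable φ) :
    SurjOn (cdfOn I φ) I (Ioo 0 (∫ s in I, φ s)) := by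
  rintro u ⟨hu0, hu1⟩
  have hbot : Tendsto (cdfOn I φ) atBot (𝓝 0) := by
    rw [funext (cdfOn_eq_integral_Iic_indicator hI)]
    exact tendsto_integral_Iic_zero tendsto_id
  have htop : Tendsto (cdfOn I φ) atTop (𝓝 (∫ s in I, φ s)) := by
    rw [funext (cdfOn_eq_integral_Iic_indicator hI), ← integral_indicator hI]
    exact (aecover_Iic tendsto_id).integral_tendsto_of_countably_generated (hφi.indicator hI)
  obtain ⟨a, ha⟩ := (hbot.eventually_lt_const hu0).exists
  obtain ⟨b, hb⟩ := (htop.eventually_const_lt hu1).exists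
  obtain ⟨t, -, rfl⟩ := isPreconnected_univ.intermediate_value (mem_univ a) (mem_univ b)
    (continuous_cdfOn hI hφi).continuousOn ⟨ha.le, hb.le⟩
  refine ⟨t, ?_, rfl⟩
  by_contra htI
  by_cases hlt : ∃ s ∈ I, s < t
  · obtain ⟨s, hs, hst⟩ := hlt
    have hall : I ∩ Iic t = I := inter_eq_left.2 fun r hr => by
      by_contra hrt
      exact htI (hIc.out hs hr ⟨hst.le, (not_le.1 hrt).le⟩)
    rw [cdfOn, hall] at hu1
    exact hu1.false
  · push Not at hlt
    have hempty : I ∩ Iic t = ∅ := eq_empty_of_forall_notMem fun r hr =>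
      htI (le_antisymm hr.2 (hlt r hr.1) ▸ hr.1)
    rw [cdfOn, hempty, setIntegral_empty] at hu0
    exact hu0.false

lemma bijOn_cdfOn (hI : IsOpen I) (hIc : I.OrdConnected) (hφ0 : ∀ s, 0 < φ s)
    (hφi : Integrable φ) : BijOn (cdfOn I φ) I (Ioo 0 (∫ s in I, φ s)) :=
  ⟨mapsTo_cdfOn hI hφ0 hφi, (strictMonoOn_cdfOn hI hφ0 hφi).injOn,
    surjOn_cdfOn hI.measurableSet hIc hφi⟩

lemma invOn_quantileOn (hI : IsOpen I) (hIc : I.OrdConnected) (hφ0 : ∀ s, 0 < φ s)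
    (hφi : Integrable φ) :
    InvOn (quantileOn I φ) (cdfOn I φ) I (Ioo 0 (∫ s in I, φ s)) :=
  (bijOn_cdfOn hI hIc hφ0 hφi).invOn_invFunOn

lemma bijOn_quantileOn (hI : IsOpen I) (hIc : I.OrdConnected) (hφ0 : ∀ s, 0 < φ s)
    (hφi : Integrable φ) : BijOn (quantileOn I φ) (Ioo 0 (∫ s in I, φ s)) I :=
  (bijOn_cdfOn hI hIc hφ0 hφi).symm (invOn_quantileOn hI hIc hφ0 hφi).symm

lemma quantileOn_le_iff (hI : IsOpen I) (hIc : I.OrdConnected) (hφ0 : ∀ s, 0 < φ s)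
    (hφi : Integrable φ) {u r : ℝ} (hu : u ∈ Ioo 0 (∫ s in I, φ s)) (hr : r ∈ I) :
    quantileOn I φ u ≤ r ↔ u ≤ cdfOn I φ r := by
  rw [← (strictMonoOn_cdfOn hI hφ0 hφi).le_iff_le
    ((bijOn_quantileOn hI hIc hφ0 hφi).mapsTo hu) hr, (invOn_quantileOn hI hIc hφ0 hφi).2 hu]

lemma strictMonoOn_quantileOn (hI : IsOpen I) (hIc : I.OrdConnected) (hφ0 : ∀ s, 0 < φ s)
    (hφi : Integrable φ) : StrictMonoOn (quantileOn I φ) (Ioo 0 (∫ s in I, φ s)) := by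
  intro u hu v hv huv
  rw [← not_le, quantileOn_le_iff hI hIc hφ0 hφi hv ((bijOn_quantileOn hI hIc hφ0 hφi).mapsTo hu),
    (invOn_quantileOn hI hIc hφ0 hφi).2 hu]
  exact not_le.2 huv

lemma hasDerivAt_quantileOn (hI : IsOpen I) (hIc : I.OrdConnected) (hφ : Continuous φ)
    (hφ0 : ∀ s, 0 < φ s) (hφi : Integrable φ) {u : ℝ} (hu : u ∈ Ioo 0 (∫ s in I, φ s)) :
    HasDerivAt (quantileOn I φ) (φ (quantileOn I φ u))⁻¹ u := by
  have hbij := bijOn_quantileOn hI hIc hφ0 hφi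
  have hcont : ContinuousAt (quantileOn I φ) u :=
    (strictMonoOn_quantileOn hI hIc hφ0 hφi).continuousAt_of_image_mem_nhds
      (Ioo_mem_nhds hu.1 hu.2) (by rw [hbij.image_eq]; exact hI.mem_nhds (hbij.mapsTo hu))
  refine HasDerivAt.of_local_left_inverse hcont
    (hasDerivAt_cdfOn hI hφ hφi (hbij.mapsTo hu)) (hφ0 _).ne' ?_
  filter_upwards [Ioo_mem_nhds hu.1 hu.2] with v hv using (invOn_quantileOn hI hIc hφ0 hφi).2 hv

lemma rearrangement_le_iff (hI : IsOpen I) (hIc : I.OrdConnected) (hφ0 : ∀ s, 0 < φ s)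
    (hφi : Integrable φ) (hχ0 : ∀ s, 0 < χ s) (hχi : Integrable χ)
    (hmass : ∫ s in I, φ s = ∫ s in I, χ s) {t r : ℝ} (ht : t ∈ I) (hr : r ∈ I) :
    rearrangement I φ χ t ≤ r ↔ cdfOn I φ t ≤ cdfOn I χ r :=
  quantileOn_le_iff hI hIc hχ0 hχi (hmass ▸ mapsTo_cdfOn hI hφ0 hφi ht) hr

theorem isMonotoneTransport_rearrangement (hI : IsOpen I) (hIc : I.OrdConnected)
    (hφ : Continuous φ) (hφ0 : ∀ s, 0 < φ s) (hφi : Integrable φ)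
    (hχ : Continuous χ) (hχ0 : ∀ s, 0 < χ s) (hχi : Integrable χ)
    (hmass : ∫ s in I, φ s = ∫ s in I, χ s) :
    IsMonotoneTransport I φ χ (rearrangement I φ χ) := by
  have hF := bijOn_cdfOn hI hIc hφ0 hφi
  rw [hmass] at hF
  refine ⟨(bijOn_quantileOn hI hIc hχ0 hχi).comp hF,
    (strictMonoOn_quantileOn hI hIc hχ0 hχi).comp (strictMonoOn_cdfOn hI hφ0 hφi) hF.mapsTo,
    fun t ht => ?_⟩
  rw [div_eq_inv_mul]
  exact ((hasDerivAt_quantileOn hI hIc hχ hχ0 hχi (hF.mapsTo ht)).comp t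
    (hasDerivAt_cdfOn hI hφ hφi ht)).hasDerivWithinAt

lemma sqrt_div_mul_sqrt_le {s t p q : ℝ} (hs : 0 ≤ s) (ht : 0 ≤ t) (hpq : 0 ≤ p / q) :
    √(p / q) * √(t * s) ≤ (s + t * (p / q)) / 2 := by
  have := two_mul_le_add_sq √s √(t * (p / q))
  rw [Real.sq_sqrt hs, Real.sq_sqrt (mul_nonneg ht hpq), Real.sqrt_mul ht] at this
  rw [Real.sqrt_mul ht]
  linarith

namespace IsMonotoneTransport

lemma congr {T' : ℝ → ℝ} (hT : IsMonotoneTransport I φ χ T) (h : EqOn T T' I) :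
    IsMonotoneTransport I φ χ T' :=
  ⟨hT.bijOn.congr h, hT.strictMonoOn.congr h, fun t ht => h ht ▸
    (hT.hasDerivWithinAt t ht).congr (fun _ hs => (h hs).symm) (h ht).symm⟩

lemma lintegral_comp_mul (hT : IsMonotoneTransport I φ χ T) (hI : MeasurableSet I)
    (hφ0 : ∀ t, 0 < φ t) (hχ0 : ∀ t, 0 < χ t) (h : ℝ → ℝ≥0∞) :
    ∫⁻ t in I, h (T t) * ENNReal.ofReal (φ t) = ∫⁻ r in I, h r * ENNReal.ofReal (χ r) := by
  conv_rhs => rw [← hT.bijOn.image_eq]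
  rw [lintegral_image_eq_lintegral_abs_deriv_mul hI hT.hasDerivWithinAt hT.strictMonoOn.injOn]
  refine lintegral_congr fun t => ?_
  have hpos : 0 < φ t / χ (T t) := div_pos (hφ0 t) (hχ0 _)
  rw [abs_of_pos hpos, mul_left_comm, ← ENNReal.ofReal_mul hpos.le, div_mul_cancel₀ _ (hχ0 _).ne']

-- Change of variables `z = √(t T(t))`, whose derivative dominates `√T'(t)` by AM-GM.
lemma lintegral_sqrt_mul_comp_sqrt_le (hT : IsMonotoneTransport (Ioi 0) φ χ T)
    (hφ0 : ∀ t, 0 < φ t) (hχ0 : ∀ t, 0 < χ t) (h : ℝ → ℝ≥0∞) :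
    ∫⁻ t in Ioi 0, ENNReal.ofReal √(φ t / χ (T t)) * h √(t * T t) ≤ ∫⁻ z in Ioi 0, h z := by
  have hpos : ∀ t ∈ Ioi (0 : ℝ), 0 < t * T t := fun t ht => mul_pos ht (hT.bijOn.mapsTo ht)
  have hderiv : ∀ t ∈ Ioi (0 : ℝ), HasDerivWithinAt (fun t => √(t * T t))
      ((1 * T t + t * (φ t / χ (T t))) / (2 * √(t * T t))) (Ioi 0) t := fun t ht =>
    ((hasDerivWithinAt_id t _).mul (hT.hasDerivWithinAt t ht)).sqrt (hpos t ht).ne'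
  have hmono : StrictMonoOn (fun t => √(t * T t)) (Ioi 0) := fun a ha b hb hab =>
    Real.sqrt_lt_sqrt (hpos a ha).le
      (mul_lt_mul'' hab (hT.strictMonoOn ha hb hab) (le_of_lt ha) (hT.bijOn.mapsTo ha).le)
  have himage : (fun t => √(t * T t)) '' Ioi 0 ⊆ Ioi 0 := by
    rintro _ ⟨t, ht, rfl⟩
    exact Real.sqrt_pos.2 (hpos t ht)
  refine le_trans ?_ (lintegral_mono_set himage)
  rw [lintegral_image_eq_lintegral_abs_deriv_mul measurableSet_Ioi hderiv hmono.injOn]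
  refine setLIntegral_mono' measurableSet_Ioi fun t ht => ?_
  gcongr
  have hsqrt : 0 < √(t * T t) := Real.sqrt_pos.2 (hpos t ht)
  have hT0 : 0 < T t := hT.bijOn.mapsTo ht
  refine le_trans ?_ (le_abs_self _)
  rw [le_div_iff₀ (by positivity)]
  linarith [sqrt_div_mul_sqrt_le hT0.le (le_of_lt ht) (div_pos (hφ0 t) (hχ0 (T t))).le]

end IsMonotoneTransport

end Transport

section PrekopaLeindler

lemma mul_rpow_div_le_of_rpow_mul_rpow_le {p q U V W a b : ℝ} (hp : 0 < p) (hq : 0 < q)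
    (hU : 0 < U) (hV : 0 < V) (ha : 0 < a) (hb : 0 < b) (hab : a + b = 1)
    (h : p ^ a * q ^ b ≤ W) :
    p * (V / U) ^ b ≤ (a + b * ((p / U) / (q / V))) * W := by
  set τ := (p / U) / (q / V) with hτ
  have hτ0 : 0 < τ := by positivity
  have hτq : p * (V / U) = τ * q := by rw [hτ]; field_simp
  have hτb : τ ^ b ≤ a + b * τ := by
    simpa using Real.geom_mean_le_arith_mean2_weighted ha.le hb.le zero_le_one hτ0.le hab
  calc p * (V / U) ^ b = p ^ (a + b) * (V / U) ^ b := by rw [hab, Real.rpow_one]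
    _ = p ^ a * (p * (V / U)) ^ b := by
      rw [Real.rpow_add hp, Real.mul_rpow hp.le (by positivity)]; ring
    _ = τ ^ b * (p ^ a * q ^ b) := by rw [hτq, Real.mul_rpow hτ0.le hq.le]; ring
    _ ≤ (a + b * τ) * W := by gcongr

lemma rpow_mul_rpow_eq_mul_rpow_div {U V a b : ℝ} (hU : 0 < U) (hV : 0 < V) (hab : a + b = 1) :
    U ^ a * V ^ b = U * (V / U) ^ b := by
  rw [eq_sub_of_add_eq hab, Real.rpow_sub hU, Real.rpow_one, Real.div_rpow hV.le hU.le]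
  ring

lemma prekopa_leindler_real {u v w : ℝ → ℝ} (hu : PosExpDecay u) (hv : PosExpDecay v)
    (hw : PosExpDecay w) {a b : ℝ} (ha : 0 < a) (hb : 0 < b) (hab : a + b = 1)
    (h : ∀ x y, u x ^ a * v y ^ b ≤ w (a * x + b * y)) :
    (∫ x, u x) ^ a * (∫ x, v x) ^ b ≤ ∫ x, w x := by
  have hui := hu.integrable volume
  have hvi := hv.integrable volume
  have hU : 0 < ∫ x, u x := by simpa using hu.setIntegral_pos volume (S := univ) (by simp)
  have hV : 0 < ∫ x, v x := by simpa using hv.setIntegral_pos volume (S := univ) (by simp)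
  set U := ∫ x, u x with hUdef
  set V := ∫ x, v x with hVdef
  have hT := isMonotoneTransport_rearrangement (φ := fun x => u x / U) (χ := fun x => v x / V)
    isOpen_univ ordConnected_univ
    (hu.cont.div_const _) (fun s => div_pos (hu.pos s) hU) (hui.div_const _)
    (hv.cont.div_const _) (fun s => div_pos (hv.pos s) hV) (hvi.div_const _)
    (by simp only [Measure.restrict_univ, integral_div, ← hUdef, ← hVdef,
          div_self hU.ne', div_self hV.ne'])
  set T := rearrangement univ (fun x => u x / U) (fun x => v x / V)
  have hderiv : ∀ t ∈ univ, HasDerivWithinAt (fun x => a * x + b * T x)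
      (a + b * ((u t / U) / (v (T t) / V))) univ t := fun t ht => by
    simpa using ((hasDerivWithinAt_id t _).const_mul a).fun_add
      ((hT.hasDerivWithinAt t ht).const_mul b)
  have hinj : InjOn (fun x => a * x + b * T x) univ := StrictMonoOn.injOn fun x hx y hy hxy =>
    add_lt_add (mul_lt_mul_of_pos_left hxy ha)
      (mul_lt_mul_of_pos_left (hT.strictMonoOn hx hy hxy) hb)
  have hw0 : 0 ≤ ∫ x, w x := integral_nonneg fun x => (hw.pos x).le
  rw [rpow_mul_rpow_eq_mul_rpow_div hU hV hab, ← ENNReal.ofReal_le_ofReal_iff hw0, hUdef,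
    ← integral_mul_const,
    ofReal_integral_eq_lintegral_ofReal (hui.mul_const _)
      (ae_of_all _ fun x => mul_nonneg (hu.pos x).le (by positivity)),
    ofReal_integral_eq_lintegral_ofReal (hw.integrable volume) (ae_of_all _ fun x => (hw.pos x).le)]
  calc ∫⁻ x, ENNReal.ofReal (u x * (V / U) ^ b)
      ≤ ∫⁻ x in univ, ENNReal.ofReal |a + b * ((u x / U) / (v (T x) / V))| *
          ENNReal.ofReal (w (a * x + b * T x)) := by
        rw [Measure.restrict_univ]
        refine lintegral_mono fun x => ?_
        rw [← ENNReal.ofReal_mul (abs_nonneg _)]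
        refine ENNReal.ofReal_le_ofReal ((mul_rpow_div_le_of_rpow_mul_rpow_le (hu.pos x)
          (hv.pos (T x)) hU hV ha hb hab (h x (T x))).trans ?_)
        exact mul_le_mul_of_nonneg_right (le_abs_self _) (hw.pos _).le
    _ = ∫⁻ y in (fun x => a * x + b * T x) '' univ, ENNReal.ofReal (w y) :=
        (lintegral_image_eq_lintegral_abs_deriv_mul MeasurableSet.univ hderiv hinj
          fun y => ENNReal.ofReal (w y)).symm
    _ ≤ ∫⁻ y, ENNReal.ofReal (w y) := setLIntegral_le_lintegral _ _

lemma measurePreserving_finCons (n : ℕ) :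
    MeasurePreserving (fun p : ℝ × (Fin n → ℝ) => (Fin.cons p.1 p.2 : Fin (n + 1) → ℝ)) := by
  convert (volume_preserving_piFinSuccAbove (fun _ : Fin (n + 1) => ℝ) 0).symm using 1
  ext p i
  simp [MeasurableEquiv.piFinSuccAbove, Fin.insertNthEquiv]

lemma measurableEmbedding_finCons (n : ℕ) :
    MeasurableEmbedding (fun p : ℝ × (Fin n → ℝ) => (Fin.cons p.1 p.2 : Fin (n + 1) → ℝ)) := by
  convert (MeasurableEquiv.piFinSuccAbove
    (fun _ : Fin (n + 1) => ℝ) 0).symm.measurableEmbedding using 1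
  ext p i
  simp [MeasurableEquiv.piFinSuccAbove, Fin.insertNthEquiv]

lemma PosExpDecay.finCons {n : ℕ} {f : (Fin (n + 1) → ℝ) → ℝ} (hf : PosExpDecay f) :
    PosExpDecay fun p : ℝ × (Fin n → ℝ) => f (Fin.cons p.1 p.2) := by
  refine hf.comp (φ := fun p : ℝ × (Fin n → ℝ) => (Fin.cons p.1 p.2 : Fin (n + 1) → ℝ))
    (by fun_prop) one_pos (K' := 0) fun p => ?_
  rw [one_mul, add_zero, Prod.norm_def, max_le_iff]
  refine ⟨?_, (pi_norm_le_iff_of_nonneg (norm_nonneg _)).2 fun i => ?_⟩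
  · simpa using norm_le_pi_norm (Fin.cons p.1 p.2 : Fin (n + 1) → ℝ) 0
  · simpa using norm_le_pi_norm (Fin.cons p.1 p.2 : Fin (n + 1) → ℝ) i.succ

instance isAddHaarMeasure_volume_prod {E F : Type*} [NormedAddCommGroup E] [NormedSpace ℝ E]
    [FiniteDimensional ℝ E] [MeasureSpace E] [BorelSpace E] [(volume : Measure E).IsAddHaarMeasure]
    [NormedAddCommGroup F] [NormedSpace ℝ F] [FiniteDimensional ℝ F] [MeasureSpace F]
    [BorelSpace F] [(volume : Measure F).IsAddHaarMeasure] :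
    (volume : Measure (E × F)).IsAddHaarMeasure :=
  Measure.prod.instIsAddHaarMeasure _ _

lemma PosExpDecay.integral_finCons {n : ℕ} {f : (Fin (n + 1) → ℝ) → ℝ} (hf : PosExpDecay f) :
    ∫ z, f z = ∫ x : Fin n → ℝ, ∫ t : ℝ, f (Fin.cons t x) := by
  rw [← (measurePreserving_finCons n).integral_comp (measurableEmbedding_finCons n) f,
    Measure.volume_eq_prod, integral_prod_symm _ (hf.finCons.integrable volume)]

theorem prekopa_leindler_pi {n : ℕ} {u v w : (Fin n → ℝ) → ℝ} (hu : PosExpDecay u)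
    (hv : PosExpDecay v) (hw : PosExpDecay w) {a b : ℝ} (ha : 0 < a) (hb : 0 < b)
    (hab : a + b = 1) (h : ∀ x y, u x ^ a * v y ^ b ≤ w (a • x + b • y)) :
    (∫ x, u x) ^ a * (∫ x, v x) ^ b ≤ ∫ x, w x := by
  induction n with
  | zero =>
    have hvol : (volume : Measure (Fin 0 → ℝ)).real univ = 1 := by simp [Measure.real, volume_pi]
    have hdefault := h (@default _ Unique.instInhabited) (@default _ Unique.instInhabited)
    rw [Subsingleton.elim (a • _ + b • _) (@default _ Unique.instInhabited)] at hdefault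
    simpa only [integral_unique, hvol, one_smul] using hdefault
  | succ n ih =>
    have hmarginal {f : (Fin (n + 1) → ℝ) → ℝ} (hf : PosExpDecay f) :
        PosExpDecay fun x : Fin n → ℝ => ∫ t : ℝ, f (Fin.cons t x) := by
      simpa using hf.finCons.marginal volume (S := univ) (by simp)
    rw [hu.integral_finCons, hv.integral_finCons, hw.integral_finCons]
    refine ih (hmarginal hu) (hmarginal hv) (hmarginal hw) fun x y => ?_
    refine prekopa_leindler_real (hu.finCons.fiber x) (hv.finCons.fiber y) (hw.finCons.fiber _)
      ha hb hab fun s t => (h _ _).trans_eq (congrArg w ?_)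
    ext i
    refine Fin.cases ?_ (fun j => ?_) i <;> simp

end PrekopaLeindler

section DensityMeasure

/-- The measure with Lebesgue density `f`; negative values of `f` are truncated to `0`. -/
noncomputable def densityMeasure {E : Type*} [MeasureSpace E] (f : E → ℝ) : Measure E :=
  volume.withDensity fun x => ENNReal.ofReal (f x)

namespace PosExpDecay

variable {E : Type*} [NormedAddCommGroup E] [MeasureSpace E] [BorelSpace E] {f : E → ℝ}

lemma integrable_densityMeasure_iff (hf : PosExpDecay f) {u : E → ℝ} :
    Integrable u (densityMeasure f) ↔ Integrable (fun x => u x * f x) := by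
  have hm := hf.cont.measurable
  rw [densityMeasure, integrable_withDensity_iff (by fun_prop) (ae_of_all _ fun x => by simp)]
  simp only [ENNReal.toReal_ofReal (hf.pos _).le]

variable [NormedSpace ℝ E] [FiniteDimensional ℝ E] [(volume : Measure E).IsAddHaarMeasure]

lemma isFiniteMeasure_densityMeasure (hf : PosExpDecay f) :
    IsFiniteMeasure (densityMeasure f) :=
  isFiniteMeasure_withDensity_ofReal (hf.integrable volume).2

lemma integrable_log_densityMeasure (hf : PosExpDecay f) :
    Integrable (fun x => Real.log (f x)) (densityMeasure f) := by
  rw [hf.integrable_densityMeasure_iff]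
  simpa only [mul_comm] using hf.integrable_mul_log volume

lemma integrable_densityMeasure_of_le (hf : PosExpDecay f) {u : E → ℝ} (hu : Measurable u)
    {C : ℝ} (h : ∀ x, |u x| ≤ C * (1 + ‖x‖ ^ 2)) : Integrable u (densityMeasure f) :=
  hf.integrable_densityMeasure_iff.2 (hf.integrable_mul_of_le volume hu h)

lemma integrable_norm_sq_densityMeasure (hf : PosExpDecay f) :
    Integrable (fun x => ‖x‖ ^ 2) (densityMeasure f) :=
  hf.integrable_densityMeasure_of_le (C := 1) (by fun_prop) fun x => by
    rw [abs_of_nonneg (by positivity)]; linarith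

lemma integrable_densityMeasure_of_le_norm (hf : PosExpDecay f) {u : E → ℝ} (hu : Measurable u)
    {C : ℝ} (h : ∀ x, |u x| ≤ C * ‖x‖) : Integrable u (densityMeasure f) := by
  refine hf.integrable_densityMeasure_of_le (C := |C|) hu fun x => (h x).trans ?_
  calc C * ‖x‖ ≤ |C| * ‖x‖ := by gcongr; exact le_abs_self C
    _ ≤ |C| * (1 + ‖x‖ ^ 2) := by gcongr; nlinarith [norm_nonneg x]

end PosExpDecay

end DensityMeasure

section HalfSpace

variable {E : Type*}

/-- The marginal on `E` of the restriction of the density `f` to the half-space of positive first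
coordinates. -/
noncomputable def halfMarginal (f : ℝ × E → ℝ) (x : E) : ℝ := ∫ t in Ioi (0 : ℝ), f (t, x)

/-- The conditional density on `(0, ∞)` of the first coordinate given the second one, for the
restriction of the density `f` to positive first coordinates. -/
noncomputable def condDensity (f : ℝ × E → ℝ) (p : ℝ × E) : ℝ := f p / halfMarginal f p.2

/-- The restriction of the measure with density `f` to positive first coordinates. -/
noncomputable def halfMeasure [MeasureSpace E] (f : ℝ × E → ℝ) : Measure (ℝ × E) :=
  (densityMeasure f).restrict (Ioi 0 ×ˢ univ)

lemma halfMeasure_le [MeasureSpace E] (f : ℝ × E → ℝ) : halfMeasure f ≤ densityMeasure f :=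
  Measure.restrict_le_self

lemma lintegral_halfMeasure [MeasureSpace E] [SFinite (volume : Measure E)] {f : ℝ × E → ℝ}
    (hf : Measurable f) {h : ℝ × E → ℝ≥0∞} (hh : Measurable h) :
    ∫⁻ p, h p ∂halfMeasure f
      = ∫⁻ x, ∫⁻ t in Ioi 0, h (t, x) * ENNReal.ofReal (f (t, x)) := by
  rw [halfMeasure, densityMeasure, restrict_withDensity (measurableSet_Ioi.prod MeasurableSet.univ),
    Measure.volume_eq_prod, ← Measure.prod_restrict, Measure.restrict_univ,
    lintegral_withDensity_eq_lintegral_mul _ (by fun_prop) hh, lintegral_prod_symm _ (by fun_prop)]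
  simp only [Pi.mul_apply, mul_comm]

variable [NormedAddCommGroup E] {f : ℝ × E → ℝ}

lemma PosExpDecay.halfMarginal (hf : PosExpDecay f) : PosExpDecay (halfMarginal f) :=
  hf.marginal volume (by simp)

lemma PosExpDecay.continuous_condDensity (hf : PosExpDecay f) : Continuous (condDensity f) :=
  hf.cont.div (hf.halfMarginal.cont.comp continuous_snd) fun p => (hf.halfMarginal.pos p.2).ne'

lemma PosExpDecay.condDensity_pos (hf : PosExpDecay f) (p : ℝ × E) : 0 < condDensity f p :=
  div_pos (hf.pos p) (hf.halfMarginal.pos p.2)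

lemma PosExpDecay.halfMarginal_mul_condDensity (hf : PosExpDecay f) (p : ℝ × E) :
    SymTalagrand.halfMarginal f p.2 * condDensity f p = f p :=
  mul_div_cancel₀ _ (hf.halfMarginal.pos p.2).ne'

lemma PosExpDecay.integrable_condDensity (hf : PosExpDecay f) (x : E) :
    Integrable fun t => condDensity f (t, x) :=
  ((hf.fiber x).integrable volume).div_const (SymTalagrand.halfMarginal f x)

lemma PosExpDecay.integral_condDensity (hf : PosExpDecay f) (x : E) :
    ∫ t in Ioi 0, condDensity f (t, x) = 1 := by
  simp only [condDensity, integral_div]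
  exact div_self (hf.halfMarginal.pos x).ne'

lemma PosExpDecay.lintegral_condDensity (hf : PosExpDecay f) (x : E) :
    ∫⁻ t in Ioi 0, ENNReal.ofReal (condDensity f (t, x)) = 1 := by
  rw [← ofReal_integral_eq_lintegral_ofReal (hf.integrable_condDensity x).integrableOn
    (ae_of_all _ fun t => (hf.condDensity_pos _).le), hf.integral_condDensity, ENNReal.ofReal_one]

variable [NormedSpace ℝ E] [FiniteDimensional ℝ E] [MeasureSpace E] [BorelSpace E]
  [(volume : Measure E).IsAddHaarMeasure]

lemma lintegral_mul_condDensity (hf : PosExpDecay f) {h : ℝ × E → ℝ≥0∞} (hh : Measurable h) :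
    ∫⁻ x, (∫⁻ t in Ioi 0, h (t, x) * ENNReal.ofReal (condDensity f (t, x)))
        ∂densityMeasure (halfMarginal f) = ∫⁻ p, h p ∂halfMeasure f := by
  have hm := hf.continuous_condDensity.measurable
  have hm' := hf.halfMarginal.cont.measurable
  rw [lintegral_halfMeasure hf.cont.measurable hh, densityMeasure,
    lintegral_withDensity_eq_lintegral_mul _ (by fun_prop) (by fun_prop)]
  refine lintegral_congr fun x => ?_
  rw [Pi.mul_apply, ← lintegral_const_mul _ (by fun_prop)]
  refine lintegral_congr fun t => ?_
  rw [mul_left_comm, ← ENNReal.ofReal_mul (hf.halfMarginal.pos x).le,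
    hf.halfMarginal_mul_condDensity (t, x)]

lemma map_snd_halfMeasure (hf : PosExpDecay f) :
    (halfMeasure f).map Prod.snd = densityMeasure (halfMarginal f) := by
  have hm := hf.continuous_condDensity.measurable
  refine Measure.ext_of_lintegral _ fun h hh => ?_
  rw [lintegral_map hh (by fun_prop), ← lintegral_mul_condDensity hf (by fun_prop)]
  refine lintegral_congr fun x => ?_
  dsimp only
  rw [lintegral_const_mul _ (by fun_prop), hf.lintegral_condDensity, mul_one]

end HalfSpace

section FiberCoupling

lemma measurable_ite_of_le_iff {Z : Type*} [MeasurableSpace Z] {F G S : Z × ℝ → ℝ}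
    (hF : Measurable F) (hG : Measurable G) (hS : ∀ z, ∀ t ∈ Ioi (0 : ℝ), 0 < S (z, t))
    (h : ∀ z, ∀ t ∈ Ioi (0 : ℝ), ∀ r ∈ Ioi (0 : ℝ), S (z, t) ≤ r ↔ F (z, t) ≤ G (z, r)) :
    Measurable fun w : Z × ℝ => if 0 < w.2 then S w else 1 := by
  refine measurable_of_Iic fun r => ?_
  by_cases hr : 0 < r
  · have hset : (fun w : Z × ℝ => if 0 < w.2 then S w else 1) ⁻¹' Iic r =
        ({w | 0 < w.2} ∩ {w | F w ≤ G (w.1, r)}) ∪ ({w | 0 < w.2}ᶜ ∩ {_w | 1 ≤ r}) := by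
      ext w
      by_cases hw : 0 < w.2
      · simpa [hw] using h w.1 w.2 hw r hr
      · simp [hw]
    have hpos : MeasurableSet {w : Z × ℝ | 0 < w.2} :=
      measurableSet_lt measurable_const measurable_snd
    rw [hset]
    exact (hpos.inter (measurableSet_le hF (hG.comp (by fun_prop)))).union
      (hpos.compl.inter (MeasurableSet.const _))
  · convert MeasurableSet.empty using 1
    refine eq_empty_of_forall_notMem fun w hw => hr (lt_of_lt_of_le ?_ hw)
    dsimp only
    split_ifs with hw0
    exacts [hS w.1 w.2 hw0, one_pos]

lemma measurable_cdfOn {X : Type*} [MeasurableSpace X] {I : Set ℝ} (hI : MeasurableSet I)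
    {k : ℝ × X → ℝ} (hk : Measurable k) :
    Measurable fun p : X × ℝ => cdfOn I (fun s => k (s, p.1)) p.2 := by
  have hset : MeasurableSet {q : (X × ℝ) × ℝ | q.2 ∈ I ∧ q.2 ≤ q.1.2} :=
    (measurable_snd hI).inter (measurableSet_le measurable_snd (by fun_prop))
  have heq : (fun p : X × ℝ => cdfOn I (fun s => k (s, p.1)) p.2) = fun p => ∫ s,
      {q : (X × ℝ) × ℝ | q.2 ∈ I ∧ q.2 ≤ q.1.2}.indicator (fun q => k (q.2, q.1.1)) (p, s) := by
    ext p
    rw [cdfOn, ← integral_indicator (hI.inter measurableSet_Iic)]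
    rfl
  rw [heq]
  refine (StronglyMeasurable.integral_prod_right ?_).measurable
  exact (Measurable.indicator (by fun_prop) hset).stronglyMeasurable

variable {E : Type*} [NormedAddCommGroup E] [NormedSpace ℝ E] [FiniteDimensional ℝ E]
  [MeasureSpace E] [BorelSpace E] {f g : ℝ × E → ℝ}

lemma exists_measurable_transport (hf : PosExpDecay f) (hg : PosExpDecay g) :
    ∃ T : (E × E) × ℝ → ℝ, Measurable T ∧ ∀ z, IsMonotoneTransport (Ioi 0)
      (fun t => condDensity f (t, z.1)) (fun t => condDensity g (t, z.2)) fun t => T (z, t) := by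
  have hmass (z : E × E) : ∫ t in Ioi 0, condDensity f (t, z.1) =
      ∫ t in Ioi 0, condDensity g (t, z.2) := by
    rw [hf.integral_condDensity, hg.integral_condDensity]
  set S : (E × E) × ℝ → ℝ := fun w =>
    rearrangement (Ioi 0) (fun t => condDensity f (t, w.1.1))
      (fun t => condDensity g (t, w.1.2)) w.2
  have hS (z : E × E) : IsMonotoneTransport (Ioi 0) (fun t => condDensity f (t, z.1))
      (fun t => condDensity g (t, z.2)) fun t => S (z, t) :=
    isMonotoneTransport_rearrangement isOpen_Ioi ordConnected_Ioi
      (hf.continuous_condDensity.comp (by fun_prop)) (fun _ => hf.condDensity_pos _)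
      (hf.integrable_condDensity _) (hg.continuous_condDensity.comp (by fun_prop))
      (fun _ => hg.condDensity_pos _) (hg.integrable_condDensity _) (hmass z)
  refine ⟨fun w => if 0 < w.2 then S w else 1, measurable_ite_of_le_iff
    ((measurable_cdfOn (I := Ioi 0) measurableSet_Ioi hf.continuous_condDensity.measurable).comp
      (show Measurable fun w : (E × E) × ℝ => (w.1.1, w.2) by fun_prop))
    ((measurable_cdfOn (I := Ioi 0) measurableSet_Ioi hg.continuous_condDensity.measurable).comp
      (show Measurable fun w : (E × E) × ℝ => (w.1.2, w.2) by fun_prop))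
    (fun z t ht => (hS z).bijOn.mapsTo ht) (fun z t ht r hr => ?_),
    fun z => (hS z).congr fun t ht => (if_pos ht).symm⟩
  exact rearrangement_le_iff isOpen_Ioi ordConnected_Ioi (fun _ => hf.condDensity_pos _)
    (hf.integrable_condDensity _) (fun _ => hg.condDensity_pos _) (hg.integrable_condDensity _)
    (hmass z) ht hr

/-- The coupling that lies over the coupling `π` of the `E`-marginals and, in the fibre over `z`,
is carried by the graph of `T (z, ·)`, with first marginal the conditional density of `f`. -/
noncomputable def fiberCoupling (f : ℝ × E → ℝ) (π : Measure (E × E)) (T : (E × E) × ℝ → ℝ) :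
    Measure ((ℝ × E) × (ℝ × E)) :=
  ((π.prod (volume.restrict (Ioi 0))).withDensity fun w =>
    ENNReal.ofReal (condDensity f (w.2, w.1.1))).map fun w => ((w.2, w.1.1), (T w, w.1.2))

variable {π : Measure (E × E)} {T : (E × E) × ℝ → ℝ}

lemma lintegral_fiberCoupling (hf : PosExpDecay f) (hT : Measurable T)
    {h : (ℝ × E) × (ℝ × E) → ℝ≥0∞} (hh : Measurable h) :
    ∫⁻ w, h w ∂fiberCoupling f π T = ∫⁻ z, (∫⁻ t in Ioi 0,
      h ((t, z.1), (T (z, t), z.2)) * ENNReal.ofReal (condDensity f (t, z.1))) ∂π := by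
  have hm := hf.continuous_condDensity.measurable
  rw [fiberCoupling, lintegral_map hh (by fun_prop),
    lintegral_withDensity_eq_lintegral_mul _ (by fun_prop) (by fun_prop),
    lintegral_prod _ (by fun_prop)]
  simp only [Pi.mul_apply, mul_comm]

lemma map_base_fiberCoupling (hf : PosExpDecay f) (hT : Measurable T) :
    (fiberCoupling f π T).map (fun w => (w.1.2, w.2.2)) = π := by
  have hm := hf.continuous_condDensity.measurable
  refine Measure.ext_of_lintegral _ fun h hh => ?_
  rw [lintegral_map hh (by fun_prop), lintegral_fiberCoupling hf hT (by fun_prop)]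
  refine lintegral_congr fun z => ?_
  dsimp only
  rw [lintegral_const_mul _ (by fun_prop), hf.lintegral_condDensity, mul_one]

lemma isCoupling_fiberCoupling [(volume : Measure E).IsAddHaarMeasure] (hf : PosExpDecay f)
    (hg : PosExpDecay g)
    (hπ : IsCoupling π (densityMeasure (halfMarginal f)) (densityMeasure (halfMarginal g)))
    (hT : Measurable T) (hTz : ∀ z, IsMonotoneTransport (Ioi 0)
      (fun t => condDensity f (t, z.1)) (fun t => condDensity g (t, z.2)) fun t => T (z, t)) :
    IsCoupling (fiberCoupling f π T) (halfMeasure f) (halfMeasure g) := by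
  have hm := hf.continuous_condDensity.measurable
  have hm' := hg.continuous_condDensity.measurable
  constructor <;> refine Measure.ext_of_lintegral _ fun h hh => ?_
  · rw [lintegral_map hh measurable_fst, lintegral_fiberCoupling hf hT (by fun_prop),
      ← lintegral_mul_condDensity hf hh, ← hπ.1, lintegral_map (by fun_prop) measurable_fst]
  · rw [lintegral_map hh measurable_snd, lintegral_fiberCoupling hf hT (by fun_prop),
      ← lintegral_mul_condDensity hg hh, ← hπ.2, lintegral_map (by fun_prop) measurable_snd]
    exact lintegral_congr fun z => (hTz z).lintegral_comp_mul measurableSet_Ioi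
      (fun _ => hf.condDensity_pos _) (fun _ => hg.condDensity_pos _) fun r => h (r, z.2)

lemma inv_sqrt_mul_mul_self {x y : ℝ} (hx : 0 < x) (hy : 0 < y) :
    (√(x * y))⁻¹ * x = √(x / y) := by
  rw [inv_mul_eq_iff_eq_mul₀ (by positivity), ← Real.sqrt_mul (by positivity),
    show x * y * (x / y) = x ^ 2 by field_simp, Real.sqrt_sq hx.le]

lemma lintegral_fiberCoupling_le (hf : PosExpDecay f) (hg : PosExpDecay g)
    (hT : Measurable T) (hTz : ∀ z, IsMonotoneTransport (Ioi 0)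
      (fun t => condDensity f (t, z.1)) (fun t => condDensity g (t, z.2)) fun t => T (z, t))
    {h : ℝ → ℝ≥0∞} (hh : Measurable h) :
    ∫⁻ w, ENNReal.ofReal (√(condDensity f w.1 * condDensity g w.2))⁻¹ * h √(w.1.1 * w.2.1)
      ∂fiberCoupling f π T ≤ (∫⁻ z in Ioi 0, h z) * π univ := by
  have hm := hf.continuous_condDensity.measurable
  have hm' := hg.continuous_condDensity.measurable
  rw [lintegral_fiberCoupling hf hT (by fun_prop), ← lintegral_const]
  refine lintegral_mono fun z => le_trans (lintegral_mono fun t => ?_)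
    ((hTz z).lintegral_sqrt_mul_comp_sqrt_le (fun _ => hf.condDensity_pos _)
      (fun _ => hg.condDensity_pos _) h)
  rw [mul_right_comm, ← ENNReal.ofReal_mul (by positivity),
    inv_sqrt_mul_mul_self (hf.condDensity_pos _) (hg.condDensity_pos _)]

end FiberCoupling

section HalfCoupling

/-- The density on `(0, ∞)` of the absolute value of a standard Gaussian variable. -/
noncomputable def halfGaussian (z : ℝ) : ℝ := √(2 / Real.pi) * Real.exp (-z ^ 2 / 2)

lemma lintegral_halfGaussian : ∫⁻ z in Ioi 0, ENNReal.ofReal (halfGaussian z) = 1 := by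
  have heq : halfGaussian = fun z => √(2 / Real.pi) * Real.exp (-(1 / 2) * z ^ 2) := by
    ext z; rw [halfGaussian]; ring_nf
  rw [heq, ← ofReal_integral_eq_lintegral_ofReal
    ((integrable_exp_neg_mul_sq (by norm_num)).const_mul _).integrableOn
    (ae_of_all _ fun z => by positivity), integral_const_mul, integral_gaussian_Ioi,
    ENNReal.ofReal_eq_one, mul_div_assoc', div_eq_one_iff_eq (by norm_num),
    ← Real.sqrt_mul (by positivity), show 2 / Real.pi * (Real.pi / (1 / 2)) = 2 ^ 2 by field_simp,
    Real.sqrt_sq (by norm_num)]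

lemma inv_sqrt_mul_halfGaussian {x y s : ℝ} (hx : 0 < x) (hy : 0 < y) (hs : 0 ≤ s) :
    (√(x * y))⁻¹ * halfGaussian √s =
      Real.exp (-(Real.log x + Real.log y + Real.log (Real.pi / 2) + s) / 2) := by
  rw [halfGaussian, Real.sq_sqrt hs, ← Real.exp_log (show 0 < (√(x * y))⁻¹ by positivity),
    ← Real.exp_log (show 0 < √(2 / Real.pi) by positivity), ← Real.exp_add, ← Real.exp_add,
    Real.log_inv, Real.log_sqrt (by positivity), Real.log_mul hx.ne' hy.ne',
    Real.log_sqrt (by positivity), ← inv_div Real.pi 2, Real.log_inv]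
  ring_nf

lemma integral_nonpos_of_lintegral_exp_le {X : Type*} [MeasurableSpace X] {ρ : Measure X}
    [IsFiniteMeasure ρ] {u : X → ℝ} (hu : Integrable u ρ)
    (h : ∫⁻ x, ENNReal.ofReal (Real.exp (u x)) ∂ρ ≤ ρ univ) : ∫ x, u x ∂ρ ≤ 0 := by
  have hexp_meas := Real.continuous_exp.comp_aestronglyMeasurable hu.aestronglyMeasurable
  have hexp : Integrable (fun x => Real.exp (u x)) ρ := ⟨hexp_meas, by
    rw [hasFiniteIntegral_iff_ofReal (ae_of_all _ fun x => (Real.exp_pos _).le)]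
    exact h.trans_lt (measure_lt_top ρ univ)⟩
  have hexp_le : ∫ x, Real.exp (u x) ∂ρ ≤ ρ.real univ := by
    rw [integral_eq_lintegral_of_nonneg_ae (ae_of_all _ fun x => (Real.exp_pos _).le) hexp_meas]
    exact ENNReal.toReal_mono (measure_ne_top ρ univ) h
  have hmono : ∫ x, u x ∂ρ ≤ ∫ x, (Real.exp (u x) - 1) ∂ρ :=
    integral_mono hu (hexp.sub (integrable_const 1)) fun x => by
      linarith [Real.add_one_le_exp (u x)]
  rw [integral_sub hexp (integrable_const 1), integral_const, smul_eq_mul, mul_one] at hmono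
  linarith

section Pairing

variable {E : Type*} [NormedAddCommGroup E] [MeasurableSpace E] {n : ℕ}

lemma integrable_fst_mul_fst [BorelSpace E] [SecondCountableTopology E]
    {ρ : Measure ((ℝ × E) × (ℝ × E))} {μ ν : Measure (ℝ × E)} (h : IsCoupling ρ μ ν)
    (hμ : Integrable (fun x => ‖x‖ ^ 2) μ) (hν : Integrable (fun x => ‖x‖ ^ 2) ν) :
    Integrable (fun w => w.1.1 * w.2.1) ρ :=
  h.integrable_of_abs_le_mul hμ hν (by fun_prop) fun w => by
    rw [abs_mul]
    exact mul_le_mul (norm_fst_le w.1) (norm_fst_le w.2) (abs_nonneg _) (norm_nonneg _)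

/-- The Euclidean pairing on `ℝ × ℝⁿ`, whose Mathlib norm is not Euclidean. -/
def pairing (w : (ℝ × (Fin n → ℝ)) × (ℝ × (Fin n → ℝ))) : ℝ :=
  w.1.1 * w.2.1 + ∑ i, w.1.2 i * w.2.2 i

@[fun_prop]
lemma measurable_pairing : Measurable (pairing (n := n)) := by unfold pairing; fun_prop

variable {ρ : Measure ((ℝ × (Fin n → ℝ)) × (ℝ × (Fin n → ℝ)))} {μ ν : Measure (ℝ × (Fin n → ℝ))}

lemma integrable_sum_snd_mul_snd (h : IsCoupling ρ μ ν) (hμ : Integrable (fun x => ‖x‖ ^ 2) μ)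
    (hν : Integrable (fun x => ‖x‖ ^ 2) ν) :
    Integrable (fun w => ∑ i, w.1.2 i * w.2.2 i) ρ := by
  have hnorm (x : ℝ × (Fin n → ℝ)) (i : Fin n) : |x.2 i| ≤ ‖x‖ :=
    (norm_le_pi_norm x.2 i).trans (norm_snd_le x)
  refine integrable_finsetSum _ fun i _ => h.integrable_of_abs_le_mul hμ hν (by fun_prop)
    fun w => ?_
  rw [abs_mul]
  exact mul_le_mul (hnorm w.1 i) (hnorm w.2 i) (abs_nonneg _) (norm_nonneg _)

lemma integrable_pairing (h : IsCoupling ρ μ ν) (hμ : Integrable (fun x => ‖x‖ ^ 2) μ)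
    (hν : Integrable (fun x => ‖x‖ ^ 2) ν) : Integrable pairing ρ :=
  (integrable_fst_mul_fst h hμ hν).add (integrable_sum_snd_mul_snd h hμ hν)

end Pairing

section Fiber

variable {E : Type*}

lemma ae_halfMeasure_fst_pos [MeasureSpace E] (f : ℝ × E → ℝ) :
    ∀ᵐ p ∂halfMeasure f, 0 < p.1 := by
  filter_upwards [ae_restrict_mem (measurableSet_Ioi.prod MeasurableSet.univ)] with p hp
  exact hp.1

variable [NormedAddCommGroup E] {f : ℝ × E → ℝ}

lemma log_condDensity (hf : PosExpDecay f) (p : ℝ × E) :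
    Real.log (condDensity f p) = Real.log (f p) - Real.log (halfMarginal f p.2) :=
  Real.log_div (hf.pos p).ne' (hf.halfMarginal.pos p.2).ne'

variable [NormedSpace ℝ E] [FiniteDimensional ℝ E] [MeasureSpace E] [BorelSpace E]
  [(volume : Measure E).IsAddHaarMeasure] {g : ℝ × E → ℝ} {ρ : Measure ((ℝ × E) × (ℝ × E))}

lemma integrable_norm_sq_halfMeasure (hf : PosExpDecay f) :
    Integrable (fun x => ‖x‖ ^ 2) (halfMeasure f) :=
  hf.integrable_norm_sq_densityMeasure.mono_measure (halfMeasure_le f)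

lemma measurePreserving_snd_halfMeasure (hf : PosExpDecay f) :
    MeasurePreserving Prod.snd (halfMeasure f) (densityMeasure (halfMarginal f)) :=
  ⟨measurable_snd, map_snd_halfMeasure hf⟩

lemma densityMeasure_halfMarginal_univ (hf : PosExpDecay f) :
    densityMeasure (halfMarginal f) univ = halfMeasure f univ :=
  (measure_univ_eq_of_measurePreserving (measurePreserving_snd_halfMeasure hf)).symm

lemma integrable_log_halfMarginal (hf : PosExpDecay f) :
    Integrable (fun p => Real.log (halfMarginal f p.2)) (halfMeasure f) :=
  (measurePreserving_snd_halfMeasure hf).integrable_comp_of_integrable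
    hf.halfMarginal.integrable_log_densityMeasure

lemma integrable_log_condDensity (hf : PosExpDecay f) :
    Integrable (fun p => Real.log (condDensity f p)) (halfMeasure f) := by
  simp only [log_condDensity hf]
  exact (hf.integrable_log_densityMeasure.mono_measure (halfMeasure_le f)).sub
    (integrable_log_halfMarginal hf)

lemma integral_log_halfMeasure (hf : PosExpDecay f) :
    ∫ p, Real.log (f p) ∂halfMeasure f =
      (∫ x, Real.log (halfMarginal f x) ∂densityMeasure (halfMarginal f)) +
        ∫ p, Real.log (condDensity f p) ∂halfMeasure f := by
  have hlog : Measurable fun x => Real.log (halfMarginal f x) :=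
    hf.halfMarginal.cont.measurable.log
  rw [← map_snd_halfMeasure hf, integral_map (by fun_prop) hlog.aestronglyMeasurable,
    ← integral_add (integrable_log_halfMarginal hf) (integrable_log_condDensity hf)]
  simp only [log_condDensity hf, add_sub_cancel]

lemma neg_integral_log_condDensity_le [IsFiniteMeasure ρ] (hf : PosExpDecay f)
    (hg : PosExpDecay g) (hρ : IsCoupling ρ (halfMeasure f) (halfMeasure g))
    (hle : ∫⁻ w, ENNReal.ofReal (√(condDensity f w.1 * condDensity g w.2))⁻¹ *
      ENNReal.ofReal (halfGaussian √(w.1.1 * w.2.1)) ∂ρ ≤ ρ univ) :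
    -(∫ p, Real.log (condDensity f p) ∂halfMeasure f)
        - ∫ p, Real.log (condDensity g p) ∂halfMeasure g ≤
      ρ.real univ * Real.log (Real.pi / 2) + ∫ w, w.1.1 * w.2.1 ∂ρ := by
  have hmf : Measurable fun p => Real.log (condDensity f p) :=
    hf.continuous_condDensity.measurable.log
  have hmg : Measurable fun p => Real.log (condDensity g p) :=
    hg.continuous_condDensity.measurable.log
  have hfst : ∀ᵐ w ∂ρ, 0 < w.1.1 :=
    hρ.measurePreserving_fst.quasiMeasurePreserving.ae (ae_halfMeasure_fst_pos f)
  have hsnd : ∀ᵐ w ∂ρ, 0 < w.2.1 :=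
    hρ.measurePreserving_snd.quasiMeasurePreserving.ae (ae_halfMeasure_fst_pos g)
  have hF := hρ.integrable_fst (integrable_log_condDensity hf)
  have hG := hρ.integrable_snd (integrable_log_condDensity hg)
  have hF_add_G : Integrable
      (fun w => Real.log (condDensity f w.1) + Real.log (condDensity g w.2)) ρ := hF.add hG
  have hFG : Integrable (fun w => Real.log (condDensity f w.1) + Real.log (condDensity g w.2) +
      Real.log (Real.pi / 2)) ρ := hF_add_G.add (integrable_const _)
  have hprod := integrable_fst_mul_fst hρ (integrable_norm_sq_halfMeasure hf)
    (integrable_norm_sq_halfMeasure hg)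
  have hnonpos := integral_nonpos_of_lintegral_exp_le (((hFG.add hprod).neg).div_const 2)
    (le_of_eq_of_le (lintegral_congr_ae ?_) hle)
  · simp only [Pi.neg_apply, Pi.add_apply] at hnonpos
    rw [integral_div, integral_neg, integral_add hFG hprod,
      integral_add hF_add_G (integrable_const _), integral_add hF hG, integral_const,
      hρ.integral_fst hmf, hρ.integral_snd hmg,
      smul_eq_mul] at hnonpos
    linarith
  · filter_upwards [hfst, hsnd] with w h1 h2
    rw [← ENNReal.ofReal_mul (by positivity), inv_sqrt_mul_halfGaussian (hf.condDensity_pos _)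
      (hg.condDensity_pos _) (mul_pos h1 h2).le]
    rfl

end Fiber

variable {n : ℕ}

/-- Existence of couplings certifying the entropic form of the Gaussian inequality in dimension `n`:
centred `f` and arbitrary `g` of equal mass `m` admit a coupling whose correlation dominates the sum
of their differential entropies, up to the value attained by Gaussians. -/
def HasEntropicCouplings (n : ℕ) : Prop :=
  ∀ f g : (Fin n → ℝ) → ℝ, PosExpDecay f → PosExpDecay g → ∀ m : ℝ, 0 < m →
    densityMeasure f univ = ENNReal.ofReal m → densityMeasure g univ = ENNReal.ofReal m →
    ∫ x, x ∂densityMeasure f = 0 →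
    ∃ π, IsCoupling π (densityMeasure f) (densityMeasure g) ∧
      -∫ x, Real.log (f x) ∂densityMeasure f - ∫ x, Real.log (g x) ∂densityMeasure g ≤
        m * (n * Real.log (2 * Real.pi) - 2 * Real.log m) + ∫ p, ∑ i, p.1 i * p.2 i ∂π

lemma exists_half_coupling (ih : HasEntropicCouplings n) {f g : ℝ × (Fin n → ℝ) → ℝ}
    (hf : PosExpDecay f) (hg : PosExpDecay g) {m : ℝ} (hm : 0 < m)
    (hmf : halfMeasure f univ = ENNReal.ofReal m) (hmg : halfMeasure g univ = ENNReal.ofReal m)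
    (hc : ∫ z, z.2 ∂halfMeasure f = 0) :
    ∃ ρ, IsCoupling ρ (halfMeasure f) (halfMeasure g) ∧
      -∫ x, Real.log (f x) ∂halfMeasure f - ∫ x, Real.log (g x) ∂halfMeasure g ≤
        m * ((n + 1) * Real.log (2 * Real.pi) - 2 * Real.log 2 - 2 * Real.log m) +
          ∫ w, pairing w ∂ρ := by
  obtain ⟨π, hπ, hπle⟩ := ih (halfMarginal f) (halfMarginal g) hf.halfMarginal hg.halfMarginal m hm
    ((densityMeasure_halfMarginal_univ hf).trans hmf)
    ((densityMeasure_halfMarginal_univ hg).trans hmg) ((integral_comp_of_measurePreserving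
      (measurePreserving_snd_halfMeasure hf) aestronglyMeasurable_id).symm.trans hc)
  obtain ⟨T, hT, hTz⟩ := exists_measurable_transport hf hg
  have hρ := isCoupling_fiberCoupling hf hg hπ hT hTz
  have hπ_univ : π univ = ENNReal.ofReal m :=
    hπ.measure_univ.trans ((densityMeasure_halfMarginal_univ hf).trans hmf)
  have hρ_univ : fiberCoupling f π T univ = ENNReal.ofReal m := hρ.measure_univ.trans hmf
  have : IsFiniteMeasure (fiberCoupling f π T) := ⟨by simp [hρ_univ]⟩
  have hfiber := neg_integral_log_condDensity_le hf hg hρ <| by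
    refine (lintegral_fiberCoupling_le hf hg hT hTz (h := fun z => ENNReal.ofReal (halfGaussian z))
      (by unfold halfGaussian; fun_prop)).trans_eq ?_
    rw [lintegral_halfGaussian, one_mul, hπ_univ, hρ_univ]
  have hbase : ∫ p, ∑ i, p.1 i * p.2 i ∂π = ∫ w, ∑ i, w.1.2 i * w.2.2 i ∂fiberCoupling f π T := by
    conv_lhs => rw [← map_base_fiberCoupling (π := π) hf hT]
    exact integral_map (by fun_prop) (by fun_prop)
  have hlog : Real.log (Real.pi / 2) = Real.log (2 * Real.pi) - 2 * Real.log 2 := by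
    rw [Real.log_div Real.pi_ne_zero two_ne_zero, Real.log_mul two_ne_zero Real.pi_ne_zero]
    ring
  refine ⟨_, hρ, ?_⟩
  have hfsq := integrable_norm_sq_halfMeasure hf
  have hgsq := integrable_norm_sq_halfMeasure hg
  simp only [pairing]
  rw [integral_add (integrable_fst_mul_fst hρ hfsq hgsq) (integrable_sum_snd_mul_snd hρ hfsq hgsq),
    integral_log_halfMeasure hf, integral_log_halfMeasure hg, ← hbase]
  rw [hlog, measureReal_def, hρ_univ, ENNReal.toReal_ofReal hm.le] at hfiber
  linarith

end HalfCoupling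

section Shear

section DensityMeasure

variable {E F : Type*} [MeasureSpace E] [MeasureSpace F]

lemma lintegral_densityMeasure {f : E → ℝ} (hf : Measurable f) {h : E → ℝ≥0∞}
    (hh : Measurable h) : ∫⁻ x, h x ∂densityMeasure f = ∫⁻ x, h x * ENNReal.ofReal (f x) := by
  rw [densityMeasure, lintegral_withDensity_eq_lintegral_mul _ (by fun_prop) hh]
  simp only [Pi.mul_apply, mul_comm]

lemma measurePreserving_densityMeasure {f : F → ℝ} (hf : Measurable f) {A : E → F}
    (hA : MeasurePreserving A) :
    MeasurePreserving A (densityMeasure fun x => f (A x)) (densityMeasure f) := by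
  have hAm := hA.measurable
  refine ⟨hAm, Measure.ext_of_lintegral _ fun h hh => ?_⟩
  rw [lintegral_map hh hAm, lintegral_densityMeasure (by fun_prop) (by fun_prop),
    lintegral_densityMeasure hf hh]
  exact hA.lintegral_comp (f := fun x => h x * ENNReal.ofReal (f x)) (by fun_prop)

end DensityMeasure

variable {E : Type*}

/-- Reflection of the first coordinate. -/
def reflectFst (z : ℝ × E) : ℝ × E := (-z.1, z.2)

lemma measurePreserving_reflectFst [MeasureSpace E] [SFinite (volume : Measure E)] :
    MeasurePreserving (reflectFst (E := E)) := by
  rw [Measure.volume_eq_prod]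
  exact (Measure.measurePreserving_neg volume).prod (MeasurePreserving.id volume)

variable [NormedAddCommGroup E]

/-- The shear `(t, x) ↦ (t, x + t e)`. -/
def shearSnd [NormedSpace ℝ E] (e : E) (z : ℝ × E) : ℝ × E := (z.1, z.2 + z.1 • e)

/-- The affine shear `(r, y) ↦ (r + c - ℓ y, y)`. -/
def shearFst [NormedSpace ℝ E] (ℓ : E →L[ℝ] ℝ) (c : ℝ) (z : ℝ × E) : ℝ × E :=
  (z.1 + (c - ℓ z.2), z.2)

@[fun_prop]
lemma continuous_reflectFst : Continuous (reflectFst (E := E)) := by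
  unfold reflectFst; fun_prop

lemma PosExpDecay.reflectFst {f : ℝ × E → ℝ} (hf : PosExpDecay f) :
    PosExpDecay fun z => f (reflectFst z) :=
  hf.comp continuous_reflectFst one_pos (K' := 0) fun z => by
    simp [SymTalagrand.reflectFst, Prod.norm_def]

section NormedSpace

variable [NormedSpace ℝ E] {f : ℝ × E → ℝ}

@[fun_prop]
lemma continuous_shearSnd (e : E) : Continuous (shearSnd e) := by
  unfold shearSnd; fun_prop

@[fun_prop]
lemma continuous_shearFst (ℓ : E →L[ℝ] ℝ) (c : ℝ) : Continuous (shearFst ℓ c) := by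
  unfold shearFst; fun_prop

lemma PosExpDecay.shearSnd (hf : PosExpDecay f) (e : E) :
    PosExpDecay fun z => f (shearSnd e z) := by
  refine hf.comp (continuous_shearSnd e) (K := 1 + ‖e‖) (by positivity) (K' := 0) fun z => ?_
  have hfst : |z.1| ≤ ‖SymTalagrand.shearSnd e z‖ := norm_fst_le (SymTalagrand.shearSnd e z)
  have hsnd : ‖z.2 + z.1 • e‖ ≤ ‖SymTalagrand.shearSnd e z‖ :=
    norm_snd_le (SymTalagrand.shearSnd e z)
  have htriangle : ‖z.2‖ ≤ ‖z.2 + z.1 • e‖ + |z.1| * ‖e‖ := by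
    simpa [norm_smul] using norm_sub_le (z.2 + z.1 • e) (z.1 • e)
  have he := mul_le_mul_of_nonneg_right hfst (norm_nonneg e)
  have he0 : 0 ≤ ‖SymTalagrand.shearSnd e z‖ * ‖e‖ := by positivity
  rw [add_zero, Prod.norm_def, max_le_iff, Real.norm_eq_abs]
  constructor <;> linarith

lemma PosExpDecay.shearFst (hf : PosExpDecay f) (ℓ : E →L[ℝ] ℝ) (c : ℝ) :
    PosExpDecay fun z => f (shearFst ℓ c z) := by
  refine hf.comp (continuous_shearFst ℓ c) (K := 1 + ‖ℓ‖) (by positivity) (K' := |c|) fun z => ?_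
  have hfst : |z.1 + (c - ℓ z.2)| ≤ ‖SymTalagrand.shearFst ℓ c z‖ :=
    norm_fst_le (SymTalagrand.shearFst ℓ c z)
  have hsnd : ‖z.2‖ ≤ ‖SymTalagrand.shearFst ℓ c z‖ := norm_snd_le (SymTalagrand.shearFst ℓ c z)
  have hℓ : |ℓ z.2| ≤ ‖ℓ‖ * ‖SymTalagrand.shearFst ℓ c z‖ :=
    (ℓ.le_opNorm z.2).trans (mul_le_mul_of_nonneg_left hsnd (norm_nonneg ℓ))
  have htriangle : |z.1| ≤ |z.1 + (c - ℓ z.2)| + |c| + |ℓ z.2| := by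
    have := abs_add_three (z.1 + (c - ℓ z.2)) (-c) (ℓ z.2)
    rwa [abs_neg, show z.1 + (c - ℓ z.2) + -c + ℓ z.2 = z.1 by ring] at this
  have hℓ0 : 0 ≤ ‖ℓ‖ * ‖SymTalagrand.shearFst ℓ c z‖ := by positivity
  have hc0 := abs_nonneg c
  rw [Prod.norm_def, max_le_iff, Real.norm_eq_abs]
  constructor <;> linarith

end NormedSpace

variable [NormedSpace ℝ E] [FiniteDimensional ℝ E] [MeasureSpace E] [BorelSpace E]
  [(volume : Measure E).IsAddHaarMeasure] {f : ℝ × E → ℝ}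

lemma measurePreserving_shearSnd (e : E) : MeasurePreserving (shearSnd e) := by
  rw [Measure.volume_eq_prod]
  exact MeasurePreserving.skew_product (g := fun t x => x + t • e) (MeasurePreserving.id _)
    (by fun_prop) (ae_of_all _ fun t => (measurePreserving_add_right volume (t • e)).map_eq)

lemma measurePreserving_shearFst (ℓ : E →L[ℝ] ℝ) (c : ℝ) : MeasurePreserving (shearFst ℓ c) := by
  rw [Measure.volume_eq_prod]
  have h : MeasurePreserving (fun p : E × ℝ => (p.1, p.2 + (c - ℓ p.1)))
      ((volume : Measure E).prod volume) ((volume : Measure E).prod volume) :=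
    MeasurePreserving.skew_product (g := fun y r => r + (c - ℓ y)) (MeasurePreserving.id _)
      (by fun_prop) (ae_of_all _ fun y => (measurePreserving_add_right volume (c - ℓ y)).map_eq)
  exact (Measure.measurePreserving_swap.comp h).comp Measure.measurePreserving_swap

lemma PosExpDecay.densityMeasure_univ {F : Type*} [NormedAddCommGroup F] [NormedSpace ℝ F]
    [FiniteDimensional ℝ F] [MeasureSpace F] [BorelSpace F]
    [(volume : Measure F).IsAddHaarMeasure] {f : F → ℝ} (hf : PosExpDecay f) :
    densityMeasure f univ = ENNReal.ofReal (∫ x, f x) := by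
  rw [densityMeasure, withDensity_apply _ MeasurableSet.univ, setLIntegral_univ,
    ofReal_integral_eq_lintegral_ofReal (hf.integrable volume) (ae_of_all _ fun x => (hf.pos x).le)]

lemma PosExpDecay.halfMeasure_univ_pos (hf : PosExpDecay f) : 0 < halfMeasure f univ := by
  rw [← densityMeasure_halfMarginal_univ hf, hf.halfMarginal.densityMeasure_univ,
    ENNReal.ofReal_pos, ← setIntegral_univ]
  exact hf.halfMarginal.setIntegral_pos volume (isOpen_univ.measure_pos volume univ_nonempty).ne'

lemma measurePreserving_shearSnd_halfMeasure (hf : PosExpDecay f) (e : E) :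
    MeasurePreserving (shearSnd e) (halfMeasure fun z => f (shearSnd e z)) (halfMeasure f) :=
  (measurePreserving_densityMeasure hf.cont.measurable
    (measurePreserving_shearSnd e)).restrict_preimage (measurableSet_Ioi.prod MeasurableSet.univ)

lemma halfMeasure_add_map_reflectFst (hf : PosExpDecay f) :
    halfMeasure f + (halfMeasure fun z => f (reflectFst z)).map reflectFst = densityMeasure f := by
  have hreflect := (measurePreserving_densityMeasure hf.cont.measurable
    measurePreserving_reflectFst).restrict_preimage
      (measurableSet_Iio (a := (0 : ℝ)).prod (MeasurableSet.univ (α := E)))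
  have hpre : reflectFst ⁻¹' (Iio 0 ×ˢ univ) = Ioi (0 : ℝ) ×ˢ (univ : Set E) := by
    ext z; simp [reflectFst]
  have hcompl : (Ioi (0 : ℝ) ×ˢ (univ : Set E))ᶜ = Iic 0 ×ˢ univ := by ext z; simp
  have hae : Iio (0 : ℝ) ×ˢ (univ : Set E) =ᵐ[densityMeasure f] Iic (0 : ℝ) ×ˢ univ :=
    (withDensity_absolutelyContinuous volume _).ae_eq
      (Measure.set_prod_ae_eq Iio_ae_eq_Iic (ae_eq_refl univ))
  rw [hpre] at hreflect
  rw [halfMeasure, halfMeasure, hreflect.map_eq, Measure.restrict_congr_set hae, ← hcompl]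
  exact Measure.restrict_add_restrict_compl (measurableSet_Ioi.prod MeasurableSet.univ)

lemma densityMeasure_univ_eq_add (hf : PosExpDecay f) :
    densityMeasure f univ = halfMeasure f univ + halfMeasure (fun z => f (reflectFst z)) univ := by
  rw [← halfMeasure_add_map_reflectFst hf, Measure.add_apply,
    Measure.map_apply (by fun_prop) MeasurableSet.univ, preimage_univ]

lemma integral_densityMeasure_eq_add {G : Type*} [NormedAddCommGroup G] [NormedSpace ℝ G]
    (hf : PosExpDecay f) {u : ℝ × E → G} (hu : Integrable u (densityMeasure f)) :
    ∫ z, u z ∂densityMeasure f = ∫ z, u z ∂halfMeasure f +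
      ∫ z, u (reflectFst z) ∂halfMeasure (fun z => f (reflectFst z)) := by
  rw [← halfMeasure_add_map_reflectFst hf] at hu ⊢
  rw [integral_add_measure hu.left_of_add_measure hu.right_of_add_measure,
    integral_map (by fun_prop) hu.right_of_add_measure.aestronglyMeasurable]

lemma integrable_fst_densityMeasure (hf : PosExpDecay f) :
    Integrable Prod.fst (densityMeasure f) :=
  hf.integrable_densityMeasure_of_le_norm (C := 1) measurable_fst fun z => by
    rw [one_mul]; exact norm_fst_le z

lemma integrable_snd_densityMeasure (hf : PosExpDecay f) :
    Integrable Prod.snd (densityMeasure f) :=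
  (hf.integrable_densityMeasure_of_le_norm (C := 1) (u := fun z => ‖z.2‖) (by fun_prop) fun z => by
    rw [one_mul, abs_norm]; exact norm_snd_le z).mono (by fun_prop) (ae_of_all _ fun z => by simp)

lemma integral_fst_halfMeasure_pos (hf : PosExpDecay f) : 0 < ∫ z, z.1 ∂halfMeasure f := by
  have hpos := ae_halfMeasure_fst_pos f
  rw [integral_pos_iff_support_of_nonneg_ae (hpos.mono fun z hz => hz.le)
    ((integrable_fst_densityMeasure hf).mono_measure (halfMeasure_le f)),
    measure_congr (eventuallyEq_univ.2 (hpos.mono fun z hz => hz.ne') :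
      Function.support Prod.fst =ᵐ[halfMeasure f] univ)]
  exact hf.halfMeasure_univ_pos

lemma exists_shearSnd_centred (hf : PosExpDecay f) (hfst : ∫ z, z.1 ∂densityMeasure f = 0)
    (hsnd : ∫ z, z.2 ∂densityMeasure f = 0) :
    ∃ e : E, ∫ z, z.2 ∂halfMeasure (fun z => f (shearSnd e z)) = 0 ∧
      ∫ z, z.2 ∂halfMeasure (fun z => f (shearSnd e (reflectFst z))) = 0 := by
  set e : E := (∫ z, z.1 ∂halfMeasure f)⁻¹ • ∫ z, z.2 ∂halfMeasure f
  have he := hf.shearSnd e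
  have hcoord (z : ℝ × E) : z.2 = (shearSnd e z).2 - (shearSnd e z).1 • e := by simp [shearSnd]
  have hi : Integrable (fun z : ℝ × E => z.2 - z.1 • e) (densityMeasure f) :=
    (integrable_snd_densityMeasure hf).sub ((integrable_fst_densityMeasure hf).smul_const e)
  have hhalf : ∫ z, z.2 ∂halfMeasure (fun z => f (shearSnd e z)) = 0 := by
    simp_rw +singlePass [hcoord]
    rw [integral_comp_of_measurePreserving (measurePreserving_shearSnd_halfMeasure hf e)
        (hi.mono_measure (halfMeasure_le f)).aestronglyMeasurable,
      integral_sub ((integrable_snd_densityMeasure hf).mono_measure (halfMeasure_le f))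
        (((integrable_fst_densityMeasure hf).mono_measure (halfMeasure_le f)).smul_const e),
      integral_smul_const, smul_inv_smul₀ (integral_fst_halfMeasure_pos hf).ne', sub_self]
  have hfull : ∫ z, z.2 ∂densityMeasure (fun z => f (shearSnd e z)) = 0 := by
    simp_rw +singlePass [hcoord]
    rw [integral_comp_of_measurePreserving (measurePreserving_densityMeasure hf.cont.measurable
        (measurePreserving_shearSnd e)) hi.aestronglyMeasurable,
      integral_sub (integrable_snd_densityMeasure hf)
        ((integrable_fst_densityMeasure hf).smul_const e),
      integral_smul_const, hfst, hsnd, zero_smul, sub_zero]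
  refine ⟨e, hhalf, ?_⟩
  rw [integral_densityMeasure_eq_add he (integrable_snd_densityMeasure he), hhalf, zero_add]
    at hfull
  exact hfull

lemma PosExpDecay.integral_snd (hf : PosExpDecay f) : PosExpDecay fun r => ∫ y, f (r, y) := by
  have hswap : PosExpDecay fun q : E × ℝ => f q.swap :=
    hf.comp continuous_swap one_pos (K' := 0) fun q => by simp [Prod.norm_def, max_comm]
  simpa using hswap.marginal volume (isOpen_univ.measure_pos volume univ_nonempty).ne'

lemma measurePreserving_fst_densityMeasure (hf : PosExpDecay f) :
    MeasurePreserving Prod.fst (densityMeasure f) (densityMeasure fun r => ∫ y, f (r, y)) := by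
  have hm := hf.cont.measurable
  refine ⟨measurable_fst, Measure.ext_of_lintegral _ fun h hh => ?_⟩
  rw [lintegral_map hh measurable_fst, lintegral_densityMeasure hm (by fun_prop),
    lintegral_densityMeasure hf.integral_snd.cont.measurable hh, Measure.volume_eq_prod,
    lintegral_prod _ (by fun_prop)]
  refine lintegral_congr fun r => ?_
  have hsection : PosExpDecay fun y => f (r, y) :=
    hf.comp (by fun_prop) one_pos (K' := 0) fun y => by simp [Prod.norm_def]
  rw [ofReal_integral_eq_lintegral_ofReal (hsection.integrable volume)
    (ae_of_all _ fun y => (hf.pos _).le), ← lintegral_const_mul _ (by fun_prop)]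

lemma exists_densityMeasure_Ioi_eq {h : ℝ → ℝ} (hh : PosExpDecay h) {p : ℝ≥0∞} (hp : 0 < p)
    (hph : p < densityMeasure h univ) : ∃ c, densityMeasure h (Ioi c) = p := by
  lift p to NNReal using hph.ne_top
  have hhi := hh.integrable volume
  rw [hh.densityMeasure_univ, ENNReal.coe_lt_ofReal] at hph
  obtain ⟨c, -, hc⟩ := surjOn_cdfOn MeasurableSet.univ ordConnected_univ hhi
    (show (∫ x, h x) - p ∈ Ioo 0 _ by
      rw [setIntegral_univ]; exact ⟨sub_pos.2 hph, sub_lt_self _ (by simpa using hp)⟩)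
  have hsplit := integral_add_compl (measurableSet_Iic (a := c)) hhi
  rw [cdfOn, univ_inter] at hc
  rw [compl_Iic] at hsplit
  refine ⟨c, ?_⟩
  rw [densityMeasure, withDensity_apply _ measurableSet_Ioi, ← ofReal_integral_eq_lintegral_ofReal
    hhi.integrableOn (ae_of_all _ fun x => (hh.pos x).le),
    show ∫ x in Ioi c, h x = p by linarith, ENNReal.ofReal_coe_nnreal]

lemma exists_halfMeasure_shearFst_univ (hf : PosExpDecay f) (ℓ : E →L[ℝ] ℝ) {p : ℝ≥0∞}
    (hp : 0 < p) (hpf : p < densityMeasure f univ) :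
    ∃ c, halfMeasure (fun z => f (shearFst ℓ c z)) univ = p := by
  have hg := hf.shearFst ℓ 0
  have hshear :=
    measurePreserving_densityMeasure hf.cont.measurable (measurePreserving_shearFst ℓ 0)
  have hfst := measurePreserving_fst_densityMeasure hg
  obtain ⟨c, hc⟩ := exists_densityMeasure_Ioi_eq hg.integral_snd hp (by
    rwa [← measure_univ_eq_of_measurePreserving hfst, measure_univ_eq_of_measurePreserving hshear])
  have htranslate := measurePreserving_densityMeasure hg.cont.measurable
    (measurePreserving_shearFst (0 : E →L[ℝ] ℝ) c)
  have hcomp (z : ℝ × E) : shearFst ℓ 0 (shearFst 0 c z) = shearFst ℓ c z := by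
    simp [shearFst]; ring
  have hpre : (fun z : ℝ × E => (shearFst 0 c z).1) ⁻¹' Ioi c = Ioi 0 ×ˢ univ := by
    ext z; simp [shearFst]
  refine ⟨c, ?_⟩
  rw [← hc, ← (hfst.comp htranslate).measure_preimage measurableSet_Ioi.nullMeasurableSet]
  simp only [hcomp, Function.comp_def, hpre, halfMeasure, Measure.restrict_apply_univ]

end Shear

section Induction

lemma mul_log_add_mul_log_ge {p q : ℝ} (hp : 0 < p) (hq : 0 < q) :
    (p + q) * (Real.log (p + q) - Real.log 2) ≤ p * Real.log p + q * Real.log q := by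
  obtain ⟨-, hconv⟩ := Real.convexOn_mul_log
  have h := hconv (mem_Ici.2 hp.le) (mem_Ici.2 hq.le)
    (show (0 : ℝ) ≤ 1 / 2 by norm_num) (show (0 : ℝ) ≤ 1 / 2 by norm_num) (by norm_num)
  simp only [smul_eq_mul] at h
  rw [show 1 / 2 * p + 1 / 2 * q = (p + q) / 2 by ring,
    Real.log_div (by positivity) two_ne_zero] at h
  linarith

lemma exists_coupling_of_comp {X Y : Type*} [MeasureSpace X] [MeasureSpace Y] {f g : Y → ℝ}
    (hf : Measurable f) (hg : Measurable g) {A B : X → Y} (hA : MeasurePreserving A)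
    (hB : MeasurePreserving B) {u : Y × Y → ℝ} (hu : Measurable u) {K : ℝ}
    (h : ∃ ρ, IsCoupling ρ (densityMeasure fun x => f (A x)) (densityMeasure fun x => g (B x)) ∧
      -∫ x, Real.log (f (A x)) ∂densityMeasure (fun x => f (A x)) -
          ∫ x, Real.log (g (B x)) ∂densityMeasure (fun x => g (B x)) ≤
        K + ∫ w, u (A w.1, B w.2) ∂ρ) :
    ∃ ρ, IsCoupling ρ (densityMeasure f) (densityMeasure g) ∧
      -∫ y, Real.log (f y) ∂densityMeasure f - ∫ y, Real.log (g y) ∂densityMeasure g ≤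
        K + ∫ w, u w ∂ρ := by
  obtain ⟨ρ, hρ, hle⟩ := h
  have hAf := measurePreserving_densityMeasure hf hA
  have hBg := measurePreserving_densityMeasure hg hB
  have hAB := hA.measurable.prodMap hB.measurable
  refine ⟨ρ.map (Prod.map A B), hρ.map hAf hBg, ?_⟩
  rwa [integral_map hAB.aemeasurable hu.aestronglyMeasurable,
    ← integral_comp_of_measurePreserving hAf hf.log.aestronglyMeasurable,
    ← integral_comp_of_measurePreserving hBg hg.log.aestronglyMeasurable]

variable {n : ℕ} {f g : ℝ × (Fin n → ℝ) → ℝ}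

lemma exists_prod_coupling_of_half (ih : HasEntropicCouplings n) (hf : PosExpDecay f)
    (hg : PosExpDecay g) {m : ℝ} (hm : 0 < m) (hmf : densityMeasure f univ = ENNReal.ofReal m)
    (hmg : densityMeasure g univ = ENNReal.ofReal m)
    (hfg : halfMeasure f univ = halfMeasure g univ) (hc : ∫ z, z.2 ∂halfMeasure f = 0)
    (hc' : ∫ z, z.2 ∂halfMeasure (fun z => f (reflectFst z)) = 0) :
    ∃ ρ, IsCoupling ρ (densityMeasure f) (densityMeasure g) ∧
      -∫ x, Real.log (f x) ∂densityMeasure f - ∫ x, Real.log (g x) ∂densityMeasure g ≤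
        m * ((n + 1) * Real.log (2 * Real.pi) - 2 * Real.log m) + ∫ w, pairing w ∂ρ := by
  have hsum := densityMeasure_univ_eq_add hf
  have hsum' := densityMeasure_univ_eq_add hg
  have hp := hf.halfMeasure_univ_pos
  have hq := hf.reflectFst.halfMeasure_univ_pos
  rw [hmf] at hsum
  rw [hmg, hsum, ← hfg] at hsum'
  obtain ⟨hp_top, hq_top⟩ := ENNReal.add_ne_top.1 (hsum ▸ ENNReal.ofReal_ne_top)
  have hfg' := (ENNReal.add_right_inj hp_top).1 hsum'
  lift halfMeasure f univ to NNReal using hp_top with p hpf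
  lift halfMeasure (fun z => f (reflectFst z)) univ to NNReal using hq_top with q hqf
  rw [← ENNReal.ofReal_coe_nnreal] at hpf hqf
  have hm_eq : m = p + q := by
    rw [← ENNReal.coe_add] at hsum
    rw [← ENNReal.toReal_ofReal hm.le, hsum, ENNReal.coe_toReal, NNReal.coe_add]
  obtain ⟨ρ, hρ, hle⟩ := exists_half_coupling ih hf hg (by exact_mod_cast hp) hpf.symm
    (hfg.symm.trans ENNReal.ofReal_coe_nnreal.symm) hc
  obtain ⟨ρ', hρ', hle'⟩ := exists_half_coupling ih hf.reflectFst hg.reflectFst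
    (by exact_mod_cast hq) hqf.symm (hfg'.symm.trans ENNReal.ofReal_coe_nnreal.symm) hc'
  have hreflect : Measurable (reflectFst (E := Fin n → ℝ)) := by fun_prop
  have hsum_coupling :=
    hρ.add (hρ'.map (hreflect.measurePreserving _) (hreflect.measurePreserving _))
  rw [halfMeasure_add_map_reflectFst hf, halfMeasure_add_map_reflectFst hg] at hsum_coupling
  have hpairing (w : (ℝ × (Fin n → ℝ)) × (ℝ × (Fin n → ℝ))) :
      pairing (Prod.map reflectFst reflectFst w) = pairing w := by simp [pairing, reflectFst]
  have hint := integrable_pairing hsum_coupling hf.integrable_norm_sq_densityMeasure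
    hg.integrable_norm_sq_densityMeasure
  refine ⟨_, hsum_coupling, ?_⟩
  rw [integral_add_measure hint.left_of_add_measure hint.right_of_add_measure,
    integral_map (by fun_prop) measurable_pairing.aestronglyMeasurable,
    integral_densityMeasure_eq_add hf hf.integrable_log_densityMeasure,
    integral_densityMeasure_eq_add hg hg.integrable_log_densityMeasure, hm_eq]
  simp only [hpairing]
  have hconv :=
    mul_log_add_mul_log_ge (p := p) (q := q) (by exact_mod_cast hp) (by exact_mod_cast hq)
  linarith

lemma exists_prod_coupling_of_shear (hf : PosExpDecay f) (hg : PosExpDecay g)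
    (hc : ∫ z, z.1 ∂densityMeasure f = 0) (e : Fin n → ℝ) (c : ℝ) {K : ℝ}
    (h : ∃ ρ, IsCoupling ρ (densityMeasure fun z => f (shearSnd e z))
        (densityMeasure fun z => g (shearFst (∑ i, e i • ContinuousLinearMap.proj i) c z)) ∧
      -∫ z, Real.log (f (shearSnd e z)) ∂densityMeasure (fun z => f (shearSnd e z)) -
          ∫ z, Real.log (g (shearFst (∑ i, e i • ContinuousLinearMap.proj i) c z))
            ∂densityMeasure (fun z => g (shearFst (∑ i, e i • ContinuousLinearMap.proj i) c z)) ≤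
        K + ∫ w, pairing w ∂ρ) :
    ∃ ρ, IsCoupling ρ (densityMeasure f) (densityMeasure g) ∧
      -∫ z, Real.log (f z) ∂densityMeasure f - ∫ z, Real.log (g z) ∂densityMeasure g ≤
        K + ∫ w, pairing w ∂ρ := by
  set ℓ : (Fin n → ℝ) →L[ℝ] ℝ := ∑ i, e i • ContinuousLinearMap.proj i
  refine exists_coupling_of_comp hf.cont.measurable hg.cont.measurable
    (measurePreserving_shearSnd e) (measurePreserving_shearFst ℓ c) measurable_pairing ?_
  obtain ⟨ρ, hρ, hle⟩ := h
  have hpairing (w : (ℝ × (Fin n → ℝ)) × (ℝ × (Fin n → ℝ))) :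
      pairing (shearSnd e w.1, shearFst ℓ c w.2) = pairing w + c * w.1.1 := by
    simp only [pairing, shearSnd, shearFst, ℓ, _root_.sum_apply,
      _root_.smul_apply, ContinuousLinearMap.proj_apply, Pi.add_apply, Pi.smul_apply,
      smul_eq_mul, add_mul, Finset.sum_add_distrib, mul_assoc, ← Finset.mul_sum]
    ring
  have hcentred : ∫ w, w.1.1 ∂ρ = 0 := by
    rw [hρ.integral_fst measurable_fst, ← hc]
    exact integral_comp_of_measurePreserving (u := Prod.fst) (measurePreserving_densityMeasure
      hf.cont.measurable (measurePreserving_shearSnd e)) (by fun_prop)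
  refine ⟨ρ, hρ, ?_⟩
  simp only [hpairing]
  rwa [integral_add (integrable_pairing hρ (hf.shearSnd e).integrable_norm_sq_densityMeasure
      (hg.shearFst ℓ c).integrable_norm_sq_densityMeasure)
    ((hρ.integrable_fst (integrable_fst_densityMeasure (hf.shearSnd e))).const_mul c),
    integral_const_mul, hcentred, mul_zero, add_zero]

lemma exists_prod_coupling (ih : HasEntropicCouplings n) (hf : PosExpDecay f) (hg : PosExpDecay g)
    {m : ℝ} (hm : 0 < m) (hmf : densityMeasure f univ = ENNReal.ofReal m)
    (hmg : densityMeasure g univ = ENNReal.ofReal m) (hfst : ∫ z, z.1 ∂densityMeasure f = 0)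
    (hsnd : ∫ z, z.2 ∂densityMeasure f = 0) :
    ∃ ρ, IsCoupling ρ (densityMeasure f) (densityMeasure g) ∧
      -∫ x, Real.log (f x) ∂densityMeasure f - ∫ x, Real.log (g x) ∂densityMeasure g ≤
        m * ((n + 1) * Real.log (2 * Real.pi) - 2 * Real.log m) + ∫ w, pairing w ∂ρ := by
  obtain ⟨e, hhalf, hhalf'⟩ := exists_shearSnd_centred hf hfst hsnd
  have hfe := hf.shearSnd e
  have hmfe := measure_univ_eq_of_measurePreserving
    (measurePreserving_densityMeasure hf.cont.measurable (measurePreserving_shearSnd e))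
  have hlt : halfMeasure (fun z => f (shearSnd e z)) univ < densityMeasure g univ := by
    rw [hmg, ← hmf, ← hmfe, densityMeasure_univ_eq_add hfe]
    refine ENNReal.lt_add_right (ne_top_of_le_ne_top ?_ (halfMeasure_le _ univ))
      hfe.reflectFst.halfMeasure_univ_pos.ne'
    rw [hmfe, hmf]
    exact ENNReal.ofReal_ne_top
  obtain ⟨c, hge⟩ := exists_halfMeasure_shearFst_univ hg (∑ i, e i • ContinuousLinearMap.proj i)
    hfe.halfMeasure_univ_pos hlt
  exact exists_prod_coupling_of_shear hf hg hfst e c <| exists_prod_coupling_of_half ih hfe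
    (hg.shearFst _ c) hm (hmfe.trans hmf) ((measure_univ_eq_of_measurePreserving
      (measurePreserving_densityMeasure hg.cont.measurable
        (measurePreserving_shearFst _ c))).trans hmg) hge.symm hhalf hhalf'

lemma hasEntropicCouplings_zero : HasEntropicCouplings 0 := by
  intro f g hf hg m hm hmf hmg _
  have hval {h : (Fin 0 → ℝ) → ℝ} (hh : PosExpDecay h)
      (hmh : densityMeasure h univ = ENNReal.ofReal m) (x : Fin 0 → ℝ) : h x = m := by
    rw [hh.densityMeasure_univ, ENNReal.ofReal_eq_ofReal_iff
      (integral_nonneg fun x => (hh.pos x).le) hm.le] at hmh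
    rw [← hmh, Subsingleton.elim x default]
    simp [volume_pi, Measure.pi_of_empty (x := default)]
  have hdirac {h : (Fin 0 → ℝ) → ℝ} (hh : ∀ x, h x = m) :
      densityMeasure h = ENNReal.ofReal m • (Measure.dirac default : Measure (Fin 0 → ℝ)) := by
    simp only [densityMeasure, hh, withDensity_const, volume_pi,
      Measure.pi_of_empty (x := default)]
  have hfm := hval hf hmf
  have hgm := hval hg hmg
  refine ⟨ENNReal.ofReal m • Measure.dirac default, ⟨?_, ?_⟩, ?_⟩
  · rw [hdirac hfm, Measure.map_smul, Measure.map_dirac' measurable_fst]; rfl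
  · rw [hdirac hgm, Measure.map_smul, Measure.map_dirac' measurable_snd]; rfl
  · rw [hdirac hfm, hdirac hgm]
    simp only [hfm, hgm, integral_const, Finset.univ_eq_empty, Finset.sum_empty, smul_eq_mul]
    simp [Measure.real, ENNReal.toReal_ofReal hm.le]
    linarith

theorem hasEntropicCouplings (n : ℕ) : HasEntropicCouplings n := by
  induction n with
  | zero => exact hasEntropicCouplings_zero
  | succ n ih =>
    intro f g hf hg m hm hmf hmg hc
    have hcons := measurePreserving_finCons n
    have hconsf := measurePreserving_densityMeasure hf.cont.measurable hcons
    have hconsg := measurePreserving_densityMeasure hg.cont.measurable hcons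
    have hi : Integrable id (densityMeasure f) :=
      (hf.integrable_densityMeasure_of_le_norm (C := 1) (u := fun x => ‖x‖) (by fun_prop)
        fun x => by rw [one_mul, abs_norm]).mono (by fun_prop) (ae_of_all _ fun x => by simp)
    have hhead := (integral_comp_of_measurePreserving hconsf (by fun_prop)).trans
      (((ContinuousLinearMap.proj 0 : (Fin (n + 1) → ℝ) →L[ℝ] ℝ).integral_comp_comm hi).trans
        ((congrArg _ hc).trans (map_zero _)))
    have htail := (integral_comp_of_measurePreserving hconsf (by fun_prop)).trans
      (((ContinuousLinearMap.pi fun i => ContinuousLinearMap.proj i.succ :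
        (Fin (n + 1) → ℝ) →L[ℝ] Fin n → ℝ).integral_comp_comm hi).trans
          ((congrArg _ hc).trans (map_zero _)))
    have h := exists_coupling_of_comp hf.cont.measurable hg.cont.measurable hcons hcons
      (u := fun w => ∑ i, w.1 i * w.2 i) (by fun_prop)
      (by
        simpa only [Fin.sum_univ_succ, Fin.cons_zero, Fin.cons_succ, pairing] using
          exists_prod_coupling ih hf.finCons hg.finCons hm
            ((measure_univ_eq_of_measurePreserving hconsf).trans hmf)
            ((measure_univ_eq_of_measurePreserving hconsg).trans hmg) hhead htail)
    simpa only [Nat.cast_add, Nat.cast_one] using h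

end Induction

section InnerProductSpace

variable {E : Type*} [NormedAddCommGroup E] [InnerProductSpace ℝ E]

/-- Minus the logarithm of the standard Gaussian density. -/
noncomputable def gaussPot (x : E) : ℝ :=
  ‖x‖ ^ 2 / 2 + Module.finrank ℝ E / 2 * Real.log (2 * Real.pi)

@[fun_prop]
lemma continuous_gaussPot : Continuous (gaussPot (E := E)) := by unfold gaussPot; fun_prop

variable [FiniteDimensional ℝ E]

/-- The linear identification of `ℝⁿ` with `E` given by the standard orthonormal basis. -/
noncomputable def ofCoord : (Fin (Module.finrank ℝ E) → ℝ) ≃L[ℝ] E :=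
  (EuclideanSpace.equiv (Fin (Module.finrank ℝ E)) ℝ).symm.trans
    (stdOrthonormalBasis ℝ E).repr.symm.toContinuousLinearEquiv

lemma inner_ofCoord (x y : Fin (Module.finrank ℝ E) → ℝ) :
    ⟪ofCoord (E := E) x, ofCoord y⟫ = ∑ i, x i * y i := by
  simp [ofCoord, PiLp.inner_apply, mul_comm]

lemma PosExpDecay.comp_ofCoord {f : E → ℝ} (hf : PosExpDecay f) :
    PosExpDecay fun x => f (ofCoord x) :=
  hf.comp ofCoord.continuous one_pos (K' := 0) fun x => by
    simpa [ofCoord] using (pi_norm_le_iff_of_nonneg (norm_nonneg _)).2 fun i =>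
      PiLp.norm_apply_le (WithLp.toLp 2 x) i

variable [MeasurableSpace E] [BorelSpace E]

lemma measurePreserving_ofCoord : MeasurePreserving (ofCoord (E := E)) :=
  (stdOrthonormalBasis ℝ E).repr.symm.measurePreserving.comp (PiLp.volume_preserving_toLp _)

lemma integral_comp_ofCoord (f : E → ℝ) : ∫ x, f (ofCoord x) = ∫ x, f x :=
  measurePreserving_ofCoord.integral_comp ofCoord.toHomeomorph.measurableEmbedding f

theorem prekopa_leindler {u v w : E → ℝ} (hu : PosExpDecay u) (hv : PosExpDecay v)
    (hw : PosExpDecay w) {a b : ℝ} (ha : 0 < a) (hb : 0 < b) (hab : a + b = 1)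
    (h : ∀ x y, u x ^ a * v y ^ b ≤ w (a • x + b • y)) :
    (∫ x, u x) ^ a * (∫ x, v x) ^ b ≤ ∫ x, w x := by
  simpa only [integral_comp_ofCoord] using prekopa_leindler_pi hu.comp_ofCoord hv.comp_ofCoord
    hw.comp_ofCoord ha hb hab fun x y => by simpa using h (ofCoord x) (ofCoord y)

lemma PosExpDecay.integral_log_add_gaussPot {f : E → ℝ} (hf : PosExpDecay f)
    (hf1 : ∫ x, f x = 1) :
    ∫ x, (Real.log (f x) + gaussPot x) ∂densityMeasure f = ∫ x, Real.log (f x) ∂densityMeasure f +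
      (∫ x, ‖x‖ ^ 2 ∂densityMeasure f) / 2 + Module.finrank ℝ E / 2 * Real.log (2 * Real.pi) := by
  have : IsProbabilityMeasure (densityMeasure f) :=
    ⟨by rw [hf.densityMeasure_univ, hf1, ENNReal.ofReal_one]⟩
  have hsq := hf.integrable_norm_sq_densityMeasure.div_const 2
  simp only [gaussPot]
  rw [integral_add hf.integrable_log_densityMeasure (by exact hsq.add (integrable_const _)),
    integral_add hsq (integrable_const _), integral_div, integral_const, probReal_univ, one_smul,
    add_assoc]

lemma integral_id_densityMeasure_eq_zero {f : E → ℝ} (hf : Measurable f)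
    (heven : ∀ x, f (-x) = f x) : ∫ x, x ∂densityMeasure f = 0 := by
  have hneg := measurePreserving_densityMeasure hf (Measure.measurePreserving_neg volume)
  simp only [heven] at hneg
  have h := integral_comp_of_measurePreserving (u := id) hneg (by fun_prop)
  have : IsAddTorsionFree E := .of_isTorsionFree ℝ E
  have h' : -∫ x, x ∂densityMeasure f = ∫ x, x ∂densityMeasure f := by rwa [← integral_neg]
  exact self_eq_neg.1 h'.symm

lemma exists_entropic_coupling {p q : E → ℝ} (hp : PosExpDecay p) (hq : PosExpDecay q)
    (hp1 : ∫ x, p x = 1) (hq1 : ∫ x, q x = 1) (hc : ∫ x, x ∂densityMeasure p = 0) :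
    ∃ ρ, IsCoupling ρ (densityMeasure p) (densityMeasure q) ∧
      -∫ x, Real.log (p x) ∂densityMeasure p - ∫ x, Real.log (q x) ∂densityMeasure q ≤
        Module.finrank ℝ E * Real.log (2 * Real.pi) + ∫ w, ⟪w.1, w.2⟫ ∂ρ := by
  have hcoord := measurePreserving_densityMeasure hp.cont.measurable measurePreserving_ofCoord
  have hc' : ∫ x, x ∂densityMeasure (fun x => p (ofCoord x)) = 0 := by
    have h := integral_comp_of_measurePreserving (u := id) hcoord (by fun_prop)
    rw [← ofCoord.map_eq_zero_iff, ← ofCoord.integral_comp_comm]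
    exact h.trans hc
  refine exists_coupling_of_comp hp.cont.measurable hq.cont.measurable measurePreserving_ofCoord
    measurePreserving_ofCoord (u := fun w => ⟪w.1, w.2⟫) (by fun_prop) ?_
  simpa [inner_ofCoord] using hasEntropicCouplings _ _ _ hp.comp_ofCoord hq.comp_ofCoord 1 one_pos
    (by rw [hp.comp_ofCoord.densityMeasure_univ, integral_comp_ofCoord, hp1])
    (by rw [hq.comp_ofCoord.densityMeasure_univ, integral_comp_ofCoord, hq1]) hc'

theorem exists_gaussian_coupling {p q : E → ℝ} (hp : PosExpDecay p) (hq : PosExpDecay q)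
    (hp1 : ∫ x, p x = 1) (hq1 : ∫ x, q x = 1) (hc : ∫ x, x ∂densityMeasure p = 0) :
    ∃ ρ, IsCoupling ρ (densityMeasure p) (densityMeasure q) ∧
      ∫ w, ‖w.1 - w.2‖ ^ 2 ∂ρ ≤
        2 * ∫ x, (Real.log (p x) + gaussPot x) ∂densityMeasure p +
          2 * ∫ x, (Real.log (q x) + gaussPot x) ∂densityMeasure q := by
  obtain ⟨ρ, hρ, hle⟩ := exists_entropic_coupling hp hq hp1 hq1 hc
  refine ⟨ρ, hρ, ?_⟩
  rw [hρ.integral_norm_sub_sq hp.integrable_norm_sq_densityMeasure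
      hq.integrable_norm_sq_densityMeasure, hp.integral_log_add_gaussPot hp1,
    hq.integral_log_add_gaussPot hq1]
  linarith

end InnerProductSpace

section StrongConvexity

variable {E : Type*} [NormedAddCommGroup E]

lemma strongConvexOn_univ_of_pos [NormedSpace ℝ E] {h : E → ℝ} {m : ℝ}
    (H : ∀ x y, ∀ a b : ℝ, 0 < a → 0 < b → a + b = 1 →
      h (a • x + b • y) ≤ a * h x + b * h y - a * b * (m / 2 * ‖x - y‖ ^ 2)) :
    StrongConvexOn univ m h := by
  refine ⟨convex_univ, fun x _ y _ a b ha hb hab => ?_⟩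
  rcases ha.eq_or_lt with rfl | ha
  · obtain rfl : b = 1 := by linarith
    simp
  rcases hb.eq_or_lt with rfl | hb
  · obtain rfl : a = 1 := by linarith
    simp
  exact H x y a b ha hb hab

variable [InnerProductSpace ℝ E]

lemma strongConvexOn_norm_sq (m : ℝ) : StrongConvexOn univ m fun x : E => m / 2 * ‖x‖ ^ 2 := by
  simpa [strongConvexOn_iff_convex] using convexOn_const (0 : ℝ) (convex_univ (𝕜 := ℝ) (E := E))

lemma inner_convexCombo (x y x' y' : E) {a b : ℝ} (hab : a + b = 1) :
    a * ⟪x, y⟫ + b * ⟪x', y'⟫ = ⟪a • x + b • x', a • y + b • y'⟫ + a * b * ⟪x - x', y - y'⟫ := by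
  simp only [inner_add_left, inner_add_right, inner_sub_left, inner_sub_right,
    real_inner_smul_left, real_inner_smul_right]
  obtain rfl : b = 1 - a := by linarith
  ring

lemma mul_inner_le (s : ℝ) {β : ℝ} (hβ : 0 < β) (x y : E) :
    s * ⟪x, y⟫ ≤ s ^ 2 / (2 * β) * ‖x‖ ^ 2 + β / 2 * ‖y‖ ^ 2 := by
  have hsq : 0 ≤ ‖s • x - β • y‖ ^ 2 / (2 * β) := by positivity
  have hexpand : ‖s • x - β • y‖ ^ 2 / (2 * β) =
      s ^ 2 / (2 * β) * ‖x‖ ^ 2 + β / 2 * ‖y‖ ^ 2 - s * ⟪x, y⟫ := by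
    rw [norm_sub_sq_real, norm_smul, norm_smul, mul_pow, mul_pow, Real.norm_eq_abs,
      Real.norm_eq_abs, sq_abs, sq_abs, real_inner_smul_left, real_inner_smul_right]
    field_simp
    ring
  linarith

lemma combo_inner_sub_le_of_strongConvexOn {Ψ : E → ℝ} {κ : ℝ} (hκ : 0 < κ)
    (hΨ : StrongConvexOn univ κ Ψ) (s : ℝ) (x₀ x₁ y₀ y₁ : E) {a b : ℝ} (ha : 0 ≤ a) (hb : 0 ≤ b)
    (hab : a + b = 1) :
    a * (s * ⟪x₀, y₀⟫ - Ψ y₀) + b * (s * ⟪x₁, y₁⟫ - Ψ y₁) ≤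
      s * ⟪a • x₀ + b • x₁, a • y₀ + b • y₁⟫ - Ψ (a • y₀ + b • y₁) +
        a * b * (s ^ 2 / (2 * κ) * ‖x₀ - x₁‖ ^ 2) := by
  have hcombo := congrArg (s * ·) (inner_convexCombo x₀ y₀ x₁ y₁ hab)
  have hconv := hΨ.2 (mem_univ y₀) (mem_univ y₁) ha hb hab
  have hyoung := mul_le_mul_of_nonneg_left (mul_inner_le s hκ (x₀ - x₁) (y₀ - y₁))
    (mul_nonneg ha hb)
  simp only [smul_eq_mul] at hcombo hconv
  linarith

-- The shift `(s / c) • (y₀ - y₁)` is the optimal one.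
lemma inner_sub_le_combo_of_strongConcaveOn {Ψ : E → ℝ} {c : ℝ} (hc : 0 < c)
    (hΨ : StrongConcaveOn univ (-c) Ψ) (s : ℝ) (y₀ y₁ x : E) {a b : ℝ} (ha : 0 ≤ a) (hb : 0 ≤ b)
    (hab : a + b = 1) :
    s * ⟪a • y₀ + b • y₁, x⟫ - Ψ x ≤
      a * (s * ⟪y₀, x + b • (s / c) • (y₀ - y₁)⟫ - Ψ (x + b • (s / c) • (y₀ - y₁))) +
        b * (s * ⟪y₁, x + (-a) • (s / c) • (y₀ - y₁)⟫ - Ψ (x + (-a) • (s / c) • (y₀ - y₁))) -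
        a * b * (s ^ 2 / c / 2 * ‖y₀ - y₁‖ ^ 2) := by
  set r := (s / c) • (y₀ - y₁) with hr
  have hmid : a • (x + b • r) + b • (x + (-a) • r) = x := by
    obtain rfl : b = 1 - a := by linarith
    module
  have hdiff : x + b • r - (x + (-a) • r) = r := by
    obtain rfl : b = 1 - a := by linarith
    module
  have hconc := hΨ.2 (mem_univ (x + b • r)) (mem_univ (x + (-a) • r)) ha hb hab
  have hinner : a * ⟪y₀, x + b • r⟫ + b * ⟪y₁, x + (-a) • r⟫ =
      ⟪a • y₀ + b • y₁, x⟫ + a * b * (s / c) * ‖y₀ - y₁‖ ^ 2 := by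
    rw [inner_convexCombo _ _ _ _ hab, hmid, hdiff, hr, real_inner_smul_right,
      real_inner_self_eq_norm_sq]
    ring
  have hnorm : a * b * (-c / 2 * ‖r‖ ^ 2) = -(a * b * (s ^ 2 / c / 2 * ‖y₀ - y₁‖ ^ 2)) := by
    rw [hr, norm_smul, mul_pow, Real.norm_eq_abs, sq_abs]
    field_simp
  have hscaled : s * (a * ⟪y₀, x + b • r⟫ + b * ⟪y₁, x + (-a) • r⟫) =
      s * ⟪a • y₀ + b • y₁, x⟫ + 2 * (a * b * (s ^ 2 / c / 2 * ‖y₀ - y₁‖ ^ 2)) := by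
    rw [hinner]; ring
  rw [hmid, hdiff, hnorm] at hconc
  simp only [smul_eq_mul] at hconc
  linarith

end StrongConvexity

section Potential

/-- A continuous function with at least quadratic growth. -/
structure QuadGrowth {E : Type*} [NormedAddCommGroup E] (Ψ : E → ℝ) : Prop where
  cont : Continuous Ψ
  growth : ∃ β C : ℝ, 0 < β ∧ ∀ y, β * ‖y‖ ^ 2 - C ≤ Ψ y

/-- A continuous even function which is minimal at the origin and has at most quadratic growth. -/
structure EvenPot {E : Type*} [NormedAddCommGroup E] (h : E → ℝ) : Prop where
  cont : Continuous h
  even : h.Even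
  zero_le : ∀ x, h 0 ≤ h x
  upper : ∃ C : ℝ, ∀ x, h x ≤ C * (1 + ‖x‖ ^ 2)

section NormedGroup

variable {E : Type*} [NormedAddCommGroup E]

/-- The Gibbs measure `exp (-V) dx` of a potential `V`, not normalised. -/
noncomputable abbrev gibbsMeasure [MeasureSpace E] (V : E → ℝ) : Measure E :=
  densityMeasure fun y => Real.exp (-V y)

lemma QuadGrowth.posExpDecay {Ψ : E → ℝ} (h : QuadGrowth Ψ) :
    PosExpDecay fun y => Real.exp (-Ψ y) := by
  obtain ⟨β, C, hβ, hb⟩ := h.growth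
  refine ⟨Real.continuous_exp.comp h.cont.neg, fun y => Real.exp_pos _, Real.exp (C + β), β, hβ,
    fun y => ?_⟩
  rw [← Real.exp_add, Real.exp_le_exp]
  nlinarith [hb y, sq_nonneg (‖y‖ - 1), norm_nonneg y]

lemma QuadGrowth.sub_mul_norm {Ψ : E → ℝ} (h : QuadGrowth Ψ) (M : ℝ) :
    QuadGrowth fun y => Ψ y - M * ‖y‖ := by
  obtain ⟨β, C, hβ, hb⟩ := h.growth
  have := h.cont
  refine ⟨by fun_prop, β / 2, C + M ^ 2 / (2 * β), by positivity, fun y => ?_⟩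
  have hsq : 0 ≤ (β * ‖y‖ - M) ^ 2 / (2 * β) := by positivity
  have hexpand : (β * ‖y‖ - M) ^ 2 / (2 * β) =
      β / 2 * ‖y‖ ^ 2 - M * ‖y‖ + M ^ 2 / (2 * β) := by field_simp; ring
  linarith [hb y]

lemma EvenPot.quadGrowth_add {b R : E → ℝ} (hb : EvenPot b) (hR : QuadGrowth R) :
    QuadGrowth (b + R) := by
  obtain ⟨β, C, hβ, h⟩ := hR.growth
  exact ⟨hb.cont.add hR.cont, β, C - b 0, hβ, fun y => by
    rw [Pi.add_apply]; linarith [h y, hb.zero_le y]⟩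

lemma EvenPot.exists_abs_le {h : E → ℝ} (hh : EvenPot h) :
    ∃ C : ℝ, ∀ x, |h x| ≤ C * (1 + ‖x‖ ^ 2) := by
  obtain ⟨C, hC⟩ := hh.upper
  refine ⟨|C| + |h 0|, fun x => abs_le.2 ⟨?_, ?_⟩⟩
  · have : 0 ≤ |C| * (1 + ‖x‖ ^ 2) + |h 0| * ‖x‖ ^ 2 := by positivity
    linarith [neg_abs_le (h 0), hh.zero_le x]
  · have hC' : C * (1 + ‖x‖ ^ 2) ≤ |C| * (1 + ‖x‖ ^ 2) := by gcongr; exact le_abs_self C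
    have : 0 ≤ |h 0| * (1 + ‖x‖ ^ 2) := by positivity
    linarith [hC x]

lemma evenPot_norm_sq {m : ℝ} (hm : 0 ≤ m) : EvenPot fun x : E => m / 2 * ‖x‖ ^ 2 where
  cont := by fun_prop
  even x := by simp
  zero_le x := by simpa using by positivity
  upper := ⟨m / 2, fun x => by linarith⟩

lemma EvenPot.integrable [MeasurableSpace E] [BorelSpace E] {b : E → ℝ} (hb : EvenPot b)
    {μ : Measure E} [IsFiniteMeasure μ] (hμ : Integrable (fun y => ‖y‖ ^ 2) μ) :
    Integrable b μ := by
  obtain ⟨C, hC⟩ := hb.exists_abs_le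
  exact (((integrable_const 1).add hμ).const_mul C).mono' hb.cont.aestronglyMeasurable
    (ae_of_all _ hC)

end NormedGroup

section LogLaplace

variable {E : Type*} [NormedAddCommGroup E] [InnerProductSpace ℝ E] {Ψ : E → ℝ}

namespace QuadGrowth

lemma sub_inner (h : QuadGrowth Ψ) (s : ℝ) (x : E) : QuadGrowth fun y => Ψ y - s * ⟪x, y⟫ := by
  obtain ⟨β, C, hβ, hb⟩ := h.growth
  have := h.cont
  refine ⟨by fun_prop, β / 2, C + s ^ 2 / (2 * β) * ‖x‖ ^ 2, by positivity, fun y => ?_⟩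
  linarith [hb y, mul_inner_le s hβ x y]

lemma posExpDecay_tilt (h : QuadGrowth Ψ) (s : ℝ) (x : E) :
    PosExpDecay fun y => Real.exp (s * ⟪x, y⟫ - Ψ y) := by
  simpa only [neg_sub] using (h.sub_inner s x).posExpDecay

lemma exists_joint_posExpDecay (h : QuadGrowth Ψ) (s : ℝ) : ∃ M : ℝ,
    PosExpDecay fun p : E × E => Real.exp (s * ⟪p.2, p.1⟫ - Ψ p.1 - M * ‖p.2‖ ^ 2) := by
  obtain ⟨β, C, hβ, hb⟩ := h.growth
  have := h.cont
  refine ⟨s ^ 2 / (2 * β) + β / 2, ?_⟩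
  have hq : QuadGrowth fun p : E × E =>
      -(s * ⟪p.2, p.1⟫ - Ψ p.1 - (s ^ 2 / (2 * β) + β / 2) * ‖p.2‖ ^ 2) := by
    refine ⟨by fun_prop, β / 2, C, by positivity, fun p => ?_⟩
    have hnorm : ‖p‖ ^ 2 ≤ ‖p.1‖ ^ 2 + ‖p.2‖ ^ 2 := by
      rw [Prod.norm_def]
      rcases max_cases ‖p.1‖ ‖p.2‖ with h | h <;> rw [h.1] <;> simp
    nlinarith [hb p.1, mul_inner_le s hβ p.2 p.1]
  simpa only [neg_neg] using hq.posExpDecay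

end QuadGrowth

variable [FiniteDimensional ℝ E] [MeasurableSpace E] [BorelSpace E]

/-- The logarithmic Laplace transform `x ↦ log ∫ exp (s ⟨x, y⟩ - Ψ y) dy`. -/
noncomputable def logLap (s : ℝ) (Ψ : E → ℝ) (x : E) : ℝ :=
  Real.log (∫ y, Real.exp (s * ⟪x, y⟫ - Ψ y))

namespace QuadGrowth

lemma integrable_tilt (h : QuadGrowth Ψ) (s : ℝ) (x : E) :
    Integrable fun y => Real.exp (s * ⟪x, y⟫ - Ψ y) :=
  (h.posExpDecay_tilt s x).integrable volume

lemma exp_logLap (h : QuadGrowth Ψ) (s : ℝ) (x : E) :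
    Real.exp (logLap s Ψ x) = ∫ y, Real.exp (s * ⟪x, y⟫ - Ψ y) :=
  Real.exp_log (integral_exp_pos (h.integrable_tilt s x))

lemma ofReal_exp_logLap_sub (h : QuadGrowth Ψ) (s : ℝ) (x : E) (c : ℝ) :
    ENNReal.ofReal (Real.exp (logLap s Ψ x - c)) =
      ∫⁻ y, ENNReal.ofReal (Real.exp (s * ⟪x, y⟫ - Ψ y - c)) := by
  simp only [Real.exp_sub _ c]
  rw [← ofReal_integral_eq_lintegral_ofReal ((h.integrable_tilt s x).div_const _)
    (ae_of_all _ fun y => by positivity), integral_div, h.exp_logLap]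

lemma lintegral_exp_logLap_swap {Φ : E → ℝ} (hΨ : QuadGrowth Ψ) (hΦ : QuadGrowth Φ) (s : ℝ) :
    ∫⁻ x, ENNReal.ofReal (Real.exp (logLap s Ψ x - Φ x)) =
      ∫⁻ y, ENNReal.ofReal (Real.exp (logLap s Φ y - Ψ y)) := by
  have hΨm := hΨ.cont.measurable
  have hΦm := hΦ.cont.measurable
  simp only [hΨ.ofReal_exp_logLap_sub, hΦ.ofReal_exp_logLap_sub]
  rw [lintegral_lintegral_swap (by fun_prop)]
  refine lintegral_congr fun y => lintegral_congr fun x => ?_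
  rw [real_inner_comm, sub_right_comm]

lemma continuous_logLap (h : QuadGrowth Ψ) (s : ℝ) : Continuous (logLap s Ψ) := by
  obtain ⟨M, hM⟩ := h.exists_joint_posExpDecay s
  have hmarg := hM.marginal volume (NeZero.ne (volume univ : ℝ≥0∞))
  have hlog : ∀ x, logLap s Ψ x =
      Real.log (∫ t in univ, Real.exp (s * ⟪x, t⟫ - Ψ t - M * ‖x‖ ^ 2)) + M * ‖x‖ ^ 2 := fun x => by
    simp only [Real.exp_sub _ (M * ‖x‖ ^ 2)]
    rw [setIntegral_univ, integral_div, ← h.exp_logLap, ← Real.exp_sub, Real.log_exp,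
      sub_add_cancel]
  rw [funext hlog]
  exact (hmarg.cont.log fun x => (hmarg.pos x).ne').add (by fun_prop)

lemma even_logLap (he : Ψ.Even) (s : ℝ) : (logLap s Ψ).Even := fun x => by
  rw [logLap, ← integral_neg_eq_self (fun y => Real.exp (s * ⟪-x, y⟫ - Ψ y)) volume]
  simp only [inner_neg_neg, he _, logLap]

lemma logLap_zero_le (h : QuadGrowth Ψ) (he : Ψ.Even) (s : ℝ) (x : E) :
    logLap s Ψ 0 ≤ logLap s Ψ x := by
  have hcosh : ∀ y, 2 * Real.exp (s * ⟪0, y⟫ - Ψ y) ≤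
      Real.exp (s * ⟪x, y⟫ - Ψ y) + Real.exp (s * ⟪-x, y⟫ - Ψ y) := fun y => by
    have hone := mul_le_mul_of_nonneg_right (Real.one_le_cosh (s * ⟪x, y⟫))
      (Real.exp_pos (-Ψ y)).le
    rw [Real.cosh_eq] at hone
    simp only [inner_zero_left, inner_neg_left, mul_zero, mul_neg, sub_eq_add_neg, Real.exp_add,
      Real.exp_zero]
    linarith
  have hint := integral_mono ((h.integrable_tilt s 0).const_mul 2)
    ((h.integrable_tilt s x).add (h.integrable_tilt s (-x))) hcosh
  rw [integral_const_mul, Pi.add_def, integral_add (h.integrable_tilt s x)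
    (h.integrable_tilt s (-x)), ← h.exp_logLap, ← h.exp_logLap, ← h.exp_logLap,
    even_logLap he] at hint
  exact Real.exp_le_exp.1 (by linarith)

lemma exists_logLap_le (h : QuadGrowth Ψ) (s : ℝ) :
    ∃ C : ℝ, ∀ x, logLap s Ψ x ≤ C * (1 + ‖x‖ ^ 2) := by
  obtain ⟨β, C, hβ, hb⟩ := h.growth
  have hQ : QuadGrowth fun y : E => β / 2 * ‖y‖ ^ 2 - C :=
    ⟨by fun_prop, β / 2, C, by positivity, fun y => le_rfl⟩
  set D := ∫ y : E, Real.exp (-(β / 2 * ‖y‖ ^ 2 - C))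
  have hD : 0 < D := integral_exp_pos (hQ.posExpDecay.integrable volume)
  refine ⟨s ^ 2 / (2 * β) + |Real.log D|, fun x => ?_⟩
  have hle : Real.exp (logLap s Ψ x) ≤ Real.exp (s ^ 2 / (2 * β) * ‖x‖ ^ 2) * D := by
    rw [h.exp_logLap, ← integral_const_mul]
    refine integral_mono (h.integrable_tilt s x)
      ((hQ.posExpDecay.integrable volume).const_mul _) fun y => ?_
    simp only [← Real.exp_add, Real.exp_le_exp]
    linarith [hb y, mul_inner_le s hβ x y]
  rw [← Real.exp_log hD, ← Real.exp_add, Real.exp_le_exp] at hle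
  have : 0 ≤ s ^ 2 / (2 * β) + |Real.log D| * ‖x‖ ^ 2 := by positivity
  linarith [le_abs_self (Real.log D)]

lemma evenPot_logLap (h : QuadGrowth Ψ) (he : Ψ.Even) (s : ℝ) : EvenPot (logLap s Ψ) :=
  ⟨h.continuous_logLap s, even_logLap he s, h.logLap_zero_le he s, h.exists_logLap_le s⟩

theorem strongConcaveOn_logLap {κ : ℝ} (hκ : 0 < κ) (h : QuadGrowth Ψ)
    (hΨ : StrongConvexOn univ κ Ψ) (s : ℝ) :
    StrongConcaveOn univ (-(s ^ 2 / κ)) (logLap s Ψ) := by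
  rw [← neg_neg (logLap s Ψ)]
  refine (strongConvexOn_univ_of_pos fun x₀ x₁ a b ha hb hab => ?_).neg
  set δ := a * b * (s ^ 2 / (2 * κ) * ‖x₀ - x₁‖ ^ 2) with hδ
  have hint : ∫ y, Real.exp (s * ⟪a • x₀ + b • x₁, y⟫ - Ψ y + δ) =
      Real.exp (logLap s Ψ (a • x₀ + b • x₁) + δ) := by
    simp only [Real.exp_add _ δ]
    rw [integral_mul_const, h.exp_logLap]
  have hdecay : PosExpDecay fun y => Real.exp (s * ⟪a • x₀ + b • x₁, y⟫ - Ψ y + δ) := by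
    have hΨc := h.cont
    obtain ⟨_, _, C, c, hc0, hdec⟩ := h.posExpDecay_tilt s (a • x₀ + b • x₁)
    refine ⟨by fun_prop, fun y => Real.exp_pos _, C * Real.exp δ, c, hc0, fun y => ?_⟩
    rw [Real.exp_add, mul_right_comm]
    gcongr
    exact hdec y
  have hPL := prekopa_leindler (h.posExpDecay_tilt s x₀) (h.posExpDecay_tilt s x₁) hdecay ha hb hab
    fun y₀ y₁ => by
      rw [← Real.exp_mul, ← Real.exp_mul, ← Real.exp_add, Real.exp_le_exp]
      linarith [combo_inner_sub_le_of_strongConvexOn hκ hΨ s x₀ x₁ y₀ y₁ ha.le hb.le hab]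
  rw [hint, ← h.exp_logLap, ← h.exp_logLap, ← Real.exp_mul, ← Real.exp_mul, ← Real.exp_add,
    Real.exp_le_exp] at hPL
  have hδ' : a * b * (-(s ^ 2 / κ) / 2 * ‖x₀ - x₁‖ ^ 2) = -δ := by rw [hδ]; field_simp
  simp only [Pi.neg_apply, hδ']
  linarith

end QuadGrowth

lemma log_integral_exp_le_combo {X : Type*} [MeasurableSpace X] {μ : Measure X} [NeZero μ]
    {F G H : X → ℝ} (hF : Integrable (fun x => Real.exp (F x)) μ)
    (hG : Integrable (fun x => Real.exp (G x)) μ) (hH : Integrable (fun x => Real.exp (H x)) μ)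
    {a b δ : ℝ} (ha : 0 ≤ a) (hb : 0 ≤ b) (hab : a + b = 1)
    (h : ∀ x, H x ≤ a * F x + b * G x - δ) :
    Real.log (∫ x, Real.exp (H x) ∂μ) ≤
      a * Real.log (∫ x, Real.exp (F x) ∂μ) + b * Real.log (∫ x, Real.exp (G x) ∂μ) - δ := by
  have hF0 := integral_exp_pos hF
  have hG0 := integral_exp_pos hG
  set l := Real.log (∫ x, Real.exp (F x) ∂μ) with hl
  set m := Real.log (∫ x, Real.exp (G x) ∂μ) with hm
  have hpt : ∀ x, Real.exp (H x) ≤ Real.exp (a * l + b * m - δ) *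
      (a * (Real.exp (F x) * Real.exp (-l)) + b * (Real.exp (G x) * Real.exp (-m))) := fun x => by
    have hconv := convexOn_exp.2 (mem_univ (F x + -l)) (mem_univ (G x + -m)) ha hb hab
    simp only [smul_eq_mul, Real.exp_add] at hconv
    refine le_trans ?_ (mul_le_mul_of_nonneg_left hconv (Real.exp_nonneg _))
    rw [← Real.exp_add, ← Real.exp_add, Real.exp_le_exp]
    linarith [h x]
  have hF' := (hF.mul_const (Real.exp (-l))).const_mul a
  have hG' := (hG.mul_const (Real.exp (-m))).const_mul b
  have hint := integral_mono hH ((hF'.add hG').const_mul _) hpt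
  simp only [Pi.add_apply] at hint
  rw [integral_const_mul, integral_add hF' hG', integral_const_mul, integral_const_mul,
    integral_mul_const, integral_mul_const, Real.exp_neg, hl, Real.exp_log hF0, ← hl,
    mul_inv_cancel₀ hF0.ne', Real.exp_neg, hm, Real.exp_log hG0, ← hm, mul_inv_cancel₀ hG0.ne',
    mul_one, mul_one, hab, mul_one] at hint
  exact (Real.log_le_iff_le_exp (integral_exp_pos hH)).2 hint

theorem QuadGrowth.strongConvexOn_logLap {c : ℝ} (hc : 0 < c) (h : QuadGrowth Ψ)
    (hΨ : StrongConcaveOn univ (-c) Ψ) (s : ℝ) : StrongConvexOn univ (s ^ 2 / c) (logLap s Ψ) := by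
  refine ⟨convex_univ, fun y₀ _ y₁ _ a b ha hb hab => ?_⟩
  have hle := log_integral_exp_le_combo
    ((h.integrable_tilt s y₀).comp_add_right (b • (s / c) • (y₀ - y₁)))
    ((h.integrable_tilt s y₁).comp_add_right ((-a) • (s / c) • (y₀ - y₁)))
    (h.integrable_tilt s (a • y₀ + b • y₁)) ha hb hab
    (inner_sub_le_combo_of_strongConcaveOn hc hΨ s y₀ y₁ · ha hb hab)
  rwa [integral_add_right_eq_self fun x => Real.exp (s * ⟪y₀, x⟫ - Ψ x),
    integral_add_right_eq_self fun x => Real.exp (s * ⟪y₁, x⟫ - Ψ x)] at hle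

end LogLaplace

end Potential

section Sinkhorn

variable {E : Type*} [NormedAddCommGroup E] [InnerProductSpace ℝ E]

lemma quadGrowth_gaussPot : QuadGrowth (gaussPot (E := E)) :=
  ⟨continuous_gaussPot, 1 / 2, |Module.finrank ℝ E / 2 * Real.log (2 * Real.pi)|, by norm_num,
    fun y => by
      rw [gaussPot]
      linarith [neg_abs_le (Module.finrank ℝ E / 2 * Real.log (2 * Real.pi))]⟩

lemma even_gaussPot : (gaussPot (E := E)).Even := fun x => by simp [gaussPot]

lemma strongConcaveOn_gaussPot : StrongConcaveOn univ (-1) (gaussPot (E := E)) := by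
  have hconst : (fun x : E => gaussPot x + -1 / 2 * ‖x‖ ^ 2) =
      fun _ => Module.finrank ℝ E / 2 * Real.log (2 * Real.pi) := by
    ext x
    rw [gaussPot]
    ring
  rw [strongConcaveOn_iff_convex, hconst]
  exact concaveOn_const _ convex_univ

variable [FiniteDimensional ℝ E] [MeasurableSpace E] [BorelSpace E]

lemma integral_exp_neg_gaussPot : ∫ x : E, Real.exp (-gaussPot x) = 1 := by
  have hsplit : ∀ x : E, Real.exp (-gaussPot x) = Real.exp (-(1 / 2) * ‖x‖ ^ 2) *
      Real.exp (-(Module.finrank ℝ E / 2 * Real.log (2 * Real.pi))) := fun x => by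
    rw [← Real.exp_add, gaussPot]; ring_nf
  simp only [hsplit]
  rw [integral_mul_const, GaussianFourier.integral_rexp_neg_mul_sq_norm (by norm_num),
    Real.rpow_def_of_pos (by positivity), ← Real.exp_add,
    show Real.pi / (1 / 2) = 2 * Real.pi by ring, ← Real.exp_zero]
  ring_nf

variable (E) in
/-- The standard Gaussian measure of a finite-dimensional inner product space. -/
noncomputable def gaussMeasure : Measure E := gibbsMeasure gaussPot

instance : IsProbabilityMeasure (gaussMeasure E) :=
  ⟨by rw [gaussMeasure, quadGrowth_gaussPot.posExpDecay.densityMeasure_univ,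
    integral_exp_neg_gaussPot, ENNReal.ofReal_one]⟩

lemma integrable_norm_sq_gaussMeasure : Integrable (fun x => ‖x‖ ^ 2) (gaussMeasure E) :=
  quadGrowth_gaussPot.posExpDecay.integrable_norm_sq_densityMeasure

lemma lintegral_exp_gaussMeasure {u : E → ℝ} (hu : Measurable u) :
    ∫⁻ x, ENNReal.ofReal (Real.exp (u x)) ∂gaussMeasure E =
      ∫⁻ x, ENNReal.ofReal (Real.exp (u x - gaussPot x)) := by
  have hG := (continuous_gaussPot (E := E)).measurable
  rw [gaussMeasure, lintegral_densityMeasure (by fun_prop) (by fun_prop)]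
  refine lintegral_congr fun x => ?_
  rw [← ENNReal.ofReal_mul (Real.exp_nonneg _), ← Real.exp_add, ← sub_eq_add_neg]

/-- Half of a Sinkhorn iteration: the Schrödinger potential on one side determined by the potential
`b` on the other side, whose reference measure is `exp (-V)`. -/
noncomputable def sinkStep (s : ℝ) (V b : E → ℝ) : E → ℝ := logLap s (b + V)

/-- A full Sinkhorn iteration for the entropic transport problem between the standard Gaussian
measure and `exp (-V)`, acting on potentials on the side of `V`. -/
noncomputable def sinkhorn (s : ℝ) (V b : E → ℝ) : E → ℝ := sinkStep s gaussPot (sinkStep s V b)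

variable {V b : E → ℝ} {α s : ℝ}

lemma EvenPot.evenPot_sinkStep (hb : EvenPot b) (hV : QuadGrowth V) (he : V.Even) (s : ℝ) :
    EvenPot (sinkStep s V b) :=
  (hb.quadGrowth_add hV).evenPot_logLap (hb.even.add he) s

lemma EvenPot.evenPot_sinkhorn (hb : EvenPot b) (hV : QuadGrowth V) (he : V.Even) (s : ℝ) :
    EvenPot (sinkhorn s V b) :=
  (hb.evenPot_sinkStep hV he s).evenPot_sinkStep quadGrowth_gaussPot even_gaussPot s

lemma strongConvexOn_sinkhorn_add (hb : EvenPot b) (hV : QuadGrowth V) (he : V.Even) (hα : 0 < α)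
    (hconv : StrongConvexOn univ α V) (hs : 0 < s)
    (hbV : StrongConvexOn univ (s * √α) (b + V)) :
    StrongConvexOn univ (s * √α) (sinkhorn s V b + V) := by
  have hsqrt : 0 < √α := Real.sqrt_pos.2 hα
  have hconcave : StrongConcaveOn univ (-(s ^ 2 / (s * √α) + 1)) (sinkStep s V b + gaussPot) := by
    convert ((hb.quadGrowth_add hV).strongConcaveOn_logLap (by positivity) hbV s).add
      strongConcaveOn_gaussPot using 1
    rw [StrongConcaveOn]
    congr! 1
    ext r
    simp only [Pi.add_apply]
    ring
  have hconvex : StrongConvexOn univ (s ^ 2 / (s ^ 2 / (s * √α) + 1) + α) (sinkhorn s V b + V) := by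
    convert (((hb.evenPot_sinkStep hV he s).quadGrowth_add
      quadGrowth_gaussPot).strongConvexOn_logLap (by positivity) hconcave s).add hconv using 1
    rw [StrongConvexOn]
    congr! 1
    ext r
    simp only [Pi.add_apply]
    ring
  refine hconvex.mono ?_
  have hsq : √α * √α = α := Real.mul_self_sqrt hα.le
  rw [show s ^ 2 / (s ^ 2 / (s * √α) + 1) = s ^ 2 * √α / (s + √α) by field_simp,
    ← sub_le_iff_le_add, le_div_iff₀ (by positivity)]
  nlinarith [mul_pos hs hsqrt, mul_pos hα hsqrt]

lemma integral_sinkStep_sinkhorn_le (hb : EvenPot b) (hV : QuadGrowth V) (he : V.Even)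
    (hV1 : ∫ y, Real.exp (-V y) = 1) (s : ℝ) :
    ∫ x, sinkStep s V (sinkhorn s V b) x ∂gaussMeasure E ≤
      ∫ x, sinkStep s V b x ∂gaussMeasure E := by
  have hb' := hb.evenPot_sinkhorn hV he s
  have ha := hb.evenPot_sinkStep hV he s
  have ha' := hb'.evenPot_sinkStep hV he s
  have hai := ha.integrable integrable_norm_sq_gaussMeasure
  have hai' := ha'.integrable integrable_norm_sq_gaussMeasure
  have hswap := (hb'.quadGrowth_add hV).lintegral_exp_logLap_swap
    (ha.quadGrowth_add quadGrowth_gaussPot) s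
  have hneg : ∀ y, logLap s (sinkStep s V b + gaussPot) y - (sinkhorn s V b + V) y = -V y :=
    fun y => sub_add_cancel_left _ _
  have hmass : ∫⁻ x, ENNReal.ofReal
      (Real.exp (sinkStep s V (sinkhorn s V b) x - sinkStep s V b x)) ∂gaussMeasure E = 1 := by
    have ham := ha.cont.measurable
    have ham' := ha'.cont.measurable
    rw [lintegral_exp_gaussMeasure (by fun_prop)]
    simp only [sub_sub]
    refine hswap.trans ?_
    simp only [hneg]
    rw [← ofReal_integral_eq_lintegral_ofReal (hV.posExpDecay.integrable volume)
      (ae_of_all _ fun y => (Real.exp_pos _).le), hV1, ENNReal.ofReal_one]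
  have hle := integral_nonpos_of_lintegral_exp_le (hai'.sub hai) (by
    rw [measure_univ]; exact hmass.le)
  simp only [Pi.sub_apply] at hle
  rwa [integral_sub hai' hai, sub_nonpos] at hle

lemma neg_integral_le_sinkStep_gaussPot {a : E → ℝ} (ha : EvenPot a) (s : ℝ) (y : E) :
    -∫ x, a x ∂gaussMeasure E ≤ sinkStep s gaussPot a y := by
  have hai := ha.integrable integrable_norm_sq_gaussMeasure
  have hq := ha.quadGrowth_add quadGrowth_gaussPot
  set c := sinkStep s gaussPot a 0
  have hmass : ∫⁻ x, ENNReal.ofReal (Real.exp (-a x - c)) ∂gaussMeasure E = 1 := by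
    have hnorm := hq.ofReal_exp_logLap_sub s 0 c
    rw [show logLap s (a + gaussPot) 0 = c from rfl, sub_self, Real.exp_zero,
      ENNReal.ofReal_one] at hnorm
    have ham := ha.cont.measurable
    rw [lintegral_exp_gaussMeasure (by fun_prop), hnorm]
    refine lintegral_congr fun x => ?_
    rw [inner_zero_left, Pi.add_apply]
    ring_nf
  have hneg : Integrable (fun x => -a x) (gaussMeasure E) := hai.neg
  have hle := integral_nonpos_of_lintegral_exp_le (hneg.sub (integrable_const c)) (by
    rw [measure_univ]; exact hmass.le)
  simp only [Pi.sub_apply] at hle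
  rw [integral_sub hneg (integrable_const c), integral_neg, integral_const, probReal_univ,
    one_smul, sub_nonpos] at hle
  exact hle.trans ((ha.evenPot_sinkStep quadGrowth_gaussPot even_gaussPot s).zero_le y)

lemma exists_sub_succ_le {u : ℕ → ℝ} (hu : BddBelow (range u)) {ε : ℝ} (hε : 0 < ε) :
    ∃ k, u k - u (k + 1) ≤ ε := by
  obtain ⟨C, hC⟩ := hu
  by_contra! hcon
  have hdrop : ∀ k : ℕ, u k + k * ε ≤ u 0 := fun k => by
    induction k with
    | zero => simp
    | succ k ih => push_cast; linarith [hcon k]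
  obtain ⟨k, hk⟩ := exists_nat_gt ((u 0 - C) / ε)
  rw [div_lt_iff₀ hε] at hk
  linarith [hdrop k, hC (mem_range_self k)]

-- The Gaussian mean of the first potential decreases along the iteration, so by Jensen the second
-- potential stays bounded below: its integrals converge up to `ε`.
theorem exists_sinkhorn_potential (hV : QuadGrowth V) (he : V.Even)
    (hV1 : ∫ y, Real.exp (-V y) = 1) (hα : 0 < α) (hconv : StrongConvexOn univ α V) (hs : 0 < s)
    {μ : Measure E} [IsFiniteMeasure μ] (hμ : Integrable (fun y => ‖y‖ ^ 2) μ)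
    {ε : ℝ} (hε : 0 < ε) :
    ∃ b : E → ℝ, EvenPot b ∧ StrongConvexOn univ (s * √α) (b + V) ∧
      ∫ y, (b y - sinkhorn s V b y) ∂μ ≤ ε := by
  set b : ℕ → E → ℝ := fun k => (sinkhorn s V)^[k] fun y => s * √α / 2 * ‖y‖ ^ 2
  have hsucc : ∀ k, b (k + 1) = sinkhorn s V (b k) := fun k => Function.iterate_succ_apply' _ _ _
  have hb : ∀ k, EvenPot (b k) ∧ StrongConvexOn univ (s * √α) (b k + V) := fun k => by
    induction k with
    | zero =>
      refine ⟨evenPot_norm_sq (by positivity), ?_⟩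
      refine UniformConvexOn.mono (fun r => ?_) ((strongConvexOn_norm_sq (s * √α)).add hconv)
      simp only [Pi.add_apply, le_add_iff_nonneg_right]
      positivity
    | succ k ih =>
      rw [hsucc]
      exact ⟨ih.1.evenPot_sinkhorn hV he s,
        strongConvexOn_sinkhorn_add ih.1 hV he hα hconv hs ih.2⟩
  have hi : ∀ k, Integrable (b k) μ := fun k => (hb k).1.integrable hμ
  set C := ∫ x, sinkStep s V (b 0) x ∂gaussMeasure E
  have hC : ∀ k, ∫ x, sinkStep s V (b k) x ∂gaussMeasure E ≤ C := fun k => by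
    induction k with
    | zero => exact le_rfl
    | succ k ih =>
      rw [hsucc]
      exact (integral_sinkStep_sinkhorn_le (hb k).1 hV he hV1 s).trans ih
  have hlow : ∀ k y, -C ≤ b (k + 1) y := fun k y => by
    rw [hsucc]
    exact (neg_le_neg (hC k)).trans
      (neg_integral_le_sinkStep_gaussPot ((hb k).1.evenPot_sinkStep hV he s) s y)
  obtain ⟨k, hk⟩ := exists_sub_succ_le (u := fun k => ∫ y, b (k + 1) y ∂μ) ⟨∫ _, -C ∂μ, by
    rintro _ ⟨k, rfl⟩
    exact integral_mono (integrable_const _) (hi (k + 1)) (hlow k)⟩ hε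
  refine ⟨b (k + 1), (hb _).1, (hb _).2, ?_⟩
  rwa [← hsucc, integral_sub (hi _) (hi _)]

end Sinkhorn

section RelativeEntropy

variable {X : Type*} [MeasurableSpace X] {μ θ ρ : Measure X}

lemma integral_le_log_of_lintegral_exp_le [IsProbabilityMeasure ρ] {u : X → ℝ} {Z : ℝ}
    (hu : Integrable u ρ) (hZ : 0 < Z)
    (h : ∫⁻ x, ENNReal.ofReal (Real.exp (u x)) ∂ρ ≤ ENNReal.ofReal Z) :
    ∫ x, u x ∂ρ ≤ Real.log Z := by
  have hle := integral_nonpos_of_lintegral_exp_le (hu.sub (integrable_const (Real.log Z))) <|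
    calc ∫⁻ x, ENNReal.ofReal (Real.exp (u x - Real.log Z)) ∂ρ
        = ∫⁻ x, ENNReal.ofReal Z⁻¹ * ENNReal.ofReal (Real.exp (u x)) ∂ρ := by
          refine lintegral_congr fun x => ?_
          rw [← ENNReal.ofReal_mul (by positivity), Real.exp_sub, Real.exp_log hZ, div_eq_inv_mul]
      _ ≤ ENNReal.ofReal Z⁻¹ * ENNReal.ofReal Z := by
          rw [lintegral_const_mul' _ _ ENNReal.ofReal_ne_top]; gcongr
      _ = ρ univ := by
          rw [← ENNReal.ofReal_mul (by positivity), inv_mul_cancel₀ hZ.ne', ENNReal.ofReal_one,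
            measure_univ]
  simp only [Pi.sub_apply] at hle
  rwa [integral_sub hu (integrable_const _), integral_const, probReal_univ, one_smul,
    sub_nonpos] at hle

lemma lintegral_exp_neg_llr_mul_le [SigmaFinite μ] [SigmaFinite θ] (h : μ ≪ θ) {g : X → ℝ≥0∞}
    (hg : Measurable g) :
    ∫⁻ x, ENNReal.ofReal (Real.exp (-llr μ θ x)) * g x ∂μ ≤ ∫⁻ x, g x ∂θ :=
  calc ∫⁻ x, ENNReal.ofReal (Real.exp (-llr μ θ x)) * g x ∂μ
      = ∫⁻ x, θ.rnDeriv μ x * g x ∂μ := by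
        refine lintegral_congr_ae ?_
        filter_upwards [exp_neg_llr h, θ.rnDeriv_lt_top μ] with x hx hlt
        rw [hx, ENNReal.ofReal_toReal hlt.ne]
    _ = ∫⁻ x, g x ∂μ.withDensity (θ.rnDeriv μ) :=
        (lintegral_withDensity_eq_lintegral_mul _ (θ.measurable_rnDeriv μ) hg).symm
    _ ≤ ∫⁻ x, g x ∂θ := lintegral_mono' (θ.withDensity_rnDeriv_le μ) le_rfl

end RelativeEntropy

section Lift

variable {E : Type*} [NormedAddCommGroup E] [InnerProductSpace ℝ E]
variable [FiniteDimensional ℝ E] [MeasurableSpace E] [BorelSpace E]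

/-- The conditional density of `x` given `y` in the entropic plan for the cost `-s * ⟪x, y⟫` whose
potential in the variable `x` is `Φ`; the argument is the pair `(x, y)`. -/
noncomputable def liftKernel (s : ℝ) (Φ : E → ℝ) (p : E × E) : ℝ :=
  Real.exp (s * ⟪p.2, p.1⟫ - Φ p.1 - logLap s Φ p.2)

/-- The measure on pairs `(x, y)` with second marginal `μ` whose conditional densities are given by
`liftKernel s Φ`. -/
noncomputable def liftMeasure (s : ℝ) (Φ : E → ℝ) (μ : Measure E) : Measure (E × E) :=
  (volume.prod μ).withDensity fun p => ENNReal.ofReal (liftKernel s Φ p)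

/-- The density of the first marginal of `liftMeasure s Φ μ`. -/
noncomputable def liftDensity (s : ℝ) (Φ : E → ℝ) (μ : Measure E) (x : E) : ℝ :=
  ∫ y, liftKernel s Φ (x, y) ∂μ

variable {Φ : E → ℝ} {μ : Measure E} {s R : ℝ}

lemma liftKernel_pos (s : ℝ) (Φ : E → ℝ) (p : E × E) : 0 < liftKernel s Φ p := Real.exp_pos _

namespace QuadGrowth

lemma continuous_liftKernel (hΦ : QuadGrowth Φ) (s : ℝ) : Continuous (liftKernel s Φ) := by
  have hc := hΦ.cont
  have hc' := hΦ.continuous_logLap s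
  unfold liftKernel
  fun_prop

lemma lintegral_liftKernel (hΦ : QuadGrowth Φ) (s : ℝ) (y : E) :
    ∫⁻ x, ENNReal.ofReal (liftKernel s Φ (x, y)) = 1 := by
  simp only [liftKernel, ← hΦ.ofReal_exp_logLap_sub, sub_self, Real.exp_zero, ENNReal.ofReal_one]

lemma lintegral_liftMeasure [SFinite μ] (hΦ : QuadGrowth Φ) (s : ℝ) {h : E × E → ℝ≥0∞}
    (hh : Measurable h) : ∫⁻ p, h p ∂liftMeasure s Φ μ =
      ∫⁻ y, (∫⁻ x, ENNReal.ofReal (liftKernel s Φ (x, y)) * h (x, y)) ∂μ := by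
  have hk := (hΦ.continuous_liftKernel s).measurable
  rw [liftMeasure, lintegral_withDensity_eq_lintegral_mul _ (by fun_prop) hh,
    lintegral_prod_symm _ (by fun_prop)]
  rfl

lemma measurePreserving_snd_liftMeasure [SFinite μ] (hΦ : QuadGrowth Φ) (s : ℝ) :
    MeasurePreserving Prod.snd (liftMeasure s Φ μ) μ := by
  have hk := (hΦ.continuous_liftKernel s).measurable
  refine ⟨measurable_snd, Measure.ext_of_lintegral _ fun h hh => ?_⟩
  rw [lintegral_map hh measurable_snd, hΦ.lintegral_liftMeasure s (by fun_prop)]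
  refine lintegral_congr fun y => ?_
  dsimp only
  rw [lintegral_mul_const _ (by fun_prop), hΦ.lintegral_liftKernel, one_mul]

lemma isProbabilityMeasure_liftMeasure [IsProbabilityMeasure μ] (hΦ : QuadGrowth Φ) (s : ℝ) :
    IsProbabilityMeasure (liftMeasure s Φ μ) :=
  ⟨by rw [measure_univ_eq_of_measurePreserving (hΦ.measurePreserving_snd_liftMeasure s),
    measure_univ]⟩

lemma liftKernel_le (hΦ : QuadGrowth Φ) (he : Φ.Even) (hs : 0 ≤ s) (x : E) {y : E}
    (hy : ‖y‖ ≤ R) : liftKernel s Φ (x, y) ≤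
      Real.exp (-(Φ x - s * R * ‖x‖)) * Real.exp (-logLap s Φ 0) := by
  rw [liftKernel, ← Real.exp_add, Real.exp_le_exp]
  have hinner : s * ⟪y, x⟫ ≤ s * R * ‖x‖ := by
    rw [mul_assoc]
    gcongr
    exact (real_inner_le_norm y x).trans (by gcongr)
  linarith [hΦ.logLap_zero_le he s y]

lemma even_liftDensity (hΦ : QuadGrowth Φ) (he : Φ.Even)
    (hμ : MeasurePreserving (fun y => -y) μ μ) : (liftDensity s Φ μ).Even := fun x => by
  have hk := hΦ.continuous_liftKernel s
  rw [liftDensity, ← integral_comp_of_measurePreserving hμ (by fun_prop), liftDensity]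
  simp only [liftKernel, inner_neg_neg, he _, even_logLap he s _]

variable [IsProbabilityMeasure μ]

lemma integrable_liftKernel (hΦ : QuadGrowth Φ) (he : Φ.Even) (hs : 0 ≤ s)
    (hR : ∀ᵐ y ∂μ, ‖y‖ ≤ R) (x : E) : Integrable (fun y => liftKernel s Φ (x, y)) μ := by
  have hk := hΦ.continuous_liftKernel s
  refine (integrable_const (Real.exp (-(Φ x - s * R * ‖x‖)) * Real.exp (-logLap s Φ 0))).mono'
    (by fun_prop) (hR.mono fun y hy => ?_)
  rw [Real.norm_of_nonneg (liftKernel_pos _ _ _).le]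
  exact hΦ.liftKernel_le he hs x hy

lemma posExpDecay_liftDensity (hΦ : QuadGrowth Φ) (he : Φ.Even) (hs : 0 ≤ s)
    (hR : ∀ᵐ y ∂μ, ‖y‖ ≤ R) : PosExpDecay (liftDensity s Φ μ) := by
  have hk := hΦ.continuous_liftKernel s
  have hi := hΦ.integrable_liftKernel he hs hR
  have hdecay := (hΦ.sub_mul_norm (s * R)).posExpDecay
  obtain ⟨D, hD⟩ := hdecay.exists_le
  obtain ⟨C, c, -, hc, hCc⟩ := hdecay.exists_le_mul_exp
  refine ⟨?_, fun x => integral_exp_pos (hi x), C * Real.exp (-logLap s Φ 0), c, hc, fun x => ?_⟩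
  · refine continuous_of_dominated (fun x => (hi x).aestronglyMeasurable)
      (fun x => hR.mono fun y hy => ?_) (integrable_const (D * Real.exp (-logLap s Φ 0)))
      (ae_of_all _ fun y => by fun_prop)
    rw [Real.norm_of_nonneg (liftKernel_pos _ _ _).le]
    exact (hΦ.liftKernel_le he hs x hy).trans (by gcongr; exact hD x)
  · calc liftDensity s Φ μ x
        ≤ ∫ _, Real.exp (-(Φ x - s * R * ‖x‖)) * Real.exp (-logLap s Φ 0) ∂μ :=
          integral_mono_ae (hi x) (integrable_const _)
            (hR.mono fun y hy => hΦ.liftKernel_le he hs x hy)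
      _ ≤ C * Real.exp (-c * ‖x‖) * Real.exp (-logLap s Φ 0) := by
          rw [integral_const, probReal_univ, one_smul]
          gcongr
          exact hCc x
      _ = C * Real.exp (-logLap s Φ 0) * Real.exp (-c * ‖x‖) := by ring

lemma measurePreserving_fst_liftMeasure (hΦ : QuadGrowth Φ) (he : Φ.Even) (hs : 0 ≤ s)
    (hR : ∀ᵐ y ∂μ, ‖y‖ ≤ R) :
    MeasurePreserving Prod.fst (liftMeasure s Φ μ) (densityMeasure (liftDensity s Φ μ)) := by
  have hk := (hΦ.continuous_liftKernel s).measurable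
  have hp := (hΦ.posExpDecay_liftDensity he hs hR).cont.measurable
  refine ⟨measurable_fst, Measure.ext_of_lintegral _ fun h hh => ?_⟩
  rw [lintegral_map hh measurable_fst, liftMeasure,
    lintegral_withDensity_eq_lintegral_mul _ (by fun_prop) (by fun_prop),
    lintegral_prod _ (by fun_prop), lintegral_densityMeasure hp hh]
  refine lintegral_congr fun x => ?_
  simp only [Pi.mul_apply]
  rw [lintegral_mul_const _ (by fun_prop), mul_comm, liftDensity,
    ofReal_integral_eq_lintegral_ofReal (hΦ.integrable_liftKernel he hs hR x)
      (ae_of_all _ fun y => (liftKernel_pos _ _ _).le)]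

lemma integral_liftDensity (hΦ : QuadGrowth Φ) (he : Φ.Even) (hs : 0 ≤ s)
    (hR : ∀ᵐ y ∂μ, ‖y‖ ≤ R) : ∫ x, liftDensity s Φ μ x = 1 := by
  have hprob := hΦ.isProbabilityMeasure_liftMeasure (μ := μ) s
  rw [← ENNReal.ofReal_eq_one, ← (hΦ.posExpDecay_liftDensity he hs hR).densityMeasure_univ,
    ← measure_univ_eq_of_measurePreserving (hΦ.measurePreserving_fst_liftMeasure he hs hR),
    measure_univ]

lemma lintegral_exp_sub_llr_liftMeasure_le {θ : Measure E} [SigmaFinite θ] (hΦ : QuadGrowth Φ)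
    (hμ : μ ≪ θ) {u : E × E → ℝ} (hum : Measurable u) :
    ∫⁻ p, ENNReal.ofReal (Real.exp (u p - llr μ θ p.2)) ∂liftMeasure s Φ μ ≤
      ∫⁻ p, ENNReal.ofReal (Real.exp (u p)) ∂liftMeasure s Φ θ := by
  have hk := (hΦ.continuous_liftKernel s).measurable
  have hF : Measurable fun p => ENNReal.ofReal (liftKernel s Φ p) *
    ENNReal.ofReal (Real.exp (u p)) := by fun_prop
  rw [hΦ.lintegral_liftMeasure s (by fun_prop), hΦ.lintegral_liftMeasure s (by fun_prop)]
  refine le_of_eq_of_le (lintegral_congr fun y => ?_)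
    (lintegral_exp_neg_llr_mul_le hμ hF.lintegral_prod_left')
  rw [← lintegral_const_mul _ (by fun_prop)]
  refine lintegral_congr fun x => ?_
  rw [sub_eq_neg_add, Real.exp_add, ENNReal.ofReal_mul (Real.exp_nonneg _), mul_left_comm]

-- Gibbs' variational inequality: by the chain rule, the entropy of the lift of `μ` relative to the
-- lift of `θ` is the entropy of `μ` relative to `θ`.
theorem integral_liftMeasure_le_llr_add_log {θ : Measure E} [SigmaFinite θ] (hΦ : QuadGrowth Φ)
    (hμ : μ ≪ θ) (hllr : Integrable (llr μ θ) μ) {u : E × E → ℝ} (hum : Measurable u)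
    (hu : Integrable u (liftMeasure s Φ μ)) {Z : ℝ} (hZ : 0 < Z)
    (h : ∫⁻ p, ENNReal.ofReal (Real.exp (u p)) ∂liftMeasure s Φ θ ≤ ENNReal.ofReal Z) :
    ∫ p, u p ∂liftMeasure s Φ μ ≤ ∫ y, llr μ θ y ∂μ + Real.log Z := by
  have hprob := hΦ.isProbabilityMeasure_liftMeasure (μ := μ) s
  have hsnd := hΦ.measurePreserving_snd_liftMeasure (μ := μ) s
  have hllr' : Integrable (fun p => llr μ θ p.2) (liftMeasure s Φ μ) :=
    hsnd.integrable_comp_of_integrable (g := llr μ θ) hllr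
  have hsub : Integrable (fun p => u p - llr μ θ p.2) (liftMeasure s Φ μ) := hu.sub hllr'
  have hexp := (hΦ.lintegral_exp_sub_llr_liftMeasure_le (s := s) hμ hum).trans h
  have hle := integral_le_log_of_lintegral_exp_le hsub hZ hexp
  rw [integral_sub hu hllr',
    integral_comp_of_measurePreserving hsnd hllr.aestronglyMeasurable] at hle
  linarith

end QuadGrowth

end Lift

section Gluing

open ProbabilityTheory

variable {X X' Y Y' : Type*} [MeasurableSpace X] [MeasurableSpace X'] [MeasurableSpace Y]
  [MeasurableSpace Y'] [StandardBorelSpace Y] [Nonempty Y]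

lemma measurePreserving_compProd {Z W : Type*} [MeasurableSpace Z] [MeasurableSpace W]
    {m : Measure (X × Y)} [IsFiniteMeasure m] {ρ : Measure Z} [SFinite ρ] {K : Kernel Z W}
    [IsSFiniteKernel K] {A : Z → X} {B : W → Y} (hA : MeasurePreserving A ρ m.fst)
    (hB : ∀ z, MeasurePreserving B (K z) (m.condKernel (A z))) (hBm : Measurable B) :
    MeasurePreserving (fun q : Z × W => (A q.1, B q.2)) (ρ ⊗ₘ K) m := by
  have hAm := hA.measurable
  refine ⟨by fun_prop, Measure.ext_of_lintegral _ fun h hh => ?_⟩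
  rw [lintegral_map hh (by fun_prop), Measure.lintegral_compProd (by fun_prop)]
  calc ∫⁻ z, (∫⁻ w, h (A z, B w) ∂K z) ∂ρ = ∫⁻ z, (∫⁻ y, h (A z, y) ∂m.condKernel (A z)) ∂ρ :=
        lintegral_congr fun z => (hB z).lintegral_comp (hh.comp measurable_prodMk_left)
    _ = ∫⁻ x, (∫⁻ y, h (x, y) ∂m.condKernel x) ∂m.fst :=
        hA.lintegral_comp hh.lintegral_kernel_prod_right'
    _ = ∫⁻ q, h q ∂m := Measure.lintegral_condKernel hh

lemma exists_gluing [StandardBorelSpace Y'] [Nonempty Y'] {μ : Measure X} {ν : Measure X'}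
    {m : Measure (X × Y)} {n : Measure (X' × Y')} {ρ : Measure (X × X')} [IsFiniteMeasure m]
    [IsFiniteMeasure n] [SFinite ρ] (hm : MeasurePreserving Prod.fst m μ)
    (hn : MeasurePreserving Prod.fst n ν) (hρμ : MeasurePreserving Prod.fst ρ μ)
    (hρν : MeasurePreserving Prod.snd ρ ν) :
    ∃ Γ : Measure ((X × X') × (Y × Y')), MeasurePreserving Prod.fst Γ ρ ∧
      MeasurePreserving (fun z => (z.1.1, z.2.1)) Γ m ∧
      MeasurePreserving (fun z => (z.1.2, z.2.2)) Γ n := by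
  rw [← hm.map_eq] at hρμ
  rw [← hn.map_eq] at hρν
  let K : Kernel (X × X') (Y × Y') :=
    m.condKernel.comap Prod.fst measurable_fst ×ₖ n.condKernel.comap Prod.snd measurable_snd
  have hK : ∀ w, K w = (m.condKernel w.1).prod (n.condKernel w.2) := fun w => by
    rw [Kernel.prod_apply, Kernel.comap_apply, Kernel.comap_apply]
  refine ⟨ρ ⊗ₘ K, ⟨measurable_fst, Measure.fst_compProd ρ K⟩,
    measurePreserving_compProd hρμ (fun w => ?_) measurable_fst,
    measurePreserving_compProd hρν (fun w => ?_) measurable_snd⟩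
  · exact (hK w).symm ▸ measurePreserving_fst
  · exact (hK w).symm ▸ measurePreserving_snd

end Gluing

section NormedSpace

variable {E : Type*} [NormedAddCommGroup E] [NormedSpace ℝ E]

lemma sq_dist_le_sub_of_strongConvexOn {Ψ : E → ℝ} {κ : ℝ} (h : StrongConvexOn univ κ Ψ) {m : E}
    (hm : ∀ y, Ψ m ≤ Ψ y) (y : E) : κ / 2 * ‖m - y‖ ^ 2 ≤ Ψ y - Ψ m := by
  have hlim : Tendsto (fun a : ℝ => a * (κ / 2 * ‖m - y‖ ^ 2)) (𝓝[<] 1)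
      (𝓝 (1 * (κ / 2 * ‖m - y‖ ^ 2))) :=
    (tendsto_nhdsWithin_of_tendsto_nhds tendsto_id).mul_const _
  rw [one_mul] at hlim
  refine le_of_tendsto hlim ?_
  filter_upwards [Ioo_mem_nhdsLT (zero_lt_one' ℝ)] with a ha
  have hpos : 0 < 1 - a := sub_pos.2 ha.2
  have hconv := h.2 (mem_univ m) (mem_univ y) ha.1.le hpos.le (add_sub_cancel a 1)
  simp only [smul_eq_mul] at hconv
  refine le_of_mul_le_mul_left ?_ hpos
  linarith [hm (a • m + (1 - a) • y)]

lemma lintegral_comp_midpoint [MeasurableSpace E] [BorelSpace E] [FiniteDimensional ℝ E]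
    {μ : Measure E} [μ.IsAddHaarMeasure] {g : E → ℝ≥0∞} (hg : Measurable g) (m : E) :
    ∫⁻ y, g ((1 / 2 : ℝ) • m + (1 / 2 : ℝ) • y) ∂μ =
      ENNReal.ofReal (2 ^ Module.finrank ℝ E) * ∫⁻ y, g y ∂μ := by
  calc ∫⁻ y, g ((1 / 2 : ℝ) • m + (1 / 2 : ℝ) • y) ∂μ = ∫⁻ y, g ((1 / 2 : ℝ) • (m + y)) ∂μ := by
        simp only [smul_add]
    _ = ∫⁻ y, g ((1 / 2 : ℝ) • y) ∂μ :=
        lintegral_add_left_eq_self (fun y => g ((1 / 2 : ℝ) • y)) m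
    _ = ∫⁻ y, g y ∂(μ.map ((1 / 2 : ℝ) • ·)) := (lintegral_map hg (by fun_prop)).symm
    _ = ENNReal.ofReal (2 ^ Module.finrank ℝ E) * ∫⁻ y, g y ∂μ := by
        rw [Measure.map_addHaar_smul μ (by norm_num), lintegral_smul_measure, smul_eq_mul,
          abs_of_pos (by positivity), one_div, inv_pow, inv_inv]

end NormedSpace

section Argmin

variable {E : Type*} [NormedAddCommGroup E] [InnerProductSpace ℝ E] {Ψ : E → ℝ} {s κ : ℝ}

lemma strongConvexOn_sub_inner (h : StrongConvexOn univ κ Ψ) (s : ℝ) (x : E) :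
    StrongConvexOn univ κ fun y => Ψ y - s * ⟪x, y⟫ := by
  refine ⟨convex_univ, fun y _ z _ a b ha hb hab => ?_⟩
  have hyz := h.2 (mem_univ y) (mem_univ z) ha hb hab
  simp only [inner_add_right, real_inner_smul_right, smul_eq_mul] at hyz ⊢
  linarith

-- Adding the two quadratic growth inequalities at the minimisers gives
-- `κ ‖T x - T x'‖² ≤ s ⟪x - x', T x - T x'⟫`.
lemma lipschitzWith_of_forall_sub_inner_le (h : StrongConvexOn univ κ Ψ) (hκ : 0 < κ)
    (hs : 0 ≤ s) {T : E → E} (hT : ∀ x y, Ψ (T x) - s * ⟪x, T x⟫ ≤ Ψ y - s * ⟪x, y⟫) :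
    LipschitzWith (s / κ).toNNReal T := by
  refine LipschitzWith.of_dist_le_mul fun x x' => ?_
  rw [dist_eq_norm, dist_eq_norm, Real.coe_toNNReal _ (by positivity), div_mul_eq_mul_div,
    le_div_iff₀ hκ]
  have hx := sq_dist_le_sub_of_strongConvexOn (strongConvexOn_sub_inner h s x) (hT x) (T x')
  have hx' := sq_dist_le_sub_of_strongConvexOn (strongConvexOn_sub_inner h s x') (hT x') (T x)
  rw [norm_sub_rev] at hx'
  have hle : κ * ‖T x - T x'‖ ^ 2 ≤ s * (‖x - x'‖ * ‖T x - T x'‖) := by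
    refine le_trans ?_ (mul_le_mul_of_nonneg_left (real_inner_le_norm _ _) hs)
    simp only [inner_sub_left, inner_sub_right]
    linarith
  rcases (norm_nonneg (T x - T x')).eq_or_lt with hzero | hpos
  · rw [← hzero, zero_mul]
    positivity
  · exact le_of_mul_le_mul_right (by linarith) hpos

variable [FiniteDimensional ℝ E]

lemma QuadGrowth.exists_forall_le (h : QuadGrowth Ψ) : ∃ m, ∀ y, Ψ m ≤ Ψ y := by
  have := FiniteDimensional.proper ℝ E
  obtain ⟨β, C, hβ, hΨ⟩ := h.growth
  refine h.cont.exists_forall_le (tendsto_atTop_mono hΨ (tendsto_atTop_add_const_right _ _ ?_))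
  have hsq : Tendsto (fun y : E => ‖y‖ ^ 2) (cocompact E) atTop :=
    (tendsto_pow_atTop two_ne_zero).comp tendsto_norm_cocompact_atTop
  exact hsq.const_mul_atTop hβ

lemma QuadGrowth.exists_forall_sub_inner_le (h : QuadGrowth Ψ) (s : ℝ) :
    ∃ T : E → E, ∀ x y, Ψ (T x) - s * ⟪x, T x⟫ ≤ Ψ y - s * ⟪x, y⟫ := by
  choose T hT using fun x => (h.sub_inner s x).exists_forall_le
  exact ⟨T, hT⟩

variable [MeasurableSpace E] [BorelSpace E]

-- Uniform convexity at the midpoint of `y` and the minimiser `m` absorbs the quadratic term.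
lemma QuadGrowth.lintegral_exp_sq_dist_argmin_le (hΨ : QuadGrowth Ψ)
    (hconv : StrongConvexOn univ κ Ψ) {x m : E}
    (hm : ∀ y, Ψ m - s * ⟪x, m⟫ ≤ Ψ y - s * ⟪x, y⟫) (c : ℝ) :
    ∫⁻ y, ENNReal.ofReal (Real.exp (κ / 8 * ‖y - m‖ ^ 2 + (s * ⟪x, y⟫ - Ψ y - c))) ≤
      ENNReal.ofReal (2 ^ Module.finrank ℝ E) * ENNReal.ofReal (Real.exp (logLap s Ψ x - c)) := by
  have hc := hΨ.cont
  rw [hΨ.ofReal_exp_logLap_sub, ← lintegral_comp_midpoint (by fun_prop) m]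
  refine lintegral_mono fun y => ENNReal.ofReal_le_ofReal (Real.exp_le_exp.2 ?_)
  have hmid := (strongConvexOn_sub_inner hconv s x).2 (mem_univ m) (mem_univ y)
    one_half_pos.le one_half_pos.le (add_halves 1)
  rw [norm_sub_rev] at hmid
  simp only [smul_eq_mul] at hmid
  linarith [hm y]

end Argmin

section Gluing

variable {X : Type*} [MeasurableSpace X] {E F : Type*} [NormedAddCommGroup E]
  [NormedAddCommGroup F] {K : NNReal} {T : E → F}

lemma integrable_norm_sub_sq_of_lipschitzWith {ρ : Measure X} [IsFiniteMeasure ρ] {f : X → E}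
    {g : X → F} (hT : LipschitzWith K T) (hf : MemLp f 2 ρ) (hg : MemLp g 2 ρ) :
    Integrable (fun x => ‖g x - T (f x)‖ ^ 2) ρ := by
  have hT0 : LipschitzWith K fun x => T x - T 0 := by
    simpa using hT.sub (LipschitzWith.const (T 0))
  have hTf := (hT0.comp_memLp (sub_self _) hf).add (memLp_const (T 0))
  simpa using (hg.sub hTf).integrable_norm_pow two_ne_zero

lemma norm_sub_sq_le_of_lipschitzWith (hT : LipschitzWith K T) {η : ℝ} (hη : 0 < η) (x x' : E)
    (y y' : F) : ‖y - y'‖ ^ 2 ≤ (1 + η) * K ^ 2 * ‖x - x'‖ ^ 2 +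
      2 * (1 + η⁻¹) * (‖y - T x‖ ^ 2 + ‖y' - T x'‖ ^ 2) := by
  set A := ‖y - T x‖
  set B := ‖y' - T x'‖
  set D := K * ‖x - x'‖ with hD
  have htri : ‖y - y'‖ ≤ D + (A + B) := by
    rw [show y - y' = (T x - T x') + ((y - T x) - (y' - T x')) by abel]
    refine (norm_add_le _ _).trans (add_le_add ?_ (norm_sub_le _ _))
    simpa only [dist_eq_norm] using hT.dist_le_mul x x'
  have hyoung : 2 * D * (A + B) ≤ η * D ^ 2 + η⁻¹ * (A + B) ^ 2 := by
    have hsq : η * D ^ 2 + η⁻¹ * (A + B) ^ 2 - 2 * D * (A + B) = η⁻¹ * (η * D - (A + B)) ^ 2 := by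
      field_simp
      ring
    have : 0 ≤ η⁻¹ * (η * D - (A + B)) ^ 2 := by positivity
    linarith
  calc ‖y - y'‖ ^ 2 ≤ (D + (A + B)) ^ 2 := by gcongr
    _ ≤ (1 + η) * D ^ 2 + (1 + η⁻¹) * (A + B) ^ 2 := by linarith
    _ ≤ (1 + η) * D ^ 2 + (1 + η⁻¹) * (2 * (A ^ 2 + B ^ 2)) := by gcongr; exact add_sq_le
    _ = _ := by rw [hD]; ring

section Wasserstein

variable [MeasurableSpace E] [BorelSpace E] [SecondCountableTopology E] {μ ν : Measure E}

lemma W2sq_le_of_measurePreserving {Γ : Measure X} {f g : X → E} (hf : MeasurePreserving f Γ μ)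
    (hg : MeasurePreserving g Γ ν) :
    W2sq μ ν ≤ ∫⁻ z, ENNReal.ofReal (‖f z - g z‖ ^ 2) ∂Γ := by
  have hfm := hf.measurable
  have hgm := hg.measurable
  have hΓ : IsCoupling (Γ.map fun z => (f z, g z)) μ ν :=
    ⟨(Measure.map_map measurable_fst (hfm.prodMk hgm)).trans hf.map_eq,
      (Measure.map_map measurable_snd (hfm.prodMk hgm)).trans hg.map_eq⟩
  calc W2sq μ ν ≤ ∫⁻ p, (‖p.1 - p.2‖₊ : ℝ≥0∞) ^ 2 ∂Γ.map fun z => (f z, g z) :=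
        iInf₂_le (Γ.map fun z => (f z, g z)) hΓ
    _ = ∫⁻ z, (‖f z - g z‖₊ : ℝ≥0∞) ^ 2 ∂Γ := lintegral_map (by fun_prop) (by fun_prop)
    _ = ∫⁻ z, ENNReal.ofReal (‖f z - g z‖ ^ 2) ∂Γ := lintegral_congr fun z => by
        rw [← enorm_eq_nnnorm, ← ofReal_norm, ← ENNReal.ofReal_pow (norm_nonneg _)]

-- `T` is applied to both ends of a coupling `ρ` of the first marginals of `m` and `n`.
lemma W2sq_le_of_coupling_fst [CompleteSpace E] {T : E → E} {p q : Measure E}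
    {m n ρ : Measure (E × E)} [IsFiniteMeasure m] [IsFiniteMeasure n] [SFinite ρ]
    (hT : LipschitzWith K T) (hρ : IsCoupling ρ p q)
    (hρ2 : Integrable (fun w => ‖w.1 - w.2‖ ^ 2) ρ) (hm : IsCoupling m p μ)
    (hm2 : Integrable (fun w => ‖w.2 - T w.1‖ ^ 2) m) (hn : IsCoupling n q ν)
    (hn2 : Integrable (fun w => ‖w.2 - T w.1‖ ^ 2) n) {η : ℝ} (hη : 0 < η) :
    W2sq μ ν ≤ ENNReal.ofReal ((1 + η) * K ^ 2 * ∫ w, ‖w.1 - w.2‖ ^ 2 ∂ρ +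
      2 * (1 + η⁻¹) * (∫ w, ‖w.2 - T w.1‖ ^ 2 ∂m + ∫ w, ‖w.2 - T w.1‖ ^ 2 ∂n)) := by
  obtain ⟨Γ, hΓρ, hΓm, hΓn⟩ := exists_gluing hm.measurePreserving_fst hn.measurePreserving_fst
    hρ.measurePreserving_fst hρ.measurePreserving_snd
  have hiρ : Integrable (fun z => ‖z.1.1 - z.1.2‖ ^ 2) Γ := hΓρ.integrable_comp_of_integrable hρ2
  have him : Integrable (fun z => ‖z.2.1 - T z.1.1‖ ^ 2) Γ := hΓm.integrable_comp_of_integrable hm2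
  have hin : Integrable (fun z => ‖z.2.2 - T z.1.2‖ ^ 2) Γ := hΓn.integrable_comp_of_integrable hn2
  have hiρ' := hiρ.const_mul ((1 + η) * K ^ 2)
  have himn : Integrable (fun z => 2 * (1 + η⁻¹) * (‖z.2.1 - T z.1.1‖ ^ 2 +
    ‖z.2.2 - T z.1.2‖ ^ 2)) Γ := (him.add hin).const_mul _
  have hi : Integrable (fun z => (1 + η) * K ^ 2 * ‖z.1.1 - z.1.2‖ ^ 2 +
    2 * (1 + η⁻¹) * (‖z.2.1 - T z.1.1‖ ^ 2 + ‖z.2.2 - T z.1.2‖ ^ 2)) Γ := hiρ'.add himn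
  rw [← integral_comp_of_measurePreserving hΓρ hρ2.aestronglyMeasurable,
    ← integral_comp_of_measurePreserving hΓm hm2.aestronglyMeasurable,
    ← integral_comp_of_measurePreserving hΓn hn2.aestronglyMeasurable,
    ← integral_add him hin, ← integral_const_mul, ← integral_const_mul, ← integral_add hiρ' himn,
    ofReal_integral_eq_lintegral_ofReal hi (ae_of_all _ fun z => by positivity)]
  refine (W2sq_le_of_measurePreserving (hm.measurePreserving_snd.comp hΓm)
    (hn.measurePreserving_snd.comp hΓn)).trans (lintegral_mono fun z => ?_)
  exact ENNReal.ofReal_le_ofReal (norm_sub_sq_le_of_lipschitzWith hT hη _ _ _ _)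

end Wasserstein

end Gluing

section LiftedCoupling

variable {E : Type*} [NormedAddCommGroup E] [InnerProductSpace ℝ E]
variable [FiniteDimensional ℝ E] [MeasurableSpace E] [BorelSpace E]
variable {Φ V b : E → ℝ} {μ ν : Measure E} {s R κ α : ℝ}

lemma integrable_norm_sq_of_ae_le [IsFiniteMeasure μ] (hR : ∀ᵐ y ∂μ, ‖y‖ ≤ R) :
    Integrable (fun y => ‖y‖ ^ 2) μ := by
  refine Integrable.mono' (integrable_const (R ^ 2)) (by fun_prop) (hR.mono fun y hy => ?_)
  rw [Real.norm_of_nonneg (by positivity)]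
  gcongr

lemma QuadGrowth.lintegral_exp_liftMeasure_densityMeasure (hΦ : QuadGrowth Φ) (hV : Measurable V)
    (hb : Measurable b) {w : E × E → ℝ} (hw : Measurable w) :
    ∫⁻ p, ENNReal.ofReal (Real.exp (w p - (b p.2 - logLap s Φ p.2)))
        ∂liftMeasure s Φ (gibbsMeasure V) =
      ∫⁻ x, ∫⁻ y, ENNReal.ofReal (Real.exp (w (x, y) + (s * ⟪x, y⟫ - (b + V) y - Φ x))) := by
  have hΦm := hΦ.cont.measurable
  have hΦl := (hΦ.continuous_logLap s).measurable
  have hk := (hΦ.continuous_liftKernel s).measurable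
  have : SFinite (gibbsMeasure V) := by
    unfold gibbsMeasure densityMeasure; infer_instance
  have hF : Measurable fun p : E × E => ENNReal.ofReal (liftKernel s Φ p) *
      ENNReal.ofReal (Real.exp (w p - (b p.2 - logLap s Φ p.2))) := by fun_prop
  rw [hΦ.lintegral_liftMeasure s (by fun_prop),
    lintegral_densityMeasure (by fun_prop) hF.lintegral_prod_left',
    lintegral_lintegral_swap (f := fun x y => ENNReal.ofReal
      (Real.exp (w (x, y) + (s * ⟪x, y⟫ - (b + V) y - Φ x))))
      (by simp only [Pi.add_apply]; fun_prop)]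
  refine lintegral_congr fun y => ?_
  have hFy : Measurable fun x => ENNReal.ofReal (liftKernel s Φ (x, y)) *
      ENNReal.ofReal (Real.exp (w (x, y) - (b y - logLap s Φ y))) := hF.comp measurable_prodMk_right
  rw [← lintegral_mul_const _ hFy]
  refine lintegral_congr fun x => ?_
  rw [← ENNReal.ofReal_mul (liftKernel_pos _ _ _).le, liftKernel,
    ← ENNReal.ofReal_mul (by positivity), ← Real.exp_add, ← Real.exp_add, real_inner_comm,
    Pi.add_apply]
  ring_nf

variable [IsProbabilityMeasure μ]

lemma QuadGrowth.integral_liftMeasure_le (hΦ : QuadGrowth Φ) (hV : QuadGrowth V)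
    (hμ : μ ≪ gibbsMeasure V) (hllr : Integrable (llr μ (gibbsMeasure V)) μ)
    (hb : Measurable b) (hdiff : Integrable (fun y => b y - logLap s Φ y) μ)
    {w : E × E → ℝ} (hwm : Measurable w) (hw : Integrable w (liftMeasure s Φ μ))
    {Z : ℝ} (hZ : 0 < Z)
    (h : ∫⁻ x, ∫⁻ y, ENNReal.ofReal (Real.exp (w (x, y) + (s * ⟪x, y⟫ - (b + V) y - Φ x))) ≤
      ENNReal.ofReal Z) :
    ∫ p, w p ∂liftMeasure s Φ μ ≤ ∫ y, llr μ (gibbsMeasure V) y ∂μ +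
      ∫ y, (b y - logLap s Φ y) ∂μ + Real.log Z := by
  have hΦl := (hΦ.continuous_logLap s).measurable
  have hfin := hV.posExpDecay.isFiniteMeasure_densityMeasure
  have hsnd := hΦ.measurePreserving_snd_liftMeasure (μ := μ) s
  have hdiff' : Integrable (fun p => b p.2 - logLap s Φ p.2) (liftMeasure s Φ μ) :=
    hsnd.integrable_comp_of_integrable (g := fun y => b y - logLap s Φ y) hdiff
  have hgibbs := hΦ.integral_liftMeasure_le_llr_add_log hμ hllr
    (u := fun p => w p - (b p.2 - logLap s Φ p.2)) (by fun_prop) (hw.sub hdiff') hZ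
    ((hΦ.lintegral_exp_liftMeasure_densityMeasure hV.cont.measurable hb hwm).trans_le h)
  rw [integral_sub hw hdiff',
    integral_comp_of_measurePreserving (u := fun y => b y - logLap s Φ y) hsnd
      hdiff.aestronglyMeasurable] at hgibbs
  linarith

lemma EvenPot.integrable_sub_sinkhorn (hb : EvenPot b) (hV : QuadGrowth V) (he : V.Even) (s : ℝ)
    (hμ2 : Integrable (fun y => ‖y‖ ^ 2) μ) : Integrable (fun y => b y - sinkhorn s V b y) μ :=
  (hb.integrable hμ2).sub ((hb.evenPot_sinkhorn hV he s).integrable hμ2)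

lemma integral_log_liftDensity_add_gaussPot_le (hb : EvenPot b) (hV : QuadGrowth V) (he : V.Even)
    (hs : 0 ≤ s) (hμ : μ ≪ gibbsMeasure V) (hllr : Integrable (llr μ (gibbsMeasure V)) μ)
    (hR : ∀ᵐ y ∂μ, ‖y‖ ≤ R) :
    ∫ x, (Real.log (liftDensity s (sinkStep s V b + gaussPot) μ x) + gaussPot x)
        ∂densityMeasure (liftDensity s (sinkStep s V b + gaussPot) μ) ≤
      ∫ y, llr μ (gibbsMeasure V) y ∂μ + ∫ y, (b y - sinkhorn s V b y) ∂μ := by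
  have ha := hb.evenPot_sinkStep hV he s
  have hΦ := ha.quadGrowth_add quadGrowth_gaussPot
  have heven := ha.even.add even_gaussPot
  have hfst := hΦ.measurePreserving_fst_liftMeasure heven hs hR
  have hmass := hΦ.integral_liftDensity heven hs hR
  have hp := hΦ.posExpDecay_liftDensity heven hs hR
  set p := liftDensity s (sinkStep s V b + gaussPot) μ
  have hpm := hp.cont.measurable
  have hfin := hp.isFiniteMeasure_densityMeasure
  have hgm := (continuous_gaussPot (E := E)).measurable
  have hi : Integrable (fun x => Real.log (p x) + gaussPot x) (densityMeasure p) :=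
    hp.integrable_log_densityMeasure.add
      ((hp.integrable_norm_sq_densityMeasure.div_const 2).add (integrable_const _))
  have hle := hΦ.integral_liftMeasure_le hV hμ hllr hb.cont.measurable
    (hb.integrable_sub_sinkhorn hV he s (integrable_norm_sq_of_ae_le hR))
    (w := fun q => Real.log (p q.1) + gaussPot q.1) (by fun_prop)
    (hfst.integrable_comp_of_integrable (g := fun x => Real.log (p x) + gaussPot x) hi) one_pos
    (by
      rw [← hmass, ofReal_integral_eq_lintegral_ofReal (hp.integrable volume)
        (ae_of_all _ fun x => (hp.pos x).le)]
      refine lintegral_mono fun x => le_of_eq ?_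
      calc ∫⁻ y, ENNReal.ofReal (Real.exp (Real.log (p x) + gaussPot x +
            (s * ⟪x, y⟫ - (b + V) y - (sinkStep s V b x + gaussPot x))))
          = ∫⁻ y, ENNReal.ofReal (Real.exp
              (s * ⟪x, y⟫ - (b + V) y - (sinkStep s V b x - Real.log (p x)))) := by
            exact lintegral_congr fun y => by congr 2; ring
        _ = ENNReal.ofReal (p x) := by
            rw [← (hb.quadGrowth_add hV).ofReal_exp_logLap_sub, ← sinkStep, _root_.sub_sub_cancel,
              Real.exp_log (hp.pos x)])
  rwa [integral_comp_of_measurePreserving hfst hi.aestronglyMeasurable, Real.log_one,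
    add_zero] at hle

lemma integrable_sq_dist_liftMeasure (hΦ : QuadGrowth Φ) (he : Φ.Even) (hs : 0 ≤ s)
    (hR : ∀ᵐ y ∂μ, ‖y‖ ≤ R) {T : E → E} {K : NNReal} (hT : LipschitzWith K T) :
    Integrable (fun p => ‖p.2 - T p.1‖ ^ 2) (liftMeasure s Φ μ) := by
  have hprob := hΦ.isProbabilityMeasure_liftMeasure (μ := μ) s
  refine integrable_norm_sub_sq_of_lipschitzWith hT
    ((memLp_two_iff_integrable_sq_norm (by fun_prop)).2 ?_)
    ((memLp_two_iff_integrable_sq_norm (by fun_prop)).2 ?_)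
  · exact (hΦ.measurePreserving_fst_liftMeasure he hs hR).integrable_comp_of_integrable
      (g := fun x => ‖x‖ ^ 2)
      (hΦ.posExpDecay_liftDensity he hs hR).integrable_norm_sq_densityMeasure
  · exact (hΦ.measurePreserving_snd_liftMeasure s).integrable_comp_of_integrable
      (g := fun y => ‖y‖ ^ 2) (integrable_norm_sq_of_ae_le hR)

lemma integral_sq_dist_argmin_le (hb : EvenPot b) (hV : QuadGrowth V) (he : V.Even)
    (hμ : μ ≪ gibbsMeasure V) (hllr : Integrable (llr μ (gibbsMeasure V)) μ)
    (hR : ∀ᵐ y ∂μ, ‖y‖ ≤ R) (hconv : StrongConvexOn univ κ (b + V)) {T : E → E}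
    (hTm : Measurable T) (hT : ∀ x y, (b + V) (T x) - s * ⟪x, T x⟫ ≤ (b + V) y - s * ⟪x, y⟫)
    (hi : Integrable (fun p => ‖p.2 - T p.1‖ ^ 2)
      (liftMeasure s (sinkStep s V b + gaussPot) μ)) :
    κ / 8 * ∫ p, ‖p.2 - T p.1‖ ^ 2 ∂liftMeasure s (sinkStep s V b + gaussPot) μ ≤
      ∫ y, llr μ (gibbsMeasure V) y ∂μ + ∫ y, (b y - sinkhorn s V b y) ∂μ +
        Real.log (2 ^ Module.finrank ℝ E) := by
  rw [← integral_const_mul]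
  have hΦ := (hb.evenPot_sinkStep hV he s).quadGrowth_add quadGrowth_gaussPot
  refine hΦ.integral_liftMeasure_le hV hμ hllr hb.cont.measurable
    (hb.integrable_sub_sinkhorn hV he s (integrable_norm_sq_of_ae_le hR)) (by fun_prop)
    (hi.const_mul _) (by positivity) ?_
  have hgm := (continuous_gaussPot (E := E)).measurable
  calc _ ≤ ∫⁻ x, ENNReal.ofReal (2 ^ Module.finrank ℝ E) *
          ENNReal.ofReal (Real.exp (-gaussPot (x : E))) := by
        refine lintegral_mono fun x => ?_
        have hx := (hb.quadGrowth_add hV).lintegral_exp_sq_dist_argmin_le hconv (hT x)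
          (sinkStep s V b x + gaussPot x)
        rwa [← sinkStep, sub_add_cancel_left] at hx
    _ = ENNReal.ofReal (2 ^ Module.finrank ℝ E) := by
        rw [lintegral_const_mul _ (by fun_prop), ← ofReal_integral_eq_lintegral_ofReal
          (quadGrowth_gaussPot.posExpDecay.integrable volume)
          (ae_of_all _ fun x => (Real.exp_pos _).le), integral_exp_neg_gaussPot,
          ENNReal.ofReal_one, mul_one]

end LiftedCoupling

section BoundedSupport

variable {E : Type*} [NormedAddCommGroup E] [InnerProductSpace ℝ E]
variable [FiniteDimensional ℝ E] [MeasurableSpace E] [BorelSpace E]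
variable {V : E → ℝ} {μ ν : Measure E} {α R : ℝ} [IsProbabilityMeasure μ] [IsProbabilityMeasure ν]

lemma W2sq_le_of_liftMeasure {Φ : E → ℝ} (hΦ : QuadGrowth Φ) (he : Φ.Even) {s : ℝ} (hs : 0 ≤ s)
    (hμR : ∀ᵐ y ∂μ, ‖y‖ ≤ R) (hνR : ∀ᵐ y ∂ν, ‖y‖ ≤ R)
    (hsymm : MeasurePreserving (fun y => -y) μ μ) {T : E → E} {K : NNReal} (hT : LipschitzWith K T)
    {η : ℝ} (hη : 0 < η) :
    W2sq μ ν ≤ ENNReal.ofReal ((1 + η) * K ^ 2 *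
        (2 * ∫ x, (Real.log (liftDensity s Φ μ x) + gaussPot x)
            ∂densityMeasure (liftDensity s Φ μ) +
          2 * ∫ x, (Real.log (liftDensity s Φ ν x) + gaussPot x)
            ∂densityMeasure (liftDensity s Φ ν)) +
      2 * (1 + η⁻¹) * (∫ p, ‖p.2 - T p.1‖ ^ 2 ∂liftMeasure s Φ μ +
        ∫ p, ‖p.2 - T p.1‖ ^ 2 ∂liftMeasure s Φ ν)) := by
  have hp := hΦ.posExpDecay_liftDensity he hs hμR
  have hq := hΦ.posExpDecay_liftDensity he hs hνR
  have hprobμ := hΦ.isProbabilityMeasure_liftMeasure (μ := μ) s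
  have hprobν := hΦ.isProbabilityMeasure_liftMeasure (μ := ν) s
  obtain ⟨ρ, hρ, hρle⟩ := exists_gaussian_coupling hp hq (hΦ.integral_liftDensity he hs hμR)
    (hΦ.integral_liftDensity he hs hνR) (integral_id_densityMeasure_eq_zero
      hp.cont.measurable (hΦ.even_liftDensity he hsymm))
  have hpfin := hp.isFiniteMeasure_densityMeasure
  have hρfin : IsFiniteMeasure ρ := ⟨by rw [hρ.measure_univ]; exact measure_lt_top _ _⟩
  have hfst : MemLp (fun w : E × E => w.1) 2 ρ := (memLp_two_iff_integrable_sq_norm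
    (by fun_prop)).2 (hρ.integrable_fst hp.integrable_norm_sq_densityMeasure)
  have hsnd : MemLp (fun w : E × E => w.2) 2 ρ := (memLp_two_iff_integrable_sq_norm
    (by fun_prop)).2 (hρ.integrable_snd hq.integrable_norm_sq_densityMeasure)
  have hsub : Integrable (fun w : E × E => ‖w.1 - w.2‖ ^ 2) ρ :=
    (memLp_two_iff_integrable_sq_norm (by fun_prop)).1 (hfst.sub hsnd)
  have hcomplete := FiniteDimensional.complete ℝ E
  refine (W2sq_le_of_coupling_fst hT hρ hsub
    ⟨(hΦ.measurePreserving_fst_liftMeasure he hs hμR).map_eq,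
      (hΦ.measurePreserving_snd_liftMeasure s).map_eq⟩
    (integrable_sq_dist_liftMeasure hΦ he hs hμR hT)
    ⟨(hΦ.measurePreserving_fst_liftMeasure he hs hνR).map_eq,
      (hΦ.measurePreserving_snd_liftMeasure s).map_eq⟩
    (integrable_sq_dist_liftMeasure hΦ he hs hνR hT) hη).trans ?_
  gcongr

lemma W2sq_le_of_ae_le_of_pos (hV : QuadGrowth V) (he : V.Even)
    (hV1 : ∫ y, Real.exp (-V y) = 1) (hα : 0 < α) (hconv : StrongConvexOn univ α V)
    (hμ : μ ≪ gibbsMeasure V) (hν : ν ≪ gibbsMeasure V)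
    (hμllr : Integrable (llr μ (gibbsMeasure V)) μ)
    (hνllr : Integrable (llr ν (gibbsMeasure V)) ν)
    (hμR : ∀ᵐ y ∂μ, ‖y‖ ≤ R) (hνR : ∀ᵐ y ∂ν, ‖y‖ ≤ R)
    (hsymm : MeasurePreserving (fun y => -y) μ μ) {s ε η : ℝ} (hs : 0 < s) (hε : 0 < ε)
    (hη : 0 < η) :
    W2sq μ ν ≤ ENNReal.ofReal ((1 + η) / α *
        (2 * (∫ y, llr μ (gibbsMeasure V) y ∂μ + ∫ y, llr ν (gibbsMeasure V) y ∂ν + ε)) +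
      2 * (1 + η⁻¹) * (8 / (s * √α) *
        (∫ y, llr μ (gibbsMeasure V) y ∂μ + ∫ y, llr ν (gibbsMeasure V) y ∂ν + ε +
          2 * Real.log (2 ^ Module.finrank ℝ E)))) := by
  have hμ2 := integrable_norm_sq_of_ae_le hμR
  have hν2 := integrable_norm_sq_of_ae_le hνR
  obtain ⟨b, hb, hbV, hbε⟩ := exists_sinkhorn_potential hV he hV1 hα hconv hs
    (hμ2.add_measure hν2) hε
  rw [integral_add_measure (hb.integrable_sub_sinkhorn hV he s hμ2)
    (hb.integrable_sub_sinkhorn hV he s hν2)] at hbε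
  have hκ : 0 < s * √α := by positivity
  have hΦ := (hb.evenPot_sinkStep hV he s).quadGrowth_add quadGrowth_gaussPot
  have heven := (hb.evenPot_sinkStep hV he s).even.add even_gaussPot
  obtain ⟨T, hT⟩ := (hb.quadGrowth_add hV).exists_forall_sub_inner_le s
  have hTL := lipschitzWith_of_forall_sub_inner_le hbV hκ hs.le hT
  have hμT := integrable_sq_dist_liftMeasure hΦ heven hs.le hμR hTL
  have hνT := integrable_sq_dist_liftMeasure hΦ heven hs.le hνR hTL
  have hμdist := integral_sq_dist_argmin_le hb hV he hμ hμllr hμR hbV hTL.continuous.measurable hT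
    hμT
  have hνdist := integral_sq_dist_argmin_le hb hV he hν hνllr hνR hbV hTL.continuous.measurable hT
    hνT
  have hμent := integral_log_liftDensity_add_gaussPot_le hb hV he hs.le hμ hμllr hμR
  have hνent := integral_log_liftDensity_add_gaussPot_le hb hV he hs.le hν hνllr hνR
  refine (W2sq_le_of_liftMeasure hΦ heven hs.le hμR hνR hsymm hTL hη).trans
    (ENNReal.ofReal_le_ofReal ?_)
  have hK : (((s / (s * √α)).toNNReal : NNReal) : ℝ) ^ 2 = α⁻¹ := by
    rw [Real.coe_toNNReal _ (by positivity), div_pow, mul_pow, Real.sq_sqrt hα.le]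
    field_simp
  rw [hK, div_eq_mul_inv (1 + η), div_mul_eq_mul_div 8]
  gcongr
  · linarith
  · rw [le_div_iff₀ hκ]
    linarith

theorem W2sq_le_of_ae_le (hV : QuadGrowth V) (he : V.Even)
    (hV1 : ∫ y, Real.exp (-V y) = 1) (hα : 0 < α) (hconv : StrongConvexOn univ α V)
    (hμ : μ ≪ gibbsMeasure V) (hν : ν ≪ gibbsMeasure V)
    (hμllr : Integrable (llr μ (gibbsMeasure V)) μ)
    (hνllr : Integrable (llr ν (gibbsMeasure V)) ν)
    (hμR : ∀ᵐ y ∂μ, ‖y‖ ≤ R) (hνR : ∀ᵐ y ∂ν, ‖y‖ ≤ R)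
    (hsymm : MeasurePreserving (fun y => -y) μ μ) :
    W2sq μ ν ≤ ENNReal.ofReal
      (2 / α * (∫ y, llr μ (gibbsMeasure V) y ∂μ + ∫ y, llr ν (gibbsMeasure V) y ∂ν)) := by
  set S := ∫ y, llr μ (gibbsMeasure V) y ∂μ + ∫ y, llr ν (gibbsMeasure V) y ∂ν
  set G : ℝ → ℝ := fun t => (1 + t) / α * (2 * (S + t)) +
    (t ^ 2 + t) * 16 / √α * (S + t + 2 * Real.log (2 ^ Module.finrank ℝ E)) with hG
  have hGcont : Continuous G := by fun_prop
  have hlim : Tendsto (fun t => ENNReal.ofReal (G t)) (𝓝[>] 0) (𝓝 (ENNReal.ofReal (G 0))) :=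
    ((ENNReal.continuous_ofReal.comp hGcont).tendsto 0).mono_left nhdsWithin_le_nhds
  rw [show G 0 = 2 / α * S by simp only [hG]; ring] at hlim
  refine ge_of_tendsto hlim ?_
  filter_upwards [self_mem_nhdsWithin] with t ht
  have ht : 0 < t := ht
  refine (W2sq_le_of_ae_le_of_pos hV he hV1 hα hconv hμ hν hμllr hνllr hμR hνR hsymm
    (s := (t ^ 2)⁻¹) (by positivity) ht ht).trans_eq (congrArg ENNReal.ofReal ?_)
  simp only [hG]
  congr 1
  field_simp
  ring

end BoundedSupport

section Wasserstein

lemma enorm_sub_sq_le {E : Type*} [NormedAddCommGroup E] (x y : E) :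
    ‖x - y‖ₑ ^ 2 ≤ 2 * (‖x‖ₑ ^ 2 + ‖y‖ₑ ^ 2) :=
  calc ‖x - y‖ₑ ^ 2 ≤ (‖x‖ₑ + ‖y‖ₑ) ^ 2 := by gcongr; exact enorm_sub_le
    _ ≤ 2 * (‖x‖ₑ ^ 2 + ‖y‖ₑ ^ 2) := by
        simp only [enorm_eq_nnnorm]
        exact_mod_cast add_sq_le (a := ‖x‖₊) (b := ‖y‖₊)

variable {E : Type*} [MeasurableSpace E] [NormedAddCommGroup E] {m n μ ν : Measure E}

lemma W2sq_add_le (m₁ n₁ m₂ n₂ : Measure E) :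
    W2sq (m₁ + m₂) (n₁ + n₂) ≤ W2sq m₁ n₁ + W2sq m₂ n₂ := by
  simp only [W2sq, ENNReal.iInf_add, ENNReal.add_iInf]
  exact le_iInf₂ fun π₂ h₂ => le_iInf₂ fun π₁ h₁ =>
    iInf₂_le_of_le (π₁ + π₂) (h₁.add h₂) (lintegral_add_measure _ _ _).le

lemma W2sq_smul_le (m n : Measure E) {c : ℝ≥0∞} (h0 : c ≠ 0) (h1 : c ≠ ∞) :
    W2sq (c • m) (c • n) ≤ c * W2sq m n := by
  simp only [W2sq, ENNReal.mul_iInf_of_ne h0 h1]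
  refine le_iInf₂ fun π h => iInf₂_le_of_le (c • π) (h.smul c) ?_
  rw [lintegral_smul_measure, smul_eq_mul]

variable [OpensMeasurableSpace E]

lemma W2sq_le_moments [IsFiniteMeasure m] [IsFiniteMeasure n] (h : m univ = n univ) :
    W2sq m n ≤ 2 * (∫⁻ x, ‖x‖ₑ ^ 2 ∂m + ∫⁻ x, ‖x‖ₑ ^ 2 ∂n) := by
  obtain ⟨π, hπ⟩ := exists_isCoupling h
  calc W2sq m n ≤ ∫⁻ p, ‖p.1 - p.2‖ₑ ^ 2 ∂π := iInf₂_le π hπ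
    _ ≤ ∫⁻ p, 2 * (‖p.1‖ₑ ^ 2 + ‖p.2‖ₑ ^ 2) ∂π := lintegral_mono fun p => enorm_sub_sq_le _ _
    _ = 2 * (∫⁻ x, ‖x‖ₑ ^ 2 ∂m + ∫⁻ x, ‖x‖ₑ ^ 2 ∂n) := by
        rw [lintegral_const_mul _ (by fun_prop), lintegral_add_left (by fun_prop),
          hπ.measurePreserving_fst.lintegral_comp (f := fun x => ‖x‖ₑ ^ 2) (by fun_prop),
          hπ.measurePreserving_snd.lintegral_comp (f := fun x => ‖x‖ₑ ^ 2) (by fun_prop)]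

lemma W2sq_le_of_le [IsFiniteMeasure μ] [IsFiniteMeasure ν] (hm : m ≤ μ) (hn : n ≤ ν)
    (hmn : m univ = n univ) (hμν : μ univ = ν univ) (hμ : ∫⁻ x, ‖x‖ₑ ^ 2 ∂μ ≠ ∞)
    (hν : ∫⁻ x, ‖x‖ₑ ^ 2 ∂ν ≠ ∞) :
    W2sq μ ν ≤ W2sq m n + 2 * ((∫⁻ x, ‖x‖ₑ ^ 2 ∂μ - ∫⁻ x, ‖x‖ₑ ^ 2 ∂m) +
      (∫⁻ x, ‖x‖ₑ ^ 2 ∂ν - ∫⁻ x, ‖x‖ₑ ^ 2 ∂n)) := by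
  have := isFiniteMeasure_of_le μ hm
  have := isFiniteMeasure_of_le ν hn
  have hlintegral : ∀ {m μ : Measure E}, IsFiniteMeasure m → m ≤ μ → ∫⁻ x, ‖x‖ₑ ^ 2 ∂μ ≠ ∞ →
      ∫⁻ x, ‖x‖ₑ ^ 2 ∂(μ - m) = ∫⁻ x, ‖x‖ₑ ^ 2 ∂μ - ∫⁻ x, ‖x‖ₑ ^ 2 ∂m := fun {m μ} _ h hμ => by
    refine ENNReal.eq_sub_of_add_eq (ne_top_of_le_ne_top hμ (lintegral_mono' h le_rfl)) ?_
    rw [← lintegral_add_measure, Measure.sub_add_cancel_of_le h]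
  have huniv : (μ - m) univ = (ν - n) univ := by
    rw [Measure.sub_apply .univ hm, Measure.sub_apply .univ hn, hμν, hmn]
  calc W2sq μ ν = W2sq (m + (μ - m)) (n + (ν - n)) := by
        rw [add_comm m, add_comm n, Measure.sub_add_cancel_of_le hm,
          Measure.sub_add_cancel_of_le hn]
    _ ≤ W2sq m n + W2sq (μ - m) (ν - n) := W2sq_add_le _ _ _ _
    _ ≤ _ := by
        gcongr
        rw [← hlintegral ‹_› hm hμ, ← hlintegral ‹_› hn hν]
        exact W2sq_le_moments huniv

end Wasserstein

section Truncation

open ProbabilityTheory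

section Cond

variable {X : Type*} [MeasurableSpace X] {μ θ : Measure X} {B : Set X}

lemma smul_cond_le {p : ℝ≥0∞} (hp : p ≤ μ B) : p • μ[|B] ≤ μ := by
  rw [ProbabilityTheory.cond, smul_smul, ← div_eq_mul_inv]
  calc (p / μ B) • μ.restrict B ≤ (1 : ℝ≥0∞) • μ.restrict B := by
        gcongr
        exact ENNReal.div_le_of_le_mul (by rwa [one_mul])
    _ ≤ μ := by rw [one_smul]; exact Measure.restrict_le_self

lemma W2sq_le_smul_cond {E : Type*} [NormedAddCommGroup E] [MeasurableSpace E]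
    [OpensMeasurableSpace E] {μ ν : Measure E} [IsProbabilityMeasure μ] [IsProbabilityMeasure ν]
    {B : Set E} (hμB : μ B ≠ 0) (hνB : ν B ≠ 0) (hμ : ∫⁻ x, ‖x‖ₑ ^ 2 ∂μ ≠ ∞)
    (hν : ∫⁻ x, ‖x‖ₑ ^ 2 ∂ν ≠ ∞) :
    W2sq μ ν ≤ W2sq μ[|B] ν[|B] +
      2 * ((∫⁻ x, ‖x‖ₑ ^ 2 ∂μ - ∫⁻ x, ‖x‖ₑ ^ 2 ∂(min (μ B) (ν B) • μ[|B])) +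
        (∫⁻ x, ‖x‖ₑ ^ 2 ∂ν - ∫⁻ x, ‖x‖ₑ ^ 2 ∂(min (μ B) (ν B) • ν[|B]))) := by
  have := cond_isProbabilityMeasure hμB
  have := cond_isProbabilityMeasure hνB
  have hp1 : min (μ B) (ν B) ≤ 1 := (min_le_left _ _).trans prob_le_one
  refine (W2sq_le_of_le (smul_cond_le (min_le_left _ _)) (smul_cond_le (min_le_right _ _))
    (by simp) (by simp) hμ hν).trans (add_le_add_left ?_ _)
  refine (W2sq_smul_le _ _ ?_ (ne_top_of_le_ne_top ENNReal.one_ne_top hp1)).trans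
    (mul_le_of_le_one_left' hp1)
  exact (lt_min (pos_iff_ne_zero.2 hμB) (pos_iff_ne_zero.2 hνB)).ne'

lemma measurePreserving_cond {A : X → X} (hA : MeasurePreserving A μ μ) (hB : MeasurableSet B)
    (hAB : A ⁻¹' B = B) : MeasurePreserving A μ[|B] μ[|B] := by
  have h := hA.restrict_preimage hB
  rw [hAB] at h
  exact h.smul_measure (μ B)⁻¹

lemma llr_cond [IsFiniteMeasure μ] [SigmaFinite θ] (hμ : μ ≪ θ) (hB : MeasurableSet B)
    (hμB : μ B ≠ 0) : llr μ[|B] θ =ᵐ[μ[|B]] fun x => llr μ θ x - Real.log (μ.real B) := by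
  have hrestrict : μ[|B] = ((μ B)⁻¹ • μ).restrict B := (Measure.restrict_smul _ _ _).symm
  have hrnDeriv := (cond_absolutelyContinuous (s := B).trans hμ).ae_le
    (Measure.rnDeriv_restrict ((μ B)⁻¹ • μ) θ hB)
  have hsmul := cond_absolutelyContinuous (s := B).ae_le (llr_smul_left hμ (μ B)⁻¹
    (ENNReal.inv_ne_zero.2 (measure_ne_top μ B)) (ENNReal.inv_ne_top.2 hμB))
  filter_upwards [hrnDeriv, hsmul, ae_cond_mem hB] with x hx hxsmul hxB
  rw [indicator_of_mem hxB, ← hrestrict] at hx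
  rw [llr, hx, ← llr, hxsmul, ENNReal.toReal_inv, Real.log_inv, sub_eq_add_neg, measureReal_def]

lemma integrable_cond (hμB : μ B ≠ 0) {u : X → ℝ} (hu : Integrable u μ) :
    Integrable u μ[|B] :=
  hu.restrict.smul_measure (ENNReal.inv_ne_top.2 hμB)

lemma integrable_llr_cond [IsFiniteMeasure μ] [SigmaFinite θ] (hμ : μ ≪ θ)
    (hllr : Integrable (llr μ θ) μ) (hB : MeasurableSet B) (hμB : μ B ≠ 0) :
    Integrable (llr μ[|B] θ) μ[|B] :=
  ((integrable_cond hμB hllr).sub (integrable_const (Real.log (μ.real B)))).congr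
    (llr_cond hμ hB hμB).symm

lemma integral_llr_cond [IsFiniteMeasure μ] [SigmaFinite θ] (hμ : μ ≪ θ)
    (hllr : Integrable (llr μ θ) μ) (hB : MeasurableSet B) (hμB : μ B ≠ 0) :
    ∫ x, llr μ[|B] θ x ∂μ[|B] =
      (μ.real B)⁻¹ * ∫ x in B, llr μ θ x ∂μ - Real.log (μ.real B) := by
  have := cond_isProbabilityMeasure hμB
  rw [integral_congr_ae (llr_cond hμ hB hμB), integral_sub (integrable_cond hμB hllr)
    (integrable_const _), integral_const, probReal_univ, one_smul, ProbabilityTheory.cond,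
    integral_smul_measure, ENNReal.toReal_inv, smul_eq_mul, measureReal_def]

end Cond

section ClosedBall

variable {E : Type*} [NormedAddCommGroup E] [MeasurableSpace E] {μ θ : Measure E}

lemma tendsto_measure_closedBall (μ : Measure E) :
    Tendsto (fun n : ℕ => μ (Metric.closedBall 0 n)) atTop (𝓝 (μ univ)) := by
  rw [← Metric.iUnion_closedBall_nat 0]
  exact tendsto_measure_iUnion_atTop fun m n hmn =>
    Metric.closedBall_subset_closedBall (by exact_mod_cast hmn)

variable [OpensMeasurableSpace E] [IsProbabilityMeasure μ]

lemma tendsto_lintegral_smul_cond_closedBall {p : ℕ → ℝ≥0∞} (hp : Tendsto p atTop (𝓝 1))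
    (h : E → ℝ≥0∞) : Tendsto (fun n : ℕ => ∫⁻ x, h x ∂(p n • μ[|Metric.closedBall 0 n])) atTop
      (𝓝 (∫⁻ x, h x ∂μ)) := by
  have hμ := measure_univ (μ := μ) ▸ tendsto_measure_closedBall μ
  have hset : Tendsto (fun n : ℕ => ∫⁻ x in Metric.closedBall 0 n, h x ∂μ) atTop
      (𝓝 (∫⁻ x, h x ∂μ)) := by
    have hlim := tendsto_measure_closedBall (μ.withDensity h)
    simpa only [withDensity_apply _ Metric.isClosed_closedBall.measurableSet,
      withDensity_apply _ MeasurableSet.univ, setLIntegral_univ] using hlim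
  have hinv := tendsto_inv_iff.2 hμ
  have hlim := ENNReal.Tendsto.mul hp (Or.inl one_ne_zero)
    (ENNReal.Tendsto.mul hinv (by simp) hset (by simp)) (by simp)
  simpa only [ProbabilityTheory.cond, lintegral_smul_measure, smul_eq_mul, inv_one, one_mul]
    using hlim

lemma tendsto_integral_llr_cond_closedBall [SigmaFinite θ] (hμ : μ ≪ θ)
    (hllr : Integrable (llr μ θ) μ) :
    Tendsto (fun n : ℕ => ∫ x, llr μ[|Metric.closedBall 0 n] θ x ∂μ[|Metric.closedBall 0 n]) atTop
      (𝓝 (∫ x, llr μ θ x ∂μ)) := by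
  have hball := measure_univ (μ := μ) ▸ tendsto_measure_closedBall μ
  have hreal : Tendsto (fun n : ℕ => μ.real (Metric.closedBall 0 n)) atTop (𝓝 1) :=
    (ENNReal.tendsto_toReal ENNReal.one_ne_top).comp hball
  have hset := tendsto_setIntegral_of_monotone (μ := μ) (f := llr μ θ)
    (s := fun n : ℕ => Metric.closedBall (0 : E) n)
    (fun n => Metric.isClosed_closedBall.measurableSet)
    (fun m n hmn => Metric.closedBall_subset_closedBall (by exact_mod_cast hmn))
    hllr.integrableOn
  rw [Metric.iUnion_closedBall_nat, setIntegral_univ] at hset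
  have hlim := ((hreal.inv₀ one_ne_zero).mul hset).sub (hreal.log one_ne_zero)
  rw [inv_one, one_mul, Real.log_one, sub_zero] at hlim
  refine hlim.congr' ?_
  filter_upwards [hball.eventually_ne one_ne_zero] with n hn
  exact (integral_llr_cond hμ hllr Metric.isClosed_closedBall.measurableSet hn).symm

end ClosedBall

section SecondMoment

lemma lintegral_enorm_sq_ne_top {E : Type*} [NormedAddCommGroup E] [MeasurableSpace E]
    {μ : Measure E} (hμ : Integrable (fun x => ‖x‖ ^ 2) μ) : ∫⁻ x, ‖x‖ₑ ^ 2 ∂μ ≠ ∞ := by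
  simpa [HasFiniteIntegral] using hμ.hasFiniteIntegral.ne

lemma integrable_of_lintegral_exp_lt_top {X : Type*} [MeasurableSpace X] {μ θ : Measure X}
    [SigmaFinite μ] [SigmaFinite θ] (hμ : μ ≪ θ) (hllr : Integrable (llr μ θ) μ) {u : X → ℝ}
    (hum : Measurable u) (hu0 : 0 ≤ u) (hu : ∫⁻ x, ENNReal.ofReal (Real.exp (u x)) ∂θ < ∞) :
    Integrable u μ := by
  have hexp : Integrable (fun x => Real.exp (u x - llr μ θ x)) μ := by
    refine ⟨by fun_prop, (hasFiniteIntegral_iff_ofReal (ae_of_all _ fun x => by positivity)).2 ?_⟩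
    refine lt_of_le_of_lt (le_of_eq ?_)
      ((lintegral_exp_neg_llr_mul_le hμ (by fun_prop)).trans_lt hu)
    refine lintegral_congr fun x => ?_
    rw [sub_eq_neg_add, Real.exp_add, ENNReal.ofReal_mul (Real.exp_nonneg _)]
  refine (hllr.add hexp).mono' hum.aestronglyMeasurable (ae_of_all _ fun x => ?_)
  rw [Real.norm_of_nonneg (hu0 x), Pi.add_apply]
  linarith [Real.add_one_le_exp (u x - llr μ θ x)]

variable {E : Type*} [NormedAddCommGroup E] [InnerProductSpace ℝ E]
variable [FiniteDimensional ℝ E] [MeasurableSpace E] [BorelSpace E]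

lemma QuadGrowth.integrable_norm_sq {V : E → ℝ} (hV : QuadGrowth V) {μ : Measure E}
    [SigmaFinite μ] (hμ : μ ≪ gibbsMeasure V) (hllr : Integrable (llr μ (gibbsMeasure V)) μ) :
    Integrable (fun y => ‖y‖ ^ 2) μ := by
  obtain ⟨β, C, hβ, hb⟩ := hV.growth
  have hVc := hV.cont
  have hfin := hV.posExpDecay.isFiniteMeasure_densityMeasure
  have hsub : QuadGrowth fun y => V y - β / 2 * ‖y‖ ^ 2 :=
    ⟨by fun_prop, β / 2, C, by positivity, fun y => by linarith [hb y]⟩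
  have hint := integrable_of_lintegral_exp_lt_top hμ hllr (u := fun y => β / 2 * ‖y‖ ^ 2)
    (by fun_prop) (fun y => by positivity) (by
      rw [lintegral_densityMeasure (by fun_prop) (by fun_prop)]
      convert (hsub.posExpDecay.integrable volume).lintegral_lt_top using 3 with y
      rw [← ENNReal.ofReal_mul (by positivity), ← Real.exp_add, neg_sub, sub_eq_add_neg])
  exact (integrable_const_mul_iff (by simpa using hβ.ne') _).1 hint

theorem W2sq_le_of_integrable_llr {V : E → ℝ} {α : ℝ} (hV : QuadGrowth V) (he : V.Even)
    (hV1 : ∫ y, Real.exp (-V y) = 1) (hα : 0 < α) (hconv : StrongConvexOn univ α V)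
    {μ ν : Measure E} [IsProbabilityMeasure μ] [IsProbabilityMeasure ν]
    (hμ : μ ≪ gibbsMeasure V) (hν : ν ≪ gibbsMeasure V)
    (hμllr : Integrable (llr μ (gibbsMeasure V)) μ)
    (hνllr : Integrable (llr ν (gibbsMeasure V)) ν)
    (hsymm : MeasurePreserving (fun y => -y) μ μ) :
    W2sq μ ν ≤ ENNReal.ofReal
      (2 / α * (∫ y, llr μ (gibbsMeasure V) y ∂μ + ∫ y, llr ν (gibbsMeasure V) y ∂ν)) := by
  have hVfin := hV.posExpDecay.isFiniteMeasure_densityMeasure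
  have hμ2 := lintegral_enorm_sq_ne_top (hV.integrable_norm_sq hμ hμllr)
  have hν2 := lintegral_enorm_sq_ne_top (hV.integrable_norm_sq hν hνllr)
  have hμball := measure_univ (μ := μ) ▸ tendsto_measure_closedBall μ
  have hνball := measure_univ (μ := ν) ▸ tendsto_measure_closedBall ν
  set p : ℕ → ℝ≥0∞ := fun n => min (μ (Metric.closedBall 0 n)) (ν (Metric.closedBall 0 n))
  have hplim : Tendsto p atTop (𝓝 1) := by simpa using hμball.min hνball
  have hent := ENNReal.tendsto_ofReal (((tendsto_integral_llr_cond_closedBall hμ hμllr).add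
    (tendsto_integral_llr_cond_closedBall hν hνllr)).const_mul (2 / α))
  have hrem : ∀ ρ : Measure E, [IsProbabilityMeasure ρ] → ∫⁻ x, ‖x‖ₑ ^ 2 ∂ρ ≠ ∞ →
      Tendsto (fun n : ℕ => ∫⁻ x, ‖x‖ₑ ^ 2 ∂ρ -
        ∫⁻ x, ‖x‖ₑ ^ 2 ∂(p n • ρ[|Metric.closedBall 0 n])) atTop (𝓝 0) := fun ρ _ hρ => by
    rw [← tsub_self (∫⁻ x, ‖x‖ₑ ^ 2 ∂ρ)]
    exact ENNReal.Tendsto.sub tendsto_const_nhds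
      (tendsto_lintegral_smul_cond_closedBall hplim fun x => ‖x‖ₑ ^ 2) (Or.inl hρ)
  have hlim := hent.add (ENNReal.Tendsto.const_mul (a := 2) ((hrem μ hμ2).add (hrem ν hν2))
    (Or.inr ENNReal.ofNat_ne_top))
  rw [add_zero, mul_zero, add_zero] at hlim
  refine ge_of_tendsto hlim ?_
  filter_upwards [hμball.eventually_ne one_ne_zero, hνball.eventually_ne one_ne_zero] with n hμn hνn
  have hB : MeasurableSet (Metric.closedBall (0 : E) n) := Metric.isClosed_closedBall.measurableSet
  refine (W2sq_le_smul_cond hμn hνn hμ2 hν2).trans ?_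
  gcongr
  have hμcond := cond_isProbabilityMeasure hμn
  have hνcond := cond_isProbabilityMeasure hνn
  have hball : ∀ ρ : Measure E, ∀ᵐ y ∂ρ[|Metric.closedBall 0 n], ‖y‖ ≤ n := fun ρ =>
    (ae_cond_mem hB).mono fun y hy => by rwa [mem_closedBall_zero_iff] at hy
  exact W2sq_le_of_ae_le hV he hV1 hα hconv (cond_absolutelyContinuous.trans hμ)
    (cond_absolutelyContinuous.trans hν) (integrable_llr_cond hμ hμllr hB hμn)
    (integrable_llr_cond hν hνllr hB hνn) (hball μ) (hball ν)
    (measurePreserving_cond hsymm hB (by ext y; simp))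

end SecondMoment

end Truncation

section Hessian

variable {E : Type*} [NormedAddCommGroup E] [NormedSpace ℝ E] {V : E → ℝ} {m : ℝ}

lemma strongConvexOn_univ_of_comp_line
    (h : ∀ x v, StrongConvexOn univ (m * ‖v‖ ^ 2) fun t : ℝ => V (x + t • v)) :
    StrongConvexOn univ m V := by
  refine ⟨convex_univ, fun x _ y _ a b ha hb hab => ?_⟩
  have hline := (h x (y - x)).2 (mem_univ 0) (mem_univ 1) ha hb hab
  have hcombo : x + b • (y - x) = a • x + b • y := by
    obtain rfl : a = 1 - b := by linarith
    module
  simpa [hcombo, norm_sub_rev y x, mul_div_right_comm] using hline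

lemma strongConvexOn_univ_of_hasDerivAt {φ φ' φ'' : ℝ → ℝ} (hφ : ∀ t, HasDerivAt φ (φ' t) t)
    (hφ' : ∀ t, HasDerivAt φ' (φ'' t) t) (h : ∀ t, m ≤ φ'' t) : StrongConvexOn univ m φ := by
  rw [strongConvexOn_iff_convex]
  have hd : ∀ t, HasDerivAt (fun t => φ t - m / 2 * ‖t‖ ^ 2) (φ' t - m * t) t := fun t => by
    simp only [Real.norm_eq_abs, sq_abs]
    refine ((hφ t).sub ((hasDerivAt_pow 2 t).const_mul (m / 2))).congr_deriv ?_
    norm_num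
    ring
  have hd' : ∀ t, HasDerivAt (fun t => φ' t - m * t) (φ'' t - m) t := fun t => by
    exact ((hφ' t).sub ((hasDerivAt_id t).const_mul m)).congr_deriv (by rw [mul_one])
  have hderiv := funext fun t => (hd t).deriv
  refine convexOn_univ_of_deriv2_nonneg (fun t => (hd t).differentiableAt) ?_ fun t => ?_
  · rw [hderiv]
    exact fun t => (hd' t).differentiableAt
  · rw [Function.iterate_succ, Function.iterate_one, Function.comp_apply, hderiv, (hd' t).deriv]
    exact sub_nonneg.2 (h t)

lemma strongConvexOn_univ_of_le_iteratedFDeriv (hV : ContDiff ℝ 2 V)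
    (h : ∀ x v, m * ‖v‖ ^ 2 ≤ iteratedFDeriv ℝ 2 V x ![v, v]) : StrongConvexOn univ m V := by
  refine strongConvexOn_univ_of_comp_line fun x v => ?_
  have hline : ∀ t : ℝ, HasDerivAt (fun t : ℝ => x + t • v) v t := fun t => by
    simpa using ((hasDerivAt_id t).smul_const v).const_add x
  have hV1 : Differentiable ℝ V := hV.differentiable two_ne_zero
  have hV2 : Differentiable ℝ (fderiv ℝ V) :=
    (hV.fderiv_right (m := 1) one_add_one_eq_two.le).differentiable one_ne_zero
  refine strongConvexOn_univ_of_hasDerivAt (φ' := fun t => fderiv ℝ V (x + t • v) v)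
    (φ'' := fun t => fderiv ℝ (fderiv ℝ V) (x + t • v) v v)
    (fun t => (hV1 _).hasFDerivAt.comp_hasDerivAt t (hline t))
    (fun t => (ContinuousLinearMap.apply ℝ ℝ v).hasFDerivAt.comp_hasDerivAt t
      ((hV2 _).hasFDerivAt.comp_hasDerivAt t (hline t))) fun t => ?_
  simpa [iteratedFDeriv_two_apply] using h (x + t • v) v

end Hessian

section GibbsMeasure

variable {E : Type*} [NormedAddCommGroup E] [InnerProductSpace ℝ E] [FiniteDimensional ℝ E]
variable {V : E → ℝ}

lemma continuous_of_strongConvexOn {α : ℝ} (hα : 0 ≤ α) (hV : StrongConvexOn univ α V) :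
    Continuous V :=
  continuousOn_univ.1 <|
    (UniformConvexOn.convexOn hV fun r => by positivity).continuousOn isOpen_univ

lemma quadGrowth_of_strongConvexOn {α : ℝ} (hα : 0 < α) (hV : StrongConvexOn univ α V)
    (he : V.Even) : QuadGrowth V := by
  refine ⟨continuous_of_strongConvexOn hα.le hV, α / 2, -V 0, by positivity, fun y => ?_⟩
  have hhalf : (0 : ℝ) ≤ 1 / 2 := by norm_num
  have hmid := hV.2 (mem_univ y) (mem_univ (-y)) hhalf hhalf (add_halves 1)
  rw [smul_neg, add_neg_cancel, sub_neg_eq_add, ← two_smul ℝ y, norm_smul, he,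
    Real.norm_of_nonneg zero_le_two] at hmid
  simp only [smul_eq_mul] at hmid
  linarith

variable [MeasurableSpace E] [BorelSpace E]

lemma even_of_measurePreserving_gibbsMeasure (hV : Continuous V)
    (h : MeasurePreserving (fun x => -x) (gibbsMeasure V) (gibbsMeasure V)) : V.Even := by
  have hneg : MeasurePreserving (fun x : E => -x) (gibbsMeasure fun x => V (-x))
      (gibbsMeasure V) :=
    measurePreserving_densityMeasure (f := fun x => Real.exp (-V x)) (by fun_prop)
      (Measure.measurePreserving_neg volume)
  have heq : gibbsMeasure (fun x => V (-x)) = gibbsMeasure V :=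
    (MeasurableEquiv.neg E).map_measurableEquiv_injective (hneg.map_eq.trans h.map_eq.symm)
  rw [gibbsMeasure, gibbsMeasure, densityMeasure, densityMeasure,
    withDensity_eq_iff_of_sigmaFinite (by fun_prop) (by fun_prop)] at heq
  intro x
  have hx := congrFun ((Continuous.ae_eq_iff_eq volume (ENNReal.continuous_ofReal.comp
    (by fun_prop)) (ENNReal.continuous_ofReal.comp (by fun_prop))).1 heq) x
  rwa [Function.comp_apply, Function.comp_apply, ENNReal.ofReal_eq_ofReal_iff (Real.exp_pos _).le
    (Real.exp_pos _).le, Real.exp_eq_exp, neg_inj] at hx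

lemma integral_exp_neg_eq_one (hV : Continuous V) [IsProbabilityMeasure (gibbsMeasure V)] :
    ∫ x, Real.exp (-V x) = 1 := by
  have h := measure_univ (μ := gibbsMeasure V)
  rw [gibbsMeasure, densityMeasure, withDensity_apply _ MeasurableSet.univ, setLIntegral_univ] at h
  rw [integral_eq_lintegral_of_nonneg_ae (ae_of_all _ fun x => (Real.exp_pos _).le) (by fun_prop),
    h, ENNReal.toReal_one]

end GibbsMeasure

end SymTalagrand

theorem symmetrized_talagrand_log_concave_general {E : Type*} [NormedAddCommGroup E]
    [InnerProductSpace ℝ E] [FiniteDimensional ℝ E] [MeasurableSpace E] [BorelSpace E] {α : ℝ}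
    (hα : 0 < α) {V : E → ℝ} (hV : StrongConvexOn Set.univ α V) {θ : Measure E}
    (hθ : θ = volume.withDensity fun x => ENNReal.ofReal (Real.exp (-V x)))
    [IsProbabilityMeasure θ] (hθsymm : θ.map (fun x => -x) = θ) (μ ν : Measure E)
    [IsProbabilityMeasure μ] [IsProbabilityMeasure ν] (hμsymm : μ.map (fun x => -x) = μ) :
    W2sq μ ν ≤ ENNReal.ofReal (2 / α) * (relEnt μ θ + relEnt ν θ) := by
  have hα2 : ENNReal.ofReal (2 / α) ≠ 0 := by simpa using hα
  change θ = SymTalagrand.gibbsMeasure V at hθ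
  subst hθ
  have hcont := SymTalagrand.continuous_of_strongConvexOn hα.le hV
  have heven := SymTalagrand.even_of_measurePreserving_gibbsMeasure hcont ⟨measurable_neg, hθsymm⟩
  unfold relEnt
  split_ifs with hμ hν
  · refine (SymTalagrand.W2sq_le_of_integrable_llr
      (SymTalagrand.quadGrowth_of_strongConvexOn hα hV heven) heven
      (SymTalagrand.integral_exp_neg_eq_one hcont) hα hV hμ.1 hν.1 hμ.2 hν.2
      ⟨measurable_neg, hμsymm⟩).trans ?_
    rw [ENNReal.ofReal_mul (by positivity)]
    gcongr
    exact ENNReal.ofReal_add_le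
  all_goals simp [ENNReal.mul_top hα2]

/-- **Symmetrized Talagrand inequality for uniformly log-concave symmetric measures**
(Theorem 1.5): if `θ = e^{-V} dx` is a symmetric probability measure with `V` smooth and
`Hess V ≥ α Id` for some `α > 0`, then for every symmetric probability measure `μ` and every
probability measure `ν` (with finite second moments),
`W₂(μ,ν)² ≤ (2/α)(Ent_θ(μ) + Ent_θ(ν))`. -/
theorem symmetrized_talagrand_log_concave (d : ℕ) (hd : 1 ≤ d) (α : ℝ) (hα : 0 < α)
    (V : EuclideanSpace ℝ (Fin d) → ℝ) (hV : ContDiff ℝ (⊤ : ℕ∞) V)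
    (hHess : ∀ x v, α * ‖v‖ ^ 2 ≤ iteratedFDeriv ℝ 2 V x ![v, v])
    (θ : Measure (EuclideanSpace ℝ (Fin d)))
    (hθ : θ = volume.withDensity fun x => ENNReal.ofReal (Real.exp (-V x)))
    [IsProbabilityMeasure θ] (hθsymm : θ.map (fun x => -x) = θ)
    (μ ν : Measure (EuclideanSpace ℝ (Fin d)))
    [IsProbabilityMeasure μ] [IsProbabilityMeasure ν]
    (hμsymm : μ.map (fun x => -x) = μ)
    (hμ2 : Integrable (fun x => ‖x‖ ^ 2) μ) (hν2 : Integrable (fun x => ‖x‖ ^ 2) ν) :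
    W2sq μ ν ≤ ENNReal.ofReal (2 / α) * (relEnt μ θ + relEnt ν θ) :=
  symmetrized_talagrand_log_concave_general hα
    (SymTalagrand.strongConvexOn_univ_of_le_iteratedFDeriv (contDiff_infty.1 hV 2) hHess) hθ hθsymm
    μ ν hμsymm
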